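/- Let P be a graph with a vertex v such that P∖v (the graph obtained by deleting v) is a forest, and let Q be an outerplanar graph. Then there exists a number p = p(P,Q) such that every 2-connected graph of path-width at least p has a minor isomorphic to P or a minor isomorphic to Q. -/

import Mathlib

/-!
Common definitions: minors, widths, connectivity, the specific graphs
`K4`, `K23`, `C32`, `graphA`, the binary trees `CT_h`, the graphs `𝒫_k`, `𝒬_k`,
the trees `T_h`, homeomorphic embeddings, cascades, and related notions,
following Dang--Thomas, "Minors of two-connected graphs of large path-width".
-/

open SimpleGraph

/-- A minor model of `H` in `G`: branch sets `f w` are nonempty, connected,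
pairwise disjoint, and edges of `H` are realized by edges of `G` between branch sets. -/
def IsMinorModel {W V : Type*} (H : SimpleGraph W) (G : SimpleGraph V) (f : W → Set V) : Prop :=
  (∀ w, (f w).Nonempty) ∧
  (∀ w, (G.induce (f w)).Connected) ∧
  (∀ w₁ w₂ : W, w₁ ≠ w₂ → Disjoint (f w₁) (f w₂)) ∧
  (∀ w₁ w₂ : W, H.Adj w₁ w₂ → ∃ v₁ ∈ f w₁, ∃ v₂ ∈ f w₂, G.Adj v₁ v₂)

/-- `H` is (isomorphic to) a minor of `G`. -/
def IsMinor {W V : Type*} (H : SimpleGraph W) (G : SimpleGraph V) : Prop :=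
  ∃ f : W → Set V, IsMinorModel H G f

/-- The complete graph on four vertices. -/
def K4 : SimpleGraph (Fin 4) := ⊤

/-- The complete bipartite graph `K_{2,3}`. -/
def K23 : SimpleGraph (Fin 2 ⊕ Fin 3) := completeBipartiteGraph (Fin 2) (Fin 3)

/-- The graph `A`: a cycle `a₁a₂a₃a₄a₅a₆a₁` plus the edges `a₁a₃`, `a₃a₅`, `a₅a₁`. -/
def graphA : SimpleGraph (Fin 6) :=
  SimpleGraph.fromEdgeSet
    {s(0, 1), s(1, 2), s(2, 3), s(3, 4), s(4, 5), s(5, 0), s(0, 2), s(2, 4), s(4, 0)}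

/-- The graph `C_{3,2}`: two disjoint triangles. -/
def C32 : SimpleGraph (Fin 2 × Fin 3) :=
  SimpleGraph.fromRel (fun u v => u.1 = v.1)

/-- A graph is outerplanar iff it has no `K₄` minor and no `K_{2,3}` minor
(the classical characterization of outerplanarity). -/
def Outerplanar {V : Type*} (G : SimpleGraph V) : Prop :=
  ¬ IsMinor K4 G ∧ ¬ IsMinor K23 G

/-- `G` is `k`-connected: it has more than `k` vertices and deleting fewer than `k`
vertices leaves a connected graph. -/
def IsKConnected {V : Type*} [Fintype V] (k : ℕ) (G : SimpleGraph V) : Prop :=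
  k + 1 ≤ Fintype.card V ∧
  ∀ S : Finset V, S.card < k → (G.induce ((↑S : Set V)ᶜ)).Connected

/-- `(Tr, X)` is a tree-decomposition of `G`: `Tr` is a tree, the bags `X t` cover all
vertices and edges (W1), and whenever `t₂` lies on the path of `Tr` between `t₁` and `t₃`
we have `X t₁ ∩ X t₃ ⊆ X t₂` (W2). -/
def IsTreeDecomp {V T : Type*} (G : SimpleGraph V) (Tr : SimpleGraph T) (X : T → Finset V) :
    Prop :=
  Tr.IsTree ∧
  (∀ v : V, ∃ t, v ∈ X t) ∧
  (∀ u v : V, G.Adj u v → ∃ t, u ∈ X t ∧ v ∈ X t) ∧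
  (∀ (t₁ t₂ t₃ : T) (p : Tr.Walk t₁ t₃), p.IsPath → t₂ ∈ p.support →
    ∀ v : V, v ∈ X t₁ → v ∈ X t₃ → v ∈ X t₂)

/-- A path-decomposition of `G`, with bags indexed by `Fin n`. -/
def IsPathDecomp {V : Type*} (G : SimpleGraph V) {n : ℕ} (X : Fin n → Finset V) : Prop :=
  (∀ v : V, ∃ i, v ∈ X i) ∧
  (∀ u v : V, G.Adj u v → ∃ i, u ∈ X i ∧ v ∈ X i) ∧
  (∀ i j k : Fin n, i ≤ j → j ≤ k → ∀ v : V, v ∈ X i → v ∈ X k → v ∈ X j)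

/-- The path-width of a finite graph: the least `w` such that `G` has a
path-decomposition all of whose bags have at most `w + 1` vertices. -/
noncomputable def pathwidth {V : Type*} [Fintype V] (G : SimpleGraph V) : ℕ :=
  sInf {w | ∃ (n : ℕ) (X : Fin n → Finset V), IsPathDecomp G X ∧ ∀ i, (X i).card ≤ w + 1}

/-- The tree-width of a finite graph: the least `w` such that `G` has a
tree-decomposition all of whose bags have at most `w + 1` vertices. -/
noncomputable def treewidth {V : Type*} [Fintype V] (G : SimpleGraph V) : ℕ :=
  sInf {w | ∃ (T : Type) (_ : Fintype T) (Tr : SimpleGraph T) (X : T → Finset V),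
    IsTreeDecomp G Tr X ∧ ∀ t, (X t).card ≤ w + 1}

/-- Vertices of the binary tree `CT_h`: paths from the root, recorded as reversed
lists of left/right moves, of length at most `h`. -/
abbrev CTVert (h : ℕ) := {l : List Bool // l.length ≤ h}

/-- The binary tree `CT_h` of height `h`. -/
def CTgraph (h : ℕ) : SimpleGraph (CTVert h) :=
  SimpleGraph.fromEdgeSet
    {e | ∃ (b : Bool) (σ : List Bool) (hσ : σ.length < h),
      e = s((⟨σ, le_of_lt hσ⟩ : CTVert h), (⟨b :: σ, by simpa using hσ⟩ : CTVert h))}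

/-- The graph `𝒫_k`: the binary tree `CT_k` together with one extra vertex (`none`)
adjacent to every leaf of `CT_k`. -/
def Pgraph (k : ℕ) : SimpleGraph (Option (CTVert k)) :=
  SimpleGraph.fromEdgeSet
    ({e | ∃ (b : Bool) (σ : List Bool) (hσ : σ.length < k),
        e = s(some (⟨σ, le_of_lt hσ⟩ : CTVert k), some (⟨b :: σ, by simpa using hσ⟩ : CTVert k))} ∪
     {e | ∃ l : CTVert k, l.1.length = k ∧ e = s(none, some l)})

/-- Vertices of `𝒬_k`: the two base vertices of the root triangle (`Sum.inl false` and
`Sum.inl true`), together with one apex vertex for each node of the complete binary tree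
of depth `< k` (recorded as a reversed list of moves). -/
abbrev QVert (k : ℕ) := Bool ⊕ {l : List Bool // l.length < k}

/-- The two ends of the base edge of the copy of the triangle at node `σ` of `𝒬_k`. -/
def qbase (k : ℕ) : List Bool → QVert k × QVert k
  | [] => (Sum.inl false, Sum.inl true)
  | b :: σ =>
      ((if b then (qbase k σ).2 else (qbase k σ).1),
        if h : σ.length < k then Sum.inr ⟨σ, h⟩ else Sum.inl false)

/-- The graph `𝒬_k`, built from triangles as in the recursive definition: the triangle at
node `σ` consists of the base edge `qbase k σ` together with the apex vertex `Sum.inr σ`;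
the base edge of `𝒬_k` is `s(Sum.inl false, Sum.inl true)`. -/
def Qgraph (k : ℕ) : SimpleGraph (QVert k) :=
  SimpleGraph.fromEdgeSet
    ({s(Sum.inl false, Sum.inl true)} ∪
     {e | ∃ (σ : List Bool) (h : σ.length < k),
        e = s(Sum.inr ⟨σ, h⟩, (qbase k σ).1) ∨ e = s(Sum.inr ⟨σ, h⟩, (qbase k σ).2)})

/-- The minor vertices of the tree `T_h` (one for each string of length `≤ h`). -/
abbrev MVert (h : ℕ) := {l : List Bool // l.length ≤ h}

/-- The major vertices of the tree `T_h` (one for each string of length `≤ h - 1`). -/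
abbrev JVert (h : ℕ) := {l : List Bool // l.length + 1 ≤ h}

/-- Vertices of the tree `T_h` (obtained from `CT_h` by subdividing every edge not incident
with a degree-one vertex and adding the minor root). -/
abbrev TVert (h : ℕ) := MVert h ⊕ JVert h

/-- The tree `T_h`: each major vertex `σ` is adjacent to the minor vertices `σ` (its parent),
`false :: σ` (its left neighbor) and `true :: σ` (its right neighbor). -/
def Tgraph (h : ℕ) : SimpleGraph (TVert h) :=
  SimpleGraph.fromEdgeSet
    {e | ∃ (σ : List Bool) (hσ : σ.length + 1 ≤ h),
      e = s(Sum.inr ⟨σ, hσ⟩, Sum.inl ⟨σ, Nat.le_of_succ_le hσ⟩) ∨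
      ∃ b : Bool, e = s(Sum.inr ⟨σ, hσ⟩, Sum.inl ⟨b :: σ, by simpa using hσ⟩)}

/-- A homeomorphic embedding of `TA` into `TB`: an injection such that for any two edges of
`TA` sharing an end `t`, the corresponding paths of `TB` are edge-disjoint. -/
def IsHomeoEmb {A B : Type*} (TA : SimpleGraph A) (TB : SimpleGraph B) (η : A → B) : Prop :=
  Function.Injective η ∧
  ∀ ⦃t t₁ t₂ : A⦄, TA.Adj t t₁ → TA.Adj t t₂ → t₁ ≠ t₂ →
    ∀ (p₁ : TB.Walk (η t) (η t₁)) (p₂ : TB.Walk (η t) (η t₂)),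
      p₁.IsPath → p₂.IsPath → ∀ e ∈ p₁.edges, e ∉ p₂.edges

/-- `v` lies in the span of `η`: it lies on a path of `TB` between two vertices in the
image of `η`. -/
def inSpan {A B : Type*} (TB : SimpleGraph B) (η : A → B) (v : B) : Prop :=
  ∃ (a₁ a₂ : A) (p : TB.Walk (η a₁) (η a₂)), p.IsPath ∧ v ∈ p.support

/-- A cascade of height `h` and size `s` in the tree-decomposition `(Tr, X)`:
a homeomorphic embedding of `T_h` with `|X (η t)| = s` for every minor vertex `t`
and `|X t| ≥ s` for every `t` in the span. -/
def IsCascade {V T : Type*} (Tr : SimpleGraph T) (X : T → Finset V) (h s : ℕ)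
    (η : TVert h → T) : Prop :=
  IsHomeoEmb (Tgraph h) Tr η ∧
  (∀ l : MVert h, (X (η (Sum.inl l))).card = s) ∧
  (∀ t : T, inSpan Tr η t → s ≤ (X t).card)

/-- An injective cascade with common intersection set `I`. -/
def IsInjectiveCascade {V T : Type*} (Tr : SimpleGraph T) (X : T → Finset V) (h s : ℕ)
    (η : TVert h → T) (I : Finset V) : Prop :=
  IsCascade Tr X h s η ∧ I.card < s ∧
  ∀ t t' : TVert h, t ≠ t' → ((X (η t) : Set V) ∩ (X (η t') : Set V)) = (I : Set V)

/-- A family of `s` disjoint paths in `G \ I` (a linkage). -/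
def IsLinkage {V : Type*} (G : SimpleGraph V) (I : Finset V) {s : ℕ} {x y : Fin s → V}
    (P : ∀ i : Fin s, G.Walk (x i) (y i)) : Prop :=
  (∀ i, (P i).IsPath) ∧
  (∀ i, ∀ v ∈ (P i).support, v ∉ I) ∧
  (∀ i j, i ≠ j → ∀ v ∈ (P i).support, v ∉ (P j).support)

/-- An ordered cascade: an injective cascade of size `s + |I|` with common intersection set
`I`, together with orderings `ξ t : Fin s → X (η t) \ I` of the bags at minor vertices, such
that at every major vertex there are left and right linkages connecting corresponding
vertices. -/
def IsOrderedCascade {V T : Type*} (G : SimpleGraph V) (Tr : SimpleGraph T)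
    (X : T → Finset V) (h s : ℕ) (η : TVert h → T) (I : Finset V)
    (ξ : MVert h → Fin s → V) : Prop :=
  IsInjectiveCascade Tr X h (s + I.card) η I ∧
  (∀ t : MVert h, Function.Injective (ξ t) ∧
    Set.range (ξ t) = (X (η (Sum.inl t)) : Set V) \ (I : Set V)) ∧
  ∀ (σ : List Bool) (hσ : σ.length + 1 ≤ h),
    (∃ P : ∀ i : Fin s,
        G.Walk (ξ ⟨σ, Nat.le_of_succ_le hσ⟩ i) (ξ ⟨false :: σ, by simpa using hσ⟩ i),
      IsLinkage G I P) ∧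
    (∃ Q : ∀ i : Fin s,
        G.Walk (ξ ⟨σ, Nat.le_of_succ_le hσ⟩ i) (ξ ⟨true :: σ, by simpa using hσ⟩ i),
      IsLinkage G I Q)

/-- The vertex set of the `η`-torso at the major vertex `σ` of `T_h`: the union of the bags
`X t - I` over all `t` such that the path in `Tr` from `t` to `η σ` contains none of the
images of the three minor neighbors of `σ` as an internal vertex. -/
def torsoSet {V T : Type*} (Tr : SimpleGraph T) (X : T → Finset V) {h : ℕ}
    (η : TVert h → T) (I : Finset V) (σ : List Bool) (hσ : σ.length + 1 ≤ h) : Set V :=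
  {v | v ∉ I ∧ ∃ t : T,
    (∀ p : Tr.Walk t (η (Sum.inr ⟨σ, hσ⟩)), p.IsPath →
      ∀ u : T,
        (u = η (Sum.inl ⟨σ, Nat.le_of_succ_le hσ⟩) ∨
         u = η (Sum.inl ⟨false :: σ, by simpa using hσ⟩) ∨
         u = η (Sum.inl ⟨true :: σ, by simpa using hσ⟩)) →
        u ∈ p.support → u = t ∨ u = η (Sum.inr ⟨σ, hσ⟩)) ∧
    v ∈ X t}

/-- `H` is a tripod in `G` with all vertices in `S`, center `c` and feet `f₁, f₂, f₃`:
the union of three paths from `c` to the feet, pairwise disjoint except for `c`,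
at least two of which have length at least one. -/
def IsTripodOn {V : Type*} (G : SimpleGraph V) (S : Set V) (H : G.Subgraph)
    (c f₁ f₂ f₃ : V) : Prop :=
  ∃ (W₁ : G.Walk c f₁) (W₂ : G.Walk c f₂) (W₃ : G.Walk c f₃),
    W₁.IsPath ∧ W₂.IsPath ∧ W₃.IsPath ∧
    (∀ v ∈ W₁.support, v ∈ S) ∧ (∀ v ∈ W₂.support, v ∈ S) ∧ (∀ v ∈ W₃.support, v ∈ S) ∧
    (∀ v, v ∈ W₁.support → v ∈ W₂.support → v = c) ∧
    (∀ v, v ∈ W₁.support → v ∈ W₃.support → v = c) ∧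
    (∀ v, v ∈ W₂.support → v ∈ W₃.support → v = c) ∧
    ((1 ≤ W₁.length ∧ 1 ≤ W₂.length) ∨ (1 ≤ W₁.length ∧ 1 ≤ W₃.length) ∨
      (1 ≤ W₂.length ∧ 1 ≤ W₃.length)) ∧
    H = W₁.toSubgraph ⊔ W₂.toSubgraph ⊔ W₃.toSubgraph

/-- The major vertex `σ` has property `A_{ij}` in the ordered cascade `η` with orderings
`ξ`: there are two disjoint tripods in the `η`-torso at `σ`, with feet as prescribed. -/
def HasPropA {V T : Type*} (G : SimpleGraph V) (Tr : SimpleGraph T) (X : T → Finset V)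
    {h s : ℕ} (η : TVert h → T) (I : Finset V) (ξ : MVert h → Fin s → V)
    (σ : List Bool) (hσ : σ.length + 1 ≤ h) (i j : Fin s) : Prop :=
  ∃ (Li Lj : G.Subgraph) (ci cj : V),
    (∃ m₂ m₃ : Fin s, (m₂ = i ∨ m₂ = j) ∧ (m₃ = i ∨ m₃ = j) ∧
      IsTripodOn G (torsoSet Tr X η I σ hσ) Li ci
        (ξ ⟨σ, Nat.le_of_succ_le hσ⟩ i)
        (ξ ⟨false :: σ, by simpa using hσ⟩ m₂)
        (ξ ⟨true :: σ, by simpa using hσ⟩ m₃)) ∧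
    (∃ m₂ m₃ : Fin s, (m₂ = i ∨ m₂ = j) ∧ (m₃ = i ∨ m₃ = j) ∧
      IsTripodOn G (torsoSet Tr X η I σ hσ) Lj cj
        (ξ ⟨σ, Nat.le_of_succ_le hσ⟩ j)
        (ξ ⟨false :: σ, by simpa using hσ⟩ m₂)
        (ξ ⟨true :: σ, by simpa using hσ⟩ m₃)) ∧
    Disjoint Li.verts Lj.verts

/-- The major vertex `σ` has property `B_{ij}`: there are two tripods `L_i`, `L_j` in the
`η`-torso at `σ`, with feet `v_{m,1}, v_{m,2}, v_{m,3}` where `{v_{i,y}, v_{j,y}}` equals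
`{ξ_{t_y} i, ξ_{t_y} j}` for each `y`, which intersect exactly in a path that is the
intersection of the branch of `L_i` to `v_{i,3}` and the branch of `L_j` to `v_{j,2}`,
and which avoids both centers. -/
def HasPropB {V T : Type*} (G : SimpleGraph V) (Tr : SimpleGraph T) (X : T → Finset V)
    {h s : ℕ} (η : TVert h → T) (I : Finset V) (ξ : MVert h → Fin s → V)
    (σ : List Bool) (hσ : σ.length + 1 ≤ h) (i j : Fin s) : Prop :=
  ∃ (vi vj : Fin 3 → V) (ci cj : V)
    (Wi : ∀ y : Fin 3, G.Walk ci (vi y)) (Wj : ∀ y : Fin 3, G.Walk cj (vj y)),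
    (∀ y : Fin 3, ({vi y, vj y} : Set V) =
      {(![ξ ⟨σ, Nat.le_of_succ_le hσ⟩,
          ξ ⟨false :: σ, by simpa using hσ⟩,
          ξ ⟨true :: σ, by simpa using hσ⟩] : Fin 3 → Fin s → V) y i,
       (![ξ ⟨σ, Nat.le_of_succ_le hσ⟩,
          ξ ⟨false :: σ, by simpa using hσ⟩,
          ξ ⟨true :: σ, by simpa using hσ⟩] : Fin 3 → Fin s → V) y j}) ∧
    (∀ y, (Wi y).IsPath) ∧ (∀ y, (Wj y).IsPath) ∧
    (∀ y, ∀ v ∈ (Wi y).support, v ∈ torsoSet Tr X η I σ hσ) ∧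
    (∀ y, ∀ v ∈ (Wj y).support, v ∈ torsoSet Tr X η I σ hσ) ∧
    (∀ y y' : Fin 3, y ≠ y' → ∀ v, v ∈ (Wi y).support → v ∈ (Wi y').support → v = ci) ∧
    (∀ y y' : Fin 3, y ≠ y' → ∀ v, v ∈ (Wj y).support → v ∈ (Wj y').support → v = cj) ∧
    ((1 ≤ (Wi 0).length ∧ 1 ≤ (Wi 1).length) ∨ (1 ≤ (Wi 0).length ∧ 1 ≤ (Wi 2).length) ∨
      (1 ≤ (Wi 1).length ∧ 1 ≤ (Wi 2).length)) ∧
    ((1 ≤ (Wj 0).length ∧ 1 ≤ (Wj 1).length) ∨ (1 ≤ (Wj 0).length ∧ 1 ≤ (Wj 2).length) ∨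
      (1 ≤ (Wj 1).length ∧ 1 ≤ (Wj 2).length)) ∧
    (((Wi 0).toSubgraph ⊔ (Wi 1).toSubgraph ⊔ (Wi 2).toSubgraph) ⊓
      ((Wj 0).toSubgraph ⊔ (Wj 1).toSubgraph ⊔ (Wj 2).toSubgraph)
        = (Wi 2).toSubgraph ⊓ (Wj 1).toSubgraph) ∧
    ∃ (x y : V) (p : G.Walk x y), p.IsPath ∧
      (Wi 2).toSubgraph ⊓ (Wj 1).toSubgraph = p.toSubgraph ∧
      ci ∉ p.support ∧ cj ∉ p.support

/-- The major vertex `σ` has property `AB_{ij}`: in the `η`-torso at `σ` there are disjoint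
paths `L_i, L_j` from `ξ_{t₁}(m)` to `ξ_{t₂}(m)` and disjoint paths `R_i, R_j` from
`ξ_{t₁}(m)` to `ξ_{t₃}(m)`, for `m ∈ {i, j}`. -/
def HasPropAB {V T : Type*} (G : SimpleGraph V) (Tr : SimpleGraph T) (X : T → Finset V)
    {h s : ℕ} (η : TVert h → T) (I : Finset V) (ξ : MVert h → Fin s → V)
    (σ : List Bool) (hσ : σ.length + 1 ≤ h) (i j : Fin s) : Prop :=
  ∃ (Li : G.Walk (ξ ⟨σ, Nat.le_of_succ_le hσ⟩ i) (ξ ⟨false :: σ, by simpa using hσ⟩ i))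
    (Lj : G.Walk (ξ ⟨σ, Nat.le_of_succ_le hσ⟩ j) (ξ ⟨false :: σ, by simpa using hσ⟩ j))
    (Ri : G.Walk (ξ ⟨σ, Nat.le_of_succ_le hσ⟩ i) (ξ ⟨true :: σ, by simpa using hσ⟩ i))
    (Rj : G.Walk (ξ ⟨σ, Nat.le_of_succ_le hσ⟩ j) (ξ ⟨true :: σ, by simpa using hσ⟩ j)),
    Li.IsPath ∧ Lj.IsPath ∧ Ri.IsPath ∧ Rj.IsPath ∧
    (∀ v ∈ Li.support, v ∈ torsoSet Tr X η I σ hσ) ∧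
    (∀ v ∈ Lj.support, v ∈ torsoSet Tr X η I σ hσ) ∧
    (∀ v ∈ Ri.support, v ∈ torsoSet Tr X η I σ hσ) ∧
    (∀ v ∈ Rj.support, v ∈ torsoSet Tr X η I σ hσ) ∧
    (∀ v ∈ Li.support, v ∉ Lj.support) ∧
    (∀ v ∈ Ri.support, v ∉ Rj.support)

/-- A monotone homeomorphic embedding `T_a ↪ T_h`: the minor root maps to the minor root,
and for every major vertex with trinity `(t₁, t₂, t₃)`, the images of `t₂` and `t₃` are the
left and right neighbors of the (major) image of the vertex. -/
def IsMonotoneEmb (a h : ℕ) (γ : TVert a → TVert h) : Prop :=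
  IsHomeoEmb (Tgraph a) (Tgraph h) γ ∧
  γ (Sum.inl ⟨[], Nat.zero_le a⟩) = Sum.inl ⟨[], Nat.zero_le h⟩ ∧
  ∀ (σ : List Bool) (hσ : σ.length + 1 ≤ a),
    ∃ (τ : List Bool) (hτ : τ.length + 1 ≤ h),
      γ (Sum.inr ⟨σ, hσ⟩) = Sum.inr ⟨τ, hτ⟩ ∧
      γ (Sum.inl ⟨false :: σ, by simpa using hσ⟩) = Sum.inl ⟨false :: τ, by simpa using hτ⟩ ∧
      γ (Sum.inl ⟨true :: σ, by simpa using hσ⟩) = Sum.inl ⟨true :: τ, by simpa using hτ⟩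

/-!
Large path-width supplies a deep binary tree of disjoint connected vertex sets: sweep through the
graph along sets with small boundary, using Menger's theorem to keep a tree model attached to the
boundary. Either one of its branches already meets many private subtrees, which together with the
rest of the graph form an apex tree, or the graph contains a deeply nested family of connected
regions with connected complements. Since there is no cut vertex, the outermost region can be framed
by two disjoint connected sets, and descending into the nested regions splits the frame either
towards an apex tree or towards a triangle tree. A Ramsey argument makes one of the two outcomes
recur: a deep apex tree contains every graph that becomes a forest after deleting a vertex, the
forest being embedded leaf by leaf, and a deep triangle tree contains every outerplanar graph, which
is glued from pieces along edges.
-/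

namespace TwoConnectedMinor

/-! ### Connected sets of vertices -/

section ConnectedSets

variable {V : Type*} {G : SimpleGraph V} {A B C A' B' K K' M Y : Set V} {a x : V}

/-- Some edge of `G` has one end in `A` and the other in `B`. The sets may overlap. -/
def Touches (G : SimpleGraph V) (A B : Set V) : Prop :=
  ∃ a ∈ A, ∃ b ∈ B, G.Adj a b

/-- `A` is nonempty and induces a connected subgraph of `G`. Connectivity is encoded by cuts rather
than by walks, because the branch sets below are assembled from sets of edges across cuts. -/
def ConnectedSet (G : SimpleGraph V) (A : Set V) : Prop :=
  A.Nonempty ∧ ∀ K ⊆ A, K.Nonempty → (A \ K).Nonempty → Touches G K (A \ K)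

theorem Touches.mono (h : Touches G A B) (hA : A ⊆ A') (hB : B ⊆ B') : Touches G A' B' := by
  obtain ⟨a, ha, b, hb, hab⟩ := h
  exact ⟨a, hA ha, b, hB hb, hab⟩

theorem Touches.mono_left (h : Touches G A B) (hA : A ⊆ A') : Touches G A' B :=
  h.mono hA subset_rfl

theorem Touches.mono_right (h : Touches G A B) (hB : B ⊆ B') : Touches G A B' :=
  h.mono subset_rfl hB

theorem Touches.symm (h : Touches G A B) : Touches G B A := by
  obtain ⟨a, ha, b, hb, hab⟩ := h
  exact ⟨b, hb, a, ha, hab.symm⟩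

theorem touches_union_right : Touches G A (B ∪ C) ↔ Touches G A B ∨ Touches G A C := by
  refine ⟨?_, Or.rec (·.mono_right Set.subset_union_left) (·.mono_right Set.subset_union_right)⟩
  rintro ⟨x, hx, y, hy | hy, hxy⟩
  · exact Or.inl ⟨x, hx, y, hy, hxy⟩
  · exact Or.inr ⟨x, hx, y, hy, hxy⟩

theorem touches_singleton_left : Touches G {x} A ↔ ∃ y ∈ A, G.Adj x y := by
  simp [Touches]

theorem not_touches_iff : ¬ Touches G A B ↔ ∀ a ∈ A, ∀ b, G.Adj a b → b ∉ B := by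
  simp only [Touches]
  grind

theorem mem_of_not_touches_compl (h : ¬ Touches G A Bᶜ) {x y : V} (hx : x ∈ A) (hxy : G.Adj x y) :
    y ∈ B :=
  by_contra fun hy => h ⟨x, hx, y, hy, hxy⟩

theorem connectedSet_singleton (x : V) : ConnectedSet G {x} :=
  ⟨⟨x, rfl⟩, fun K _ hK hxK => by grind [Set.nonempty_def]⟩

theorem ConnectedSet.exists_adj_of_subset (hA : ConnectedSet G A) {K : Set V} (hK : K ⊆ A)
    (hne : K.Nonempty) {y : V} (hy : y ∈ A) (hyK : y ∉ K) :
    ∃ a ∈ K, ∃ b ∈ A, b ∉ K ∧ G.Adj a b := by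
  obtain ⟨a, ha, b, hb, hab⟩ := hA.2 K hK hne ⟨y, hy, hyK⟩
  exact ⟨a, ha, b, hb.1, hb.2, hab⟩

theorem ConnectedSet.touches_of_inter_of_diff (hA : ConnectedSet G A) {K : Set V}
    (hin : (A ∩ K).Nonempty) (hout : (A \ K).Nonempty) : Touches G (A ∩ K) (A \ K) :=
  (hA.2 (A ∩ K) Set.inter_subset_left hin (by rwa [Set.sdiff_self_inter])).mono_right
    (by rw [Set.sdiff_self_inter])

theorem ConnectedSet.union_of_forall_touches (hA : ConnectedSet G A)
    (hM : ∀ K ⊆ M, K.Nonempty → Touches G K ((M \ K) ∪ A)) : ConnectedSet G (A ∪ M) := by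
  refine ⟨hA.1.mono Set.subset_union_left, fun K hK hne hout => ?_⟩
  by_cases hAK : A ⊆ K
  · exact (hM ((A ∪ M) \ K) (by grind) hout).symm.mono (by grind) subset_rfl
  by_cases hAK' : (A ∩ K).Nonempty
  · exact (hA.touches_of_inter_of_diff hAK' (Set.sdiff_nonempty.2 hAK)).mono (by grind) (by grind)
  · exact (hM K (by grind [Set.nonempty_def]) hne).mono_right (by grind [Set.nonempty_def])

theorem ConnectedSet.union_of_touches (hA : ConnectedSet G A) (hB : ConnectedSet G B)
    (h : Touches G A B) : ConnectedSet G (A ∪ B) := by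
  refine hA.union_of_forall_touches fun K hK hne => ?_
  by_cases hBK : (B \ K).Nonempty
  · exact (hB.2 K hK hne hBK).mono_right (by grind)
  · exact h.symm.mono (Set.sdiff_eq_empty.1 (Set.not_nonempty_iff_eq_empty.1 hBK)) (by grind)

theorem ConnectedSet.union_of_inter (hA : ConnectedSet G A) (hB : ConnectedSet G B)
    (h : (A ∩ B).Nonempty) : ConnectedSet G (A ∪ B) := by
  refine ⟨hA.1.mono Set.subset_union_left, fun K hK hne hout => ?_⟩
  by_cases hKA : (A ∩ K).Nonempty ∧ (A \ K).Nonempty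
  · exact (hA.touches_of_inter_of_diff hKA.1 hKA.2).mono (by grind) (by grind)
  by_cases hKB : (B ∩ K).Nonempty ∧ (B \ K).Nonempty
  · exact (hB.touches_of_inter_of_diff hKB.1 hKB.2).mono (by grind) (by grind)
  simp only [Set.inter_nonempty, Set.sdiff_nonempty, Set.not_subset] at hKA hKB h hout
  grind [Set.nonempty_def]

theorem ConnectedSet.insert_of_adj (hA : ConnectedSet G A) (ha : a ∈ A) (h : G.Adj a x) :
    ConnectedSet G (insert x A) := by
  rw [← Set.union_singleton]
  exact hA.union_of_touches (connectedSet_singleton x) ⟨a, ha, x, rfl, h⟩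

/-- `K` is the vertex set of a connected component of the subgraph of `G` induced on `Y`. -/
structure IsComponent (G : SimpleGraph V) (Y K : Set V) : Prop where
  subset : K ⊆ Y
  connectedSet : ConnectedSet G K
  not_touches : ¬ Touches G K (Y \ K)

theorem ConnectedSet.exists_component_superset [Finite V] (hA : ConnectedSet G A) (hAY : A ⊆ Y) :
    ∃ K, A ⊆ K ∧ IsComponent G Y K := by
  obtain ⟨K, ⟨hKY, hAK, hK⟩, hmax⟩ := Set.Finite.exists_maximalFor id
    {K : Set V | K ⊆ Y ∧ A ⊆ K ∧ ConnectedSet G K} (Set.toFinite _) ⟨A, hAY, subset_rfl, hA⟩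
  refine ⟨K, hAK, hKY, hK, fun ⟨a, ha, b, hb, hab⟩ => hb.2 ?_⟩
  exact hmax (j := insert b K) ⟨Set.insert_subset hb.1 hKY, hAK.trans (Set.subset_insert b K),
    hK.insert_of_adj ha hab⟩ (Set.subset_insert b K) (Set.mem_insert b K)

theorem exists_component_of_mem [Finite V] (G : SimpleGraph V) {y : V} (hy : y ∈ Y) :
    ∃ K, y ∈ K ∧ IsComponent G Y K := by
  simpa only [Set.singleton_subset_iff] using
    (connectedSet_singleton (G := G) y).exists_component_superset (Set.singleton_subset_iff.2 hy)

theorem IsComponent.superset (hK : IsComponent G Y K) (hA : ConnectedSet G A) (hAY : A ⊆ Y)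
    (h : (A ∩ K).Nonempty) : A ⊆ K := by
  by_contra hAK
  exact hK.not_touches ((hA.touches_of_inter_of_diff h (Set.sdiff_nonempty.2 hAK)).mono
    Set.inter_subset_right (Set.sdiff_subset_sdiff_left hAY))

theorem IsComponent.eq_or_disjoint (hK : IsComponent G Y K) (hK' : IsComponent G Y K') :
    K = K' ∨ Disjoint K K' := by
  by_cases h : (K ∩ K').Nonempty
  · exact Or.inl ((hK'.superset hK.connectedSet hK.subset h).antisymm
      (hK.superset hK'.connectedSet hK'.subset (by rwa [Set.inter_comm])))
  · exact Or.inr (Set.disjoint_iff_inter_eq_empty.2 (Set.not_nonempty_iff_eq_empty.1 h))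

theorem IsComponent.mem_of_adj (hK : IsComponent G Y K) {x y : V} (hx : x ∈ K) (hxy : G.Adj x y)
    (hy : y ∈ Y) : y ∈ K :=
  by_contra fun hyK => hK.not_touches ⟨x, hx, y, ⟨hy, hyK⟩, hxy⟩

theorem IsComponent.touches_sdiff (hK : IsComponent G Y K) (hM : ConnectedSet G M) (hYM : Y ⊆ M)
    (hne : (M \ Y).Nonempty) : Touches G K (M \ Y) := by
  obtain ⟨x, hx, y, ⟨hyM, hyK⟩, hxy⟩ := hM.2 K (hK.subset.trans hYM) hK.connectedSet.1
    (hne.mono (Set.sdiff_subset_sdiff_right hK.subset))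
  exact ⟨x, hx, y, ⟨hyM, fun hyY => hyK (hK.mem_of_adj hx hxy hyY)⟩, hxy⟩

theorem IsComponent.connectedSet_sdiff (hK : IsComponent G Y K) (hM : ConnectedSet G M)
    (hYM : Y ⊆ M) (hMY : ConnectedSet G (M \ Y)) : ConnectedSet G (M \ K) := by
  have hKY := hK.subset
  have hunion : M \ Y ∪ Y \ K = M \ K := by grind
  rw [← hunion]
  refine hMY.union_of_forall_touches fun J hJ hne => ?_
  obtain ⟨x, hx, y, hy, hxy⟩ := hM.2 J (by grind) hne (hMY.1.mono (by grind))
  have hyK : y ∉ K := fun hyK => (hJ hx).2 (hK.mem_of_adj hyK hxy.symm (hJ hx).1)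
  exact ⟨x, hx, y, by grind, hxy⟩

theorem ConnectedSet.induce_connected (hA : ConnectedSet G A) : (G.induce A).Connected := by
  obtain ⟨⟨a, ha⟩, hcut⟩ := hA
  have reachable (b : A) : (G.induce A).Reachable ⟨a, ha⟩ b := by
    by_contra hb
    obtain ⟨x, ⟨hxA, hx⟩, y, ⟨hyA, hy⟩, hxy⟩ :=
      hcut {x | ∃ hx : x ∈ A, (G.induce A).Reachable ⟨a, ha⟩ ⟨x, hx⟩}
        (fun x hx => hx.1) ⟨a, ha, Reachable.refl _⟩ ⟨b, b.2, fun h => hb h.2⟩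
    exact hy ⟨hyA, hx.trans (Adj.reachable (induce_adj.2 hxy))⟩
  exact connected_iff_exists_forall_reachable _ |>.2 ⟨_, reachable⟩

theorem connectedSet_of_induce_connected (h : (G.induce A).Connected) : ConnectedSet G A := by
  refine ⟨Set.nonempty_coe_sort.1 h.nonempty, fun K hK ⟨x, hx⟩ ⟨y, hyA, hyK⟩ => ?_⟩
  obtain ⟨p⟩ := h.preconnected ⟨x, hK hx⟩ ⟨y, hyA⟩
  obtain ⟨d, -, hd, hd'⟩ := p.exists_boundary_dart {u | u.1 ∈ K} hx hyK
  exact ⟨d.fst, hd, d.snd, ⟨d.snd.2, hd'⟩, d.adj⟩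

/-- `G` is connected and has no cut vertex: the form in which 2-connectivity is used. -/
def NoCutVertex (G : SimpleGraph V) : Prop :=
  ConnectedSet G Set.univ ∧ ∀ v, ConnectedSet G {v}ᶜ

theorem noCutVertex_of_isKConnected_two [Fintype V] (h : IsKConnected 2 G) : NoCutVertex G := by
  have connected_compl (S : Finset V) (hS : S.card < 2) : ConnectedSet G (↑S : Set V)ᶜ :=
    connectedSet_of_induce_connected (h.2 S hS)
  exact ⟨by simpa using connected_compl ∅, fun v => by simpa using connected_compl {v}⟩

end ConnectedSets

/-! ### Distributing vertices between two connected sets -/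

section Partition

variable {V : Type*} {G : SimpleGraph V} {R X Y Z : Set V} {r x : V}

/-- The setting in which `R` can be distributed between the disjoint connected sets `X` and `Y` so
that both still touch `Z`: every part of `R` is attached to the rest of `R ∪ X ∪ Y`, `X` does not
separate `Z` from `Y`, `Y` does not separate `Z` from `X`, and no vertex of `R` separates `Z` from
`X ∪ Y`. A separation is encoded as a cut with side `Z ∪ K` that no edge leaves. -/
structure Unseparated (G : SimpleGraph V) (R X Y Z : Set V) : Prop where
  connectedSet_left : ConnectedSet G X
  connectedSet_right : ConnectedSet G Y
  disjoint : Disjoint X Y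
  disjoint_left : Disjoint R X
  disjoint_right : Disjoint R Y
  touches_of_nonempty : ∀ K ⊆ R, K.Nonempty → Touches G K ((R \ K) ∪ X ∪ Y)
  touches_right : ∀ K ⊆ R, Touches G (Z ∪ K) ((R \ K) ∪ Y)
  touches_left : ∀ K ⊆ R, Touches G (Z ∪ K) ((R \ K) ∪ X)
  touches_of_notMem : ∀ v ∈ R, ∀ K ⊆ R, v ∉ K → Touches G (Z ∪ K) (((R \ K) \ {v}) ∪ X ∪ Y)

/-- `R` splits into two parts whose additions to `X` and to `Y` give connected sets touching `Z`. -/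
def HasTouchingPartition (G : SimpleGraph V) (R X Y Z : Set V) : Prop :=
  ∃ RX RY, RX ∪ RY = R ∧ Disjoint RX RY ∧ ConnectedSet G (X ∪ RX) ∧ ConnectedSet G (Y ∪ RY) ∧
    Touches G Z (X ∪ RX) ∧ Touches G Z (Y ∪ RY)

theorem Unseparated.symm (h : Unseparated G R X Y Z) : Unseparated G R Y X Z where
  connectedSet_left := h.connectedSet_right
  connectedSet_right := h.connectedSet_left
  disjoint := h.disjoint.symm
  disjoint_left := h.disjoint_right
  disjoint_right := h.disjoint_left
  touches_of_nonempty K hK hne := (h.touches_of_nonempty K hK hne).mono_right (by grind)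
  touches_right := h.touches_left
  touches_left := h.touches_right
  touches_of_notMem v hv K hK hvK := (h.touches_of_notMem v hv K hK hvK).mono_right (by grind)

theorem HasTouchingPartition.symm (h : HasTouchingPartition G R X Y Z) :
    HasTouchingPartition G R Y X Z := by
  obtain ⟨RX, RY, hR, hdisj, hX, hY, hZX, hZY⟩ := h
  exact ⟨RY, RX, by rwa [Set.union_comm], hdisj.symm, hY, hX, hZY, hZX⟩

theorem Unseparated.insert_left (h : Unseparated G R X Y Z) (hr : r ∈ R) (hx : x ∈ X)
    (hxr : G.Adj x r) (hY : ∀ K ⊆ R \ {r}, Touches G (Z ∪ K) (((R \ {r}) \ K) ∪ Y)) :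
    Unseparated G (R \ {r}) (insert r X) Y Z where
  connectedSet_left := h.connectedSet_left.insert_of_adj hx hxr
  connectedSet_right := h.connectedSet_right
  disjoint := Set.disjoint_insert_left.2 ⟨Set.disjoint_left.1 h.disjoint_right hr, h.disjoint⟩
  disjoint_left := Set.disjoint_insert_right.2
    ⟨fun hr' => hr'.2 rfl, h.disjoint_left.mono_left Set.sdiff_subset⟩
  disjoint_right := h.disjoint_right.mono_left Set.sdiff_subset
  touches_of_nonempty K hK hne :=
    (h.touches_of_nonempty K (hK.trans Set.sdiff_subset) hne).mono_right
      (by grind (ematch := 8))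
  touches_right := hY
  touches_left K hK :=
    (h.touches_left K (hK.trans Set.sdiff_subset)).mono_right (by grind (ematch := 8))
  touches_of_notMem v hv K hK hvK :=
    (h.touches_of_notMem v hv.1 K (hK.trans Set.sdiff_subset) hvK).mono_right (by
      clear hY
      grind (ematch := 8))

theorem HasTouchingPartition.of_insert_left (hr : r ∈ R)
    (h : HasTouchingPartition G (R \ {r}) (insert r X) Y Z) : HasTouchingPartition G R X Y Z := by
  obtain ⟨RX, RY, hR, hdisj, hX, hY, hZX, hZY⟩ := h
  have hunion : X ∪ insert r RX = insert r X ∪ RX := by grind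
  refine ⟨insert r RX, RY, ?_, ?_, by rwa [hunion], hY, by rwa [hunion], hZY⟩
  · rw [Set.insert_union, hR, Set.insert_sdiff_singleton, Set.insert_eq_of_mem hr]
  · exact Set.disjoint_insert_left.2 ⟨fun hrRY => (hR.subset (Or.inr hrRY)).2 rfl, hdisj⟩

/-- If `r` may not be added to `X` without cutting `Z` off from `Y`, then any vertex of `R` next to
`Y` may be added to `Y`: two bad cuts would give a cut vertex by uncrossing. -/
theorem Unseparated.insert_left_or_right (h : Unseparated G R X Y Z) (hr : r ∈ R) (hx : x ∈ X)
    (hxr : G.Adj x r) :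
    Unseparated G (R \ {r}) (insert r X) Y Z ∨
      ∃ r' ∈ R, Unseparated G (R \ {r'}) X (insert r' Y) Z := by
  by_cases hsep : ∀ K ⊆ R \ {r}, Touches G (Z ∪ K) (((R \ {r}) \ K) ∪ Y)
  · exact Or.inl (h.insert_left hr hx hxr hsep)
  push Not at hsep
  obtain ⟨K, hK, hKcut⟩ := hsep
  rw [not_touches_iff] at hKcut
  obtain ⟨r', hr', y, hy, hry⟩ := h.touches_right R subset_rfl
  have hyY : y ∈ Y := by grind
  have hr'K : r' ∉ Z ∪ K := fun hmem => hKcut r' hmem y hry (Or.inr hyY)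
  have hr'R : r' ∈ R := by grind
  refine Or.inr ⟨r', hr'R, (h.symm.insert_left hr'R hyY hry.symm fun K' _ => ?_).symm⟩
  by_contra hK'cut
  rw [not_touches_iff] at hK'cut
  obtain ⟨a, ha, b, hb, hab⟩ := h.touches_of_notMem r hr (K ∩ K') (by grind) (by grind)
  have hbK : b ∉ ((R \ {r}) \ K) ∪ Y := hKcut a (by grind) b hab
  have hbK' : b ∉ ((R \ {r'}) \ K') ∪ X := hK'cut a (by grind) b hab
  grind

theorem Unseparated.hasTouchingPartition [Finite V] (h : Unseparated G R X Y Z) :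
    HasTouchingPartition G R X Y Z := by
  induction hn : R.ncard using Nat.strong_induction_on generalizing R X Y with
  | _ n ih =>
    subst hn
    have extend {X Y : Set V} {r x : V} (h : Unseparated G R X Y Z) (hr : r ∈ R) (hx : x ∈ X)
        (hxr : G.Adj x r) : HasTouchingPartition G R X Y Z := by
      rcases h.insert_left_or_right hr hx hxr with hX | ⟨r', hr', hY⟩
      · exact (ih _ (Set.ncard_sdiff_singleton_lt_of_mem hr) hX rfl).of_insert_left hr
      · exact ((ih _ (Set.ncard_sdiff_singleton_lt_of_mem hr') hY rfl).symm.of_insert_left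
          hr').symm
    rcases R.eq_empty_or_nonempty with rfl | hR
    · refine ⟨∅, ∅, Set.union_self _, disjoint_bot_left, ?_⟩
      have hX := h.touches_left ∅ subset_rfl
      have hY := h.touches_right ∅ subset_rfl
      simp only [Set.union_empty, Set.sdiff_empty, Set.empty_union] at hX hY ⊢
      exact ⟨h.connectedSet_left, h.connectedSet_right, hX, hY⟩
    obtain ⟨r, hr, x, (⟨hxR, hxR'⟩ | hx) | hx, hrx⟩ := h.touches_of_nonempty R subset_rfl hR
    · exact absurd hxR hxR'
    · exact extend h hr hx hrx.symm
    · exact (extend h.symm hr hx hrx.symm).symm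

end Partition

/-! ### Recursive patterns -/

section Patterns

variable {V : Type*} {G : SimpleGraph V} {n m : ℕ}
variable {S T U S' T' S₁ T₁ T₂ U₁ U₂ W A B : Set V}

/-- `S'` is a connected extension of `S` by vertices of `U`. -/
structure Grows (G : SimpleGraph V) (S S' U : Set V) : Prop where
  subset : S ⊆ S'
  subset_union : S' ⊆ S ∪ U
  connectedSet : ConnectedSet G S'

/-- Inside `U`, the sets `S` and `T` grow to `S'` and `T'`, and a connected set `W` touching both of
them is found, leaving the regions `U₁` (to be used between `S'` and `W`) and `U₂` (to be used
between `W` and `T'`). This adds the triangle `S'`, `W`, `T'` of the graphs `𝒬ₙ`. -/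
structure TriangleSplit (G : SimpleGraph V) (S T U S' T' W U₁ U₂ : Set V) : Prop where
  grows_left : Grows G S S' U
  grows_right : Grows G T T' U
  subset : W ∪ U₁ ∪ U₂ ⊆ U
  disjoint_sides : Disjoint S' T'
  disjoint_left : Disjoint S' (W ∪ U₁ ∪ U₂)
  disjoint_right : Disjoint T' (W ∪ U₁ ∪ U₂)
  disjoint_apex : Disjoint W (U₁ ∪ U₂)
  disjoint_regions : Disjoint U₁ U₂
  connectedSet : ConnectedSet G W
  touches_left : Touches G W S'
  touches_right : Touches G W T'

/-- Inside `U`, the sets `S` and `T` grow to `S'` and `T'`, and connected sets `T₁`, `T₂` touching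
`T'` are found, leaving a region `U₁` for `S'` and `T₁` and a region `U₂` for `S'` and `T₂`. This
adds two children of the tree node `T'`; the branching is delayed to a later stage if `T₁ = T₂`. -/
structure ApexSplit (G : SimpleGraph V) (S T U S' T' T₁ T₂ U₁ U₂ : Set V) : Prop where
  grows_left : Grows G S S' U
  grows_right : Grows G T T' U
  subset : T₁ ∪ T₂ ∪ U₁ ∪ U₂ ⊆ U
  disjoint_sides : Disjoint S' T'
  disjoint_left : Disjoint S' (T₁ ∪ T₂ ∪ U₁ ∪ U₂)
  disjoint_right : Disjoint T' (T₁ ∪ T₂ ∪ U₁ ∪ U₂)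
  disjoint_children : Disjoint (T₁ ∪ T₂) (U₁ ∪ U₂)
  disjoint_regions : Disjoint U₁ U₂
  eq_or_disjoint : T₁ = T₂ ∨ Disjoint T₁ T₂
  connectedSet₁ : ConnectedSet G T₁
  connectedSet₂ : ConnectedSet G T₂
  touches₁ : Touches G T' T₁
  touches₂ : Touches G T' T₂

/-- A model of the triangle tree `𝒬ₙ` on the base edge `S`, `T`, all of whose further vertices lie
in `U`. Adjacency of `S` and `T` themselves is not required. -/
def TriangleTree (G : SimpleGraph V) : ℕ → Set V → Set V → Set V → Prop
  | 0 => fun _ _ _ => True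
  | n + 1 => fun S T U => ∃ S' T' W U₁ U₂, TriangleSplit G S T U S' T' W U₁ U₂ ∧
      TriangleTree G n S' W U₁ ∧ TriangleTree G n W T' U₂

/-- A model of a binary tree with root `T` and an apex `S` adjacent to its leaves, all of whose
further vertices lie in `U`. It has `n` stages, at each of which a branch may also fail to fork. -/
def ApexTree (G : SimpleGraph V) : ℕ → Set V → Set V → Set V → Prop
  | 0 => fun S T U => ∃ S' T', Grows G S S' U ∧ Grows G T T' U ∧ Disjoint S' T' ∧ Touches G S' T'
  | n + 1 => fun S T U => ∃ S' T' T₁ T₂ U₁ U₂, ApexSplit G S T U S' T' T₁ T₂ U₁ U₂ ∧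
      ApexTree G n S' T₁ U₁ ∧ ApexTree G n S' T₂ U₂

theorem ConnectedSet.grows (h : ConnectedSet G S) : Grows G S S U :=
  ⟨subset_rfl, Set.subset_union_left, h⟩

theorem Grows.of_subset (h : Grows G S₁ S' U₁) (hS : S ⊆ S₁) (hS' : S₁ ⊆ S ∪ U) (hU : U₁ ⊆ U) :
    Grows G S S' U where
  subset := hS.trans h.subset
  subset_union := h.subset_union.trans (Set.union_subset hS' (hU.trans Set.subset_union_right))
  connectedSet := h.connectedSet

theorem Grows.union_right (h : Grows G S S' U) (hne : S.Nonempty) (hS : S ⊆ S₁)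
    (hS₁ : ConnectedSet G S₁) : Grows G S₁ (S' ∪ S₁) U where
  subset := Set.subset_union_right
  subset_union := by have := h.subset_union; grind
  connectedSet := h.connectedSet.union_of_inter hS₁ (hne.mono (Set.subset_inter h.subset hS))

theorem TriangleTree.of_grows (h : TriangleTree G n S₁ T₁ U₁) (hS : Grows G S S₁ U)
    (hT : Grows G T T₁ U) (hU : U₁ ⊆ U) : TriangleTree G n S T U := by
  cases n with
  | zero => trivial
  | succ n =>
    obtain ⟨S', T', W, A, B, hsplit, hA, hB⟩ := h
    exact ⟨S', T', W, A, B,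
      { hsplit with
        grows_left := hsplit.grows_left.of_subset hS.subset hS.subset_union hU
        grows_right := hsplit.grows_right.of_subset hT.subset hT.subset_union hU
        subset := hsplit.subset.trans hU }, hA, hB⟩

theorem ApexTree.of_grows (h : ApexTree G n S₁ T₁ U₁) (hS : Grows G S S₁ U)
    (hT : Grows G T T₁ U) (hU : U₁ ⊆ U) : ApexTree G n S T U := by
  cases n with
  | zero =>
    obtain ⟨S', T', hS', hT', hdisj, htouch⟩ := h
    exact ⟨S', T', hS'.of_subset hS.subset hS.subset_union hU,
      hT'.of_subset hT.subset hT.subset_union hU, hdisj, htouch⟩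
  | succ n =>
    obtain ⟨S', T', A, B, C, D, hsplit, hC, hD⟩ := h
    exact ⟨S', T', A, B, C, D,
      { hsplit with
        grows_left := hsplit.grows_left.of_subset hS.subset hS.subset_union hU
        grows_right := hsplit.grows_right.of_subset hT.subset hT.subset_union hU
        subset := hsplit.subset.trans hU }, hC, hD⟩

theorem TriangleSplit.union_right (h : TriangleSplit G S T U S' T' W U₁ U₂) (hT : T.Nonempty)
    (hTT₁ : T ⊆ T₁) (hT₁ : ConnectedSet G T₁) (hST₁ : Disjoint S T₁) (hT₁U : Disjoint T₁ U) :
    TriangleSplit G S T₁ U S' (T' ∪ T₁) W U₁ U₂ where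
  __ := h
  grows_right := h.grows_right.union_right hT hTT₁ hT₁
  disjoint_sides := Set.disjoint_union_right.2 ⟨h.disjoint_sides,
    (Set.disjoint_union_left.2 ⟨hST₁, hT₁U.symm⟩).mono_left h.grows_left.subset_union⟩
  disjoint_right := Set.disjoint_union_left.2 ⟨h.disjoint_right, hT₁U.mono_right h.subset⟩
  touches_right := h.touches_right.mono_right Set.subset_union_left

theorem ApexSplit.union_left (h : ApexSplit G S T U S' T' A B U₁ U₂) (hS : S.Nonempty)
    (hSS₁ : S ⊆ S₁) (hS₁ : ConnectedSet G S₁) (hS₁T : Disjoint S₁ T) (hS₁U : Disjoint S₁ U) :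
    ApexSplit G S₁ T U (S' ∪ S₁) T' A B U₁ U₂ where
  __ := h
  grows_left := h.grows_left.union_right hS hSS₁ hS₁
  disjoint_sides := Set.disjoint_union_left.2 ⟨h.disjoint_sides,
    (Set.disjoint_union_right.2 ⟨hS₁T, hS₁U⟩).mono_right h.grows_right.subset_union⟩
  disjoint_left := Set.disjoint_union_left.2 ⟨h.disjoint_left, hS₁U.mono_right h.subset⟩

theorem ApexSplit.union_right (h : ApexSplit G S T U S' T' A B U₁ U₂) (hT : T.Nonempty)
    (hTT₁ : T ⊆ T₁) (hT₁ : ConnectedSet G T₁) (hST₁ : Disjoint S T₁) (hT₁U : Disjoint T₁ U) :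
    ApexSplit G S T₁ U S' (T' ∪ T₁) A B U₁ U₂ where
  __ := h
  grows_right := h.grows_right.union_right hT hTT₁ hT₁
  disjoint_sides := Set.disjoint_union_right.2 ⟨h.disjoint_sides,
    (Set.disjoint_union_left.2 ⟨hST₁, hT₁U.symm⟩).mono_left h.grows_left.subset_union⟩
  disjoint_right := Set.disjoint_union_left.2 ⟨h.disjoint_right, hT₁U.mono_right h.subset⟩
  touches₁ := h.touches₁.mono_left Set.subset_union_left
  touches₂ := h.touches₂.mono_left Set.subset_union_left

theorem TriangleTree.enlarge_right (h : TriangleTree G n S T U) (hT : T.Nonempty) (hTT₁ : T ⊆ T₁)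
    (hT₁ : ConnectedSet G T₁) (hST₁ : Disjoint S T₁) (hT₁U : Disjoint T₁ U) :
    TriangleTree G n S T₁ U := by
  induction n generalizing S T U T₁ with
  | zero => trivial
  | succ n ih =>
    obtain ⟨S', T', W, U₁, U₂, hsplit, hleft, hright⟩ := h
    have hsplit₁ := hsplit.union_right hT hTT₁ hT₁ hST₁ hT₁U
    refine ⟨S', T' ∪ T₁, W, U₁, U₂, hsplit₁, hleft, ih hright
      hsplit.grows_right.connectedSet.1 Set.subset_union_left hsplit₁.grows_right.connectedSet
      ?_ ?_⟩
    · exact hsplit₁.disjoint_right.symm.mono_left (by grind)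
    · exact hsplit₁.disjoint_right.mono_right (by grind)

theorem ApexTree.enlarge_left (h : ApexTree G n S T U) (hS : S.Nonempty) (hSS₁ : S ⊆ S₁)
    (hS₁ : ConnectedSet G S₁) (hS₁T : Disjoint S₁ T) (hS₁U : Disjoint S₁ U) :
    ApexTree G n S₁ T U := by
  induction n generalizing S T U S₁ with
  | zero =>
    obtain ⟨S', T', hS', hT', hdisj, htouch⟩ := h
    refine ⟨S' ∪ S₁, T', hS'.union_right hS hSS₁ hS₁, hT', ?_,
      htouch.mono_left Set.subset_union_left⟩
    exact Set.disjoint_union_left.2 ⟨hdisj,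
      (Set.disjoint_union_right.2 ⟨hS₁T, hS₁U⟩).mono_right hT'.subset_union⟩
  | succ n ih =>
    obtain ⟨S', T', A, B, C, D, hsplit, hC, hD⟩ := h
    have hsplit₁ := hsplit.union_left hS hSS₁ hS₁ hS₁T hS₁U
    have hdisj := hsplit₁.disjoint_left
    have enlarge {A C : Set V} (h : ApexTree G n S' A C) (hA : Disjoint (S' ∪ S₁) A)
        (hC : Disjoint (S' ∪ S₁) C) : ApexTree G n (S' ∪ S₁) A C :=
      ih h hsplit.grows_left.connectedSet.1 Set.subset_union_left
        hsplit₁.grows_left.connectedSet hA hC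
    exact ⟨S' ∪ S₁, T', A, B, C, D, hsplit₁,
      enlarge hC (hdisj.mono_right (by grind)) (hdisj.mono_right (by grind)),
      enlarge hD (hdisj.mono_right (by grind)) (hdisj.mono_right (by grind))⟩

theorem ApexTree.enlarge_right (h : ApexTree G n S T U) (hT : T.Nonempty) (hTT₁ : T ⊆ T₁)
    (hT₁ : ConnectedSet G T₁) (hST₁ : Disjoint S T₁) (hT₁U : Disjoint T₁ U) :
    ApexTree G n S T₁ U := by
  cases n with
  | zero =>
    obtain ⟨S', T', hS', hT', hdisj, htouch⟩ := h
    refine ⟨S', T' ∪ T₁, hS', hT'.union_right hT hTT₁ hT₁, ?_,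
      htouch.mono_right Set.subset_union_left⟩
    exact Set.disjoint_union_right.2 ⟨hdisj,
      (Set.disjoint_union_left.2 ⟨hST₁, hT₁U.symm⟩).mono_left hS'.subset_union⟩
  | succ n =>
    obtain ⟨S', T', A, B, C, D, hsplit, hC, hD⟩ := h
    exact ⟨S', T' ∪ T₁, A, B, C, D, hsplit.union_right hT hTT₁ hT₁ hST₁ hT₁U, hC, hD⟩

theorem ApexTree.of_succ (h : ApexTree G (n + 1) S T U) : ApexTree G n S T U := by
  induction n generalizing S T U with
  | zero =>
    obtain ⟨S', T', A, B, C, D, hsplit, ⟨S'', A', hS'', hA', hdisj, htouch⟩, -⟩ := h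
    refine ⟨S'', T' ∪ A', hS''.of_subset hsplit.grows_left.subset hsplit.grows_left.subset_union
      (by grind [hsplit.subset]), ⟨?_, ?_, ?_⟩, ?_, htouch.mono_right Set.subset_union_right⟩
    · exact hsplit.grows_right.subset.trans Set.subset_union_left
    · grind [hsplit.grows_right.subset_union, hA'.subset_union, hsplit.subset]
    · exact hsplit.grows_right.connectedSet.union_of_touches hA'.connectedSet
        (hsplit.touches₁.mono_right hA'.subset)
    · have := hS''.subset_union
      have := hsplit.disjoint_sides
      have := hsplit.disjoint_right
      grind
  | succ n ih =>
    obtain ⟨S', T', A, B, C, D, hsplit, hC, hD⟩ := h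
    exact ⟨S', T', A, B, C, D, hsplit, ih hC, ih hD⟩

theorem ApexTree.mono (h : ApexTree G n S T U) (hmn : m ≤ n) : ApexTree G m S T U :=
  antitone_nat_of_succ_le (f := fun k => ApexTree G k S T U) (fun _ => ApexTree.of_succ) hmn h

theorem TriangleTree.of_succ (h : TriangleTree G (n + 1) S T U) : TriangleTree G n S T U := by
  induction n generalizing S T U with
  | zero => trivial
  | succ n ih =>
    obtain ⟨S', T', W, A, B, hsplit, hA, hB⟩ := h
    exact ⟨S', T', W, A, B, hsplit, ih hA, ih hB⟩

theorem TriangleTree.mono (h : TriangleTree G n S T U) (hmn : m ≤ n) : TriangleTree G m S T U :=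
  antitone_nat_of_succ_le (f := fun k => TriangleTree G k S T U) (fun _ => TriangleTree.of_succ)
    hmn h

end Patterns

section Regions

variable {V : Type*} {G : SimpleGraph V} {n m : ℕ} {S T U S' T' T₁ T₂ U₁ U₂ W B C : Set V}

/-- The connected set `U` consists of two disjoint connected regions `B` and `C` together with a
connected rest that separates `B` from `C` and from the outside of `U`. -/
structure Fork (G : SimpleGraph V) (U B C : Set V) : Prop where
  connectedSet : ConnectedSet G U
  connectedSet_left : ConnectedSet G B
  connectedSet_right : ConnectedSet G C
  connectedSet_rest : ConnectedSet G (U \ (B ∪ C))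
  subset_left : B ⊆ U
  subset_right : C ⊆ U
  disjoint : Disjoint B C
  not_touches_left : ¬ Touches G B (U \ C)ᶜ
  not_touches_right : ¬ Touches G C (U \ B)ᶜ

/-- A connected set that forks repeatedly, to depth `n`, into nested regions. -/
def NestedTree (G : SimpleGraph V) : ℕ → Set V → Prop
  | 0 => fun U => ConnectedSet G U
  | n + 1 => fun U => ∃ B C, Fork G U B C ∧ NestedTree G n B ∧ NestedTree G n C

/-- `S` and `T` are disjoint connected sets outside `U` that touch `U` and contain all neighbours
of `U`: the two poles between which `U` is to be split further. -/
structure Frame (G : SimpleGraph V) (S T U : Set V) : Prop where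
  connectedSet_left : ConnectedSet G S
  connectedSet_right : ConnectedSet G T
  disjoint : Disjoint S T
  disjoint_left : Disjoint S U
  disjoint_right : Disjoint T U
  not_touches : ¬ Touches G U (S ∪ T ∪ U)ᶜ
  touches_left : Touches G S U
  touches_right : Touches G T U

theorem Fork.symm (h : Fork G U B C) : Fork G U C B where
  connectedSet := h.connectedSet
  connectedSet_left := h.connectedSet_right
  connectedSet_right := h.connectedSet_left
  connectedSet_rest := by rw [Set.union_comm]; exact h.connectedSet_rest
  subset_left := h.subset_right
  subset_right := h.subset_left
  disjoint := h.disjoint.symm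
  not_touches_left := h.not_touches_right
  not_touches_right := h.not_touches_left

theorem NestedTree.connectedSet (h : NestedTree G n U) : ConnectedSet G U := by
  cases n with
  | zero => exact h
  | succ n =>
    obtain ⟨B, C, hfork, -⟩ := h
    exact hfork.connectedSet

theorem NestedTree.of_succ (h : NestedTree G (n + 1) U) : NestedTree G n U := by
  induction n generalizing U with
  | zero => exact h.connectedSet
  | succ n ih =>
    obtain ⟨B, C, hfork, hB, hC⟩ := h
    exact ⟨B, C, hfork, ih hB, ih hC⟩

theorem NestedTree.mono (h : NestedTree G n U) (hmn : m ≤ n) : NestedTree G m U :=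
  antitone_nat_of_succ_le (f := fun k => NestedTree G k U) (fun _ => NestedTree.of_succ) hmn h

theorem Frame.symm (h : Frame G S T U) : Frame G T S U where
  connectedSet_left := h.connectedSet_right
  connectedSet_right := h.connectedSet_left
  disjoint := h.disjoint.symm
  disjoint_left := h.disjoint_right
  disjoint_right := h.disjoint_left
  not_touches := by rw [Set.union_comm T S]; exact h.not_touches
  touches_left := h.touches_right
  touches_right := h.touches_left

theorem TriangleSplit.frame_left (h : TriangleSplit G S T U S' T' W U₁ U₂)
    (hnb : ¬ Touches G U₁ (S' ∪ W ∪ U₁)ᶜ) (hS : Touches G S' U₁) (hW : Touches G W U₁) :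
    Frame G S' W U₁ where
  connectedSet_left := h.grows_left.connectedSet
  connectedSet_right := h.connectedSet
  disjoint := h.disjoint_left.mono_right (by grind)
  disjoint_left := h.disjoint_left.mono_right (by grind)
  disjoint_right := h.disjoint_apex.mono_right (by grind)
  not_touches := hnb
  touches_left := hS
  touches_right := hW

theorem TriangleSplit.symm (h : TriangleSplit G S T U S' T' W U₁ U₂) :
    TriangleSplit G T S U T' S' W U₂ U₁ where
  grows_left := h.grows_right
  grows_right := h.grows_left
  subset := by grind [h.subset]
  disjoint_sides := h.disjoint_sides.symm
  disjoint_left := h.disjoint_right.mono_right (by grind)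
  disjoint_right := h.disjoint_left.mono_right (by grind)
  disjoint_apex := h.disjoint_apex.mono_right (by grind)
  disjoint_regions := h.disjoint_regions.symm
  connectedSet := h.connectedSet
  touches_left := h.touches_right
  touches_right := h.touches_left

theorem ApexSplit.symm (h : ApexSplit G S T U S' T' T₁ T₂ U₁ U₂) :
    ApexSplit G S T U S' T' T₂ T₁ U₂ U₁ where
  grows_left := h.grows_left
  grows_right := h.grows_right
  subset := by grind [h.subset]
  disjoint_sides := h.disjoint_sides
  disjoint_left := h.disjoint_left.mono_right (by grind)
  disjoint_right := h.disjoint_right.mono_right (by grind)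
  disjoint_children := h.disjoint_children.mono (by grind) (by grind)
  disjoint_regions := h.disjoint_regions.symm
  eq_or_disjoint := h.eq_or_disjoint.imp Eq.symm fun h => h.symm
  connectedSet₁ := h.connectedSet₂
  connectedSet₂ := h.connectedSet₁
  touches₁ := h.touches₂
  touches₂ := h.touches₁

theorem ApexSplit.frame₁ (h : ApexSplit G S T U S' T' T₁ T₂ U₁ U₂)
    (hnb : ¬ Touches G U₁ (S' ∪ T₁ ∪ U₁)ᶜ) (hS : Touches G S' U₁) (hT : Touches G T₁ U₁) :
    Frame G S' T₁ U₁ where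
  connectedSet_left := h.grows_left.connectedSet
  connectedSet_right := h.connectedSet₁
  disjoint := h.disjoint_left.mono_right (by grind)
  disjoint_left := h.disjoint_left.mono_right (by grind)
  disjoint_right := h.disjoint_children.mono (by grind) (by grind)
  not_touches := hnb
  touches_left := hS
  touches_right := hT

end Regions

/-! ### Splitting towards the apex tree -/

section ForkCovers

variable {V : Type*} {G : SimpleGraph V} {n : ℕ} {S T U S' T' T₁ T₂ B C : Set V}

/-- The poles `S` and `T` of a framed fork grow over the whole rest of the fork, and then both of
them touch both regions. -/
structure ForkCover (G : SimpleGraph V) (S T U S' T' B C : Set V) : Prop where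
  fork : Fork G U B C
  grows_left : Grows G S S' U
  grows_right : Grows G T T' U
  disjoint_sides : Disjoint S' T'
  disjoint_regions : Disjoint (S' ∪ T') (B ∪ C)
  subset : U ⊆ S' ∪ T' ∪ (B ∪ C)
  touches_left_left : Touches G S' B
  touches_left_right : Touches G S' C
  touches_right_left : Touches G T' B
  touches_right_right : Touches G T' C

/-- A fork cover whose two regions are nested trees of depth `n`. -/
def HasForkCover (G : SimpleGraph V) (n : ℕ) (S T U : Set V) : Prop :=
  ∃ S' T' B C, ForkCover G S T U S' T' B C ∧ NestedTree G n B ∧ NestedTree G n C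

/-- One step of the construction of an apex tree: the regions of the split are framed again and
nested trees of depth `n`. -/
def ApexStep (G : SimpleGraph V) (n : ℕ) (S T U : Set V) : Prop :=
  ∃ S' T₁ T₂ U₁ U₂, ApexSplit G S T U S' T T₁ T₂ U₁ U₂ ∧ Frame G S' T₁ U₁ ∧ Frame G S' T₂ U₂ ∧
    NestedTree G n U₁ ∧ NestedTree G n U₂

theorem ForkCover.symm (h : ForkCover G S T U S' T' B C) : ForkCover G T S U T' S' B C where
  fork := h.fork
  grows_left := h.grows_right
  grows_right := h.grows_left
  disjoint_sides := h.disjoint_sides.symm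
  disjoint_regions := by rw [Set.union_comm]; exact h.disjoint_regions
  subset := by rw [Set.union_comm T']; exact h.subset
  touches_left_left := h.touches_right_left
  touches_left_right := h.touches_right_right
  touches_right_left := h.touches_left_left
  touches_right_right := h.touches_left_right

theorem HasForkCover.symm (h : HasForkCover G n S T U) : HasForkCover G n T S U := by
  obtain ⟨S', T', B, C, hcover, hB, hC⟩ := h
  exact ⟨T', S', B, C, hcover.symm, hB, hC⟩

theorem ForkCover.connectedSet_union_sdiff (h : ForkCover G S T U S' T' B C)
    (hT₁ : IsComponent G (T' ∩ U) T₁) (hT₂ : IsComponent G (T' ∩ U) T₂) :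
    ConnectedSet G (S' ∪ ((T' ∩ U) \ (T₁ ∪ T₂))) := by
  refine h.grows_left.connectedSet.union_of_forall_touches fun K hK hne => ?_
  have hdisj := h.disjoint_regions
  obtain ⟨x, hx, y, ⟨⟨hyU, hyBC⟩, hyK⟩, hxy⟩ := h.fork.connectedSet_rest.2 K (by grind) hne
    (by obtain ⟨z, hz⟩ := hT₁.connectedSet.1; exact ⟨z, by grind [hT₁.subset]⟩)
  have hy₁ : y ∉ T₁ := fun hy => (hK hx).2 (Or.inl (hT₁.mem_of_adj hy hxy.symm (hK hx).1))
  have hy₂ : y ∉ T₂ := fun hy => (hK hx).2 (Or.inr (hT₂.mem_of_adj hy hxy.symm (hK hx).1))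
  exact ⟨x, hx, y, by grind [h.subset hyU], hxy⟩

/-- The parts of the pole `T'` inside `U` other than `T₁` and `T₂` are handed over to `S'`. -/
theorem ForkCover.apexSplit (h : ForkCover G S T U S' T' B C) (hT : ConnectedSet G T)
    (hTU : Disjoint T U) (hT₁ : IsComponent G (T' ∩ U) T₁) (hT₂ : IsComponent G (T' ∩ U) T₂) :
    ApexSplit G S T U (S' ∪ ((T' ∩ U) \ (T₁ ∪ T₂))) T T₁ T₂ B C := by
  have hsub₁ := hT₁.subset
  have hsub₂ := hT₂.subset
  have hsides := h.disjoint_sides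
  have hregions := h.disjoint_regions
  have hST : Disjoint S' T := hsides.mono_right h.grows_right.subset
  have hBC := h.fork.subset_left
  have hCU := h.fork.subset_right
  have subset : T₁ ∪ T₂ ∪ B ∪ C ⊆ U := by grind
  have touches {K : Set V} (hK : IsComponent G (T' ∩ U) K) : Touches G T K := by
    refine ((hK.touches_sdiff h.grows_right.connectedSet Set.inter_subset_left ?_).mono_right
      (by grind [h.grows_right.subset_union])).symm
    exact hT.1.mono (by grind [h.grows_right.subset])
  exact
    { grows_left := ⟨h.grows_left.subset.trans Set.subset_union_left,
        by grind [h.grows_left.subset_union], h.connectedSet_union_sdiff hT₁ hT₂⟩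
      grows_right := hT.grows
      subset := subset
      disjoint_sides := by grind
      disjoint_left := by
        rw [Set.union_assoc (T₁ ∪ T₂)]
        exact Set.disjoint_union_left.2
          ⟨Set.disjoint_union_right.2 ⟨hsides.mono_right (by grind),
            hregions.mono_left Set.subset_union_left⟩,
          Set.disjoint_union_right.2 ⟨Set.disjoint_sdiff_left, hregions.mono_left (by grind)⟩⟩
      disjoint_right := hTU.mono_right subset
      disjoint_children := hregions.mono_left (by grind)
      disjoint_regions := h.fork.disjoint
      eq_or_disjoint := hT₁.eq_or_disjoint hT₂
      connectedSet₁ := hT₁.connectedSet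
      connectedSet₂ := hT₂.connectedSet
      touches₁ := touches hT₁
      touches₂ := touches hT₂ }

theorem ForkCover.not_touches_left (h : ForkCover G S T U S' T' B C)
    (h₁₂ : T₁ = T₂ ∨ ¬ Touches G T₂ B) :
    ¬ Touches G B (S' ∪ ((T' ∩ U) \ (T₁ ∪ T₂)) ∪ T₁ ∪ B)ᶜ := by
  rintro ⟨x, hx, y, hy, hxy⟩
  obtain ⟨hyU, hyC⟩ := mem_of_not_touches_compl h.fork.not_touches_left hx hxy
  have hyT₂ : y ∈ T₂ → y ∈ T₁ := by
    rcases h₁₂ with rfl | h₁₂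
    · exact id
    · exact fun hyT₂ => absurd ⟨y, hyT₂, x, hx, hxy.symm⟩ h₁₂
  have := h.subset hyU
  grind

theorem ForkCover.symm_regions (h : ForkCover G S T U S' T' B C) :
    ForkCover G S T U S' T' C B where
  fork := h.fork.symm
  grows_left := h.grows_left
  grows_right := h.grows_right
  disjoint_sides := h.disjoint_sides
  disjoint_regions := by rw [Set.union_comm C]; exact h.disjoint_regions
  subset := by rw [Set.union_comm C]; exact h.subset
  touches_left_left := h.touches_left_right
  touches_left_right := h.touches_left_left
  touches_right_left := h.touches_right_right
  touches_right_right := h.touches_right_left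

theorem ForkCover.apexStep (h : ForkCover G S T U S' T' B C) (hT : ConnectedSet G T)
    (hTU : Disjoint T U) (hT₁ : IsComponent G (T' ∩ U) T₁) (hT₂ : IsComponent G (T' ∩ U) T₂)
    (hT₁B : Touches G T₁ B) (hT₂C : Touches G T₂ C)
    (h₁₂ : T₁ = T₂ ∨ ¬ Touches G T₁ C ∧ ¬ Touches G T₂ B)
    (hB : NestedTree G n B) (hC : NestedTree G n C) : ApexStep G n S T U := by
  have hsplit := h.apexSplit hT hTU hT₁ hT₂
  have hnbB := h.not_touches_left (h₁₂.imp id And.right)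
  have hnbC := h.symm_regions.not_touches_left (h₁₂.imp Eq.symm And.left)
  rw [Set.union_comm T₂] at hnbC
  exact ⟨_, T₁, T₂, B, C, hsplit,
    hsplit.frame₁ hnbB (h.touches_left_left.mono_left Set.subset_union_left) hT₁B,
    hsplit.symm.frame₁ hnbC (h.touches_left_right.mono_left Set.subset_union_left) hT₂C, hB, hC⟩

theorem ForkCover.exists_component_touches [Finite V] (h : ForkCover G S T U S' T' B C) :
    ∃ K, IsComponent G (T' ∩ U) K ∧ Touches G K B := by
  obtain ⟨a, ha, b, hb, hab⟩ := h.touches_right_left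
  have haU := (mem_of_not_touches_compl h.fork.not_touches_left hb hab.symm).1
  obtain ⟨K, haK, hK⟩ := exists_component_of_mem G (Set.mem_inter ha haU)
  exact ⟨K, hK, a, haK, b, hb, hab⟩

theorem HasForkCover.apexStep [Finite V] (h : HasForkCover G n S T U) (hT : ConnectedSet G T)
    (hTU : Disjoint T U) : ApexStep G n S T U := by
  obtain ⟨S', T', B, C, hcover, hB, hC⟩ := h
  obtain ⟨K₁, hK₁, hK₁B⟩ := hcover.exists_component_touches
  obtain ⟨K₂, hK₂, hK₂C⟩ := hcover.symm_regions.exists_component_touches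
  by_cases hK₁C : Touches G K₁ C
  · exact hcover.apexStep hT hTU hK₁ hK₁ hK₁B hK₁C (Or.inl rfl) hB hC
  by_cases hK₂B : Touches G K₂ B
  · exact hcover.apexStep hT hTU hK₂ hK₂ hK₂B hK₂C (Or.inl rfl) hB hC
  · exact hcover.apexStep hT hTU hK₁ hK₂ hK₁B hK₂C (Or.inr ⟨hK₁C, hK₂B⟩) hB hC

end ForkCovers

/-! ### Cutting off regions in a graph without cut vertices -/

section Cuts

variable {V : Type*} {G : SimpleGraph V} {R S T U X Y Z A B C b c K K' : Set V} {v v' w s t x y : V}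

theorem NoCutVertex.touches_compl_insert (hG : NoCutVertex G) (hA : A.Nonempty)
    (hs : s ∉ insert w A) : Touches G A (insert w A)ᶜ := by
  by_cases hw : w ∈ A
  · rw [Set.insert_eq_of_mem hw] at hs ⊢
    exact (hG.1.2 A (Set.subset_univ A) hA ⟨s, trivial, hs⟩).mono_right (by grind)
  · exact ((hG.2 w).2 A (by grind) hA ⟨s, by grind⟩).mono_right (by grind)

theorem NoCutVertex.touches_compl_insert_of_ne (hG : NoCutVertex G) (hA : A.Nonempty) (hs : s ∉ A)
    (ht : t ∉ A) (hst : s ≠ t) (w : V) : Touches G A (insert w A)ᶜ := by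
  by_cases hsw : s = w
  · exact hG.touches_compl_insert hA (s := t) (by grind)
  · exact hG.touches_compl_insert hA (s := s) (by grind)

theorem ConnectedSet.touches_of_union (h : ConnectedSet G (A ∪ B)) (hA : A.Nonempty)
    (hB : B.Nonempty) (hAB : Disjoint A B) : Touches G A B := by
  simpa only [Set.union_sdiff_cancel_left hAB.le_bot] using
    h.2 A Set.subset_union_left hA (by rwa [Set.union_sdiff_cancel_left hAB.le_bot])

theorem ConnectedSet.touches_union_sdiff (h : ConnectedSet G (Z ∪ R ∪ Y)) (hZ : Z.Nonempty)
    (hY : Y.Nonempty) (hdisj : Disjoint (Z ∪ R) Y) (hK : K ⊆ R) :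
    Touches G (Z ∪ K) ((R \ K) ∪ Y) :=
  (h.2 (Z ∪ K) (by grind) (hZ.mono Set.subset_union_left) (hY.mono (by grind))).mono_right
    (by grind)

theorem unseparated_of_connectedSet (hX : ConnectedSet G X) (hY : ConnectedSet G Y)
    (hZ : Z.Nonempty) (hXY : Disjoint X Y) (hZR : Disjoint (Z ∪ R) (X ∪ Y))
    (hRXY : ConnectedSet G (R ∪ X ∪ Y)) (hZRX : ConnectedSet G (Z ∪ R ∪ X))
    (hZRY : ConnectedSet G (Z ∪ R ∪ Y))
    (hcut : ∀ v ∈ R, ∀ K ⊆ R, v ∉ K → Touches G (Z ∪ K) (((R \ K) \ {v}) ∪ X ∪ Y)) :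
    Unseparated G R X Y Z where
  connectedSet_left := hX
  connectedSet_right := hY
  disjoint := hXY
  disjoint_left := hZR.mono Set.subset_union_right Set.subset_union_left
  disjoint_right := hZR.mono Set.subset_union_right Set.subset_union_right
  touches_of_nonempty K hK hne :=
    (hRXY.2 K (by grind) hne (hX.1.mono fun _ hx =>
      ⟨by grind, fun hxK => Set.disjoint_right.1 hZR (Or.inl hx) (Or.inr (hK hxK))⟩)).mono_right
      (by grind)
  touches_right _ hK :=
    hZRY.touches_union_sdiff hZ hY.1 (hZR.mono_right Set.subset_union_right) hK
  touches_left _ hK :=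
    hZRX.touches_union_sdiff hZ hX.1 (hZR.mono_right Set.subset_union_left) hK
  touches_of_notMem := hcut

theorem NoCutVertex.unseparated (hG : NoCutVertex G) (hX : ConnectedSet G X)
    (hY : ConnectedSet G Y) (hZ : Z.Nonempty) (hXY : Disjoint X Y)
    (hZR : Disjoint (Z ∪ R) (X ∪ Y)) (hRXY : ConnectedSet G (R ∪ X ∪ Y))
    (hZRX : ConnectedSet G (Z ∪ R ∪ X)) (hZRY : ConnectedSet G (Z ∪ R ∪ Y))
    (hnb : ¬ Touches G (Z ∪ R) (Z ∪ R ∪ X ∪ Y)ᶜ) : Unseparated G R X Y Z := by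
  refine unseparated_of_connectedSet hX hY hZ hXY hZR hRXY hZRX hZRY fun v hv K hK _ => ?_
  obtain ⟨s, hs⟩ := hX.1
  have hsZR : s ∉ Z ∪ R := Set.disjoint_right.1 hZR (Or.inl hs)
  obtain ⟨x, hx, y, hy, hxy⟩ := hG.touches_compl_insert (w := v) (s := s)
    (hZ.mono (Set.subset_union_left (t := K))) (by grind)
  have := mem_of_not_touches_compl hnb (x := x) (by grind) hxy
  exact ⟨x, hx, y, by grind, hxy⟩

theorem Frame.disjoint_union_union (h : Frame G S T U) (hA : A ⊆ U) (hB : B ⊆ U)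
    (hAB : Disjoint A B) : Disjoint (S ∪ A) (T ∪ B) :=
  Set.disjoint_union_left.2 ⟨Set.disjoint_union_right.2 ⟨h.disjoint, h.disjoint_left.mono_right hB⟩,
    Set.disjoint_union_right.2 ⟨h.disjoint_right.symm.mono_left hA, hAB⟩⟩

theorem Frame.disjoint_union_sdiff (h : Frame G S T U) (hA : A ⊆ U) :
    Disjoint (S ∪ T ∪ U \ A) A :=
  Set.disjoint_union_left.2 ⟨Set.disjoint_union_left.2
    ⟨h.disjoint_left.mono_right hA, h.disjoint_right.mono_right hA⟩, Set.disjoint_sdiff_left⟩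

theorem Fork.touches_left_rest (h : Fork G U B C) : Touches G B (U \ (B ∪ C)) := by
  obtain ⟨x, hx, y, hy, hxy⟩ := h.connectedSet.2 B h.subset_left h.connectedSet_left.1
    (h.connectedSet_rest.1.mono (by grind))
  have := mem_of_not_touches_compl h.not_touches_left hx hxy
  exact ⟨x, hx, y, by grind, hxy⟩

theorem Fork.touches_right_of_not_touches (h : Fork G U B C) (hR : X ∪ Y = U \ (B ∪ C))
    (hCY : ¬ Touches G C Y) : Touches G C X := by
  have hrest := h.symm.touches_left_rest
  rw [Set.union_comm C, ← hR, touches_union_right] at hrest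
  exact hrest.resolve_right hCY

theorem Fork.rest_touches (h : Fork G U B C) (hS : Touches G S U) (hSU : Disjoint S U) :
    Touches G (U \ (B ∪ C)) S := by
  obtain ⟨x, hx, y, hy, hxy⟩ := hS
  have hyB : y ∉ B := fun hyB =>
    Set.disjoint_left.1 hSU hx (mem_of_not_touches_compl h.not_touches_left hyB hxy.symm).1
  have hyC : y ∉ C := fun hyC =>
    Set.disjoint_left.1 hSU hx (mem_of_not_touches_compl h.not_touches_right hyC hxy.symm).1
  exact ⟨y, by grind, x, hx, hxy.symm⟩

theorem Fork.connectedSet_sdiff_right (h : Fork G U B C) : ConnectedSet G (U \ B) := by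
  have hdisj := h.disjoint
  have hsub := h.subset_right
  have hunion : U \ (B ∪ C) ∪ C = U \ B := by grind
  rw [← hunion]
  refine h.connectedSet_rest.union_of_touches h.connectedSet_right ?_
  rw [Set.union_comm]
  exact h.symm.touches_left_rest.symm

theorem Fork.subfork (h : Fork G U B C) (h' : Fork G B b c) : Fork G U b C := by
  have hsub := h.subset_left
  have hsub' := h'.subset_left
  have hdisj := h.disjoint
  have hnb {x y : V} (hx : x ∈ b) (hxy : G.Adj x y) : y ∈ B :=
    (mem_of_not_touches_compl h'.not_touches_left hx hxy).1
  refine { h with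
    connectedSet_left := h'.connectedSet_left
    connectedSet_rest := ?_
    subset_left := hsub'.trans hsub
    disjoint := hdisj.mono_left hsub'
    not_touches_left := fun ⟨x, hx, y, hy, hxy⟩ => hy (by grind [hnb hx hxy])
    not_touches_right := fun hC => h.not_touches_right (hC.mono_right (by grind)) }
  have hunion : U \ (B ∪ C) ∪ B \ b = U \ (b ∪ C) := by grind
  rw [← hunion]
  refine h.connectedSet_rest.union_of_touches h'.connectedSet_sdiff_right ?_
  obtain ⟨x, hx, y, hy, hxy⟩ := h.touches_left_rest
  exact ⟨y, hy, x, ⟨hx, fun hxb => hy.2 (Or.inl (hnb hxb hxy))⟩, hxy.symm⟩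

theorem Fork.unseparated (h : Fork G U B C) (hframe : Frame G S T U)
    (hcut : ∀ v ∈ U \ (B ∪ C), ∀ K ⊆ U \ (B ∪ C), v ∉ K →
      Touches G (B ∪ K) (((U \ (B ∪ C)) \ K) \ {v} ∪ S ∪ T)) :
    Unseparated G (U \ (B ∪ C)) S T B := by
  have hsub := h.subset_left
  have hrestS := h.rest_touches hframe.touches_left hframe.disjoint_left
  have hrestT := h.rest_touches hframe.touches_right hframe.disjoint_right
  have hBrest := h.connectedSet_left.union_of_touches h.connectedSet_rest h.touches_left_rest
  exact unseparated_of_connectedSet hframe.connectedSet_left hframe.connectedSet_right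
    h.connectedSet_left.1 hframe.disjoint
    ((Set.disjoint_union_left.2 ⟨hframe.disjoint_left, hframe.disjoint_right⟩).symm.mono_left
      (by grind))
    ((h.connectedSet_rest.union_of_touches hframe.connectedSet_left hrestS).union_of_touches
      hframe.connectedSet_right (hrestT.mono_left Set.subset_union_left))
    (hBrest.union_of_touches hframe.connectedSet_left (hrestS.mono_left Set.subset_union_right))
    (hBrest.union_of_touches hframe.connectedSet_right (hrestT.mono_left Set.subset_union_right))
    hcut

theorem Frame.mem_insert_of_not_touches (h : Frame G S T U) (hA : A ⊆ U)
    (hcut : ¬ Touches G A (((U \ B) \ K) \ {v} ∪ S ∪ T)) (hx : x ∈ A) (hxy : G.Adj x y) :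
    y ∈ insert v (B ∪ K) := by
  have := mem_of_not_touches_compl h.not_touches (hA hx) hxy
  have := not_touches_iff.1 hcut x hx y hxy
  grind

/-- Two cut vertices cutting off the two regions of a fork would give, by uncrossing, a cut vertex
of `G` or a cut of the rest of the fork. -/
theorem Fork.touches_or_touches (h : Fork G U B C) (hG : NoCutVertex G) (hframe : Frame G S T U)
    (hv : v ∈ U \ (B ∪ C)) (hK : K ⊆ U \ (B ∪ C)) (hK' : K' ⊆ U \ (B ∪ C)) :
    Touches G (B ∪ K) (((U \ (B ∪ C)) \ K) \ {v} ∪ S ∪ T) ∨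
      Touches G (C ∪ K') (((U \ (B ∪ C)) \ K') \ {v'} ∪ S ∪ T) := by
  by_contra! hcuts
  obtain ⟨hcut, hcut'⟩ := hcuts
  have hsubB := h.subset_left
  have hsubC := h.subset_right
  have hnb {x y : V} (hx : x ∈ B ∪ K) (hxy : G.Adj x y) : y ∈ insert v (B ∪ C ∪ K) :=
    hframe.mem_insert_of_not_touches (by grind) hcut hx hxy
  have hnb' {x y : V} (hx : x ∈ C ∪ K') (hxy : G.Adj x y) : y ∈ insert v' (B ∪ C ∪ K') :=
    hframe.mem_insert_of_not_touches (by grind) hcut' hx hxy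
  obtain ⟨s, hs⟩ := hframe.connectedSet_left.1
  have hsU := Set.disjoint_left.1 hframe.disjoint_left hs
  obtain ⟨t, ht⟩ := hframe.connectedSet_right.1
  have htU := Set.disjoint_left.1 hframe.disjoint_right ht
  have hst := hframe.disjoint.ne_of_mem hs ht
  have hout (w : V) :
      ¬ (v ∈ insert w (B ∪ C ∪ K ∪ K') ∧ v' ∈ insert w (B ∪ C ∪ K ∪ K')) := by
    rintro ⟨hw, hw'⟩
    obtain ⟨x, hx, y, hy, hxy⟩ := hG.touches_compl_insert_of_ne (A := B ∪ C ∪ K ∪ K')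
      (h.connectedSet_left.1.mono (by grind)) (by grind) (by grind) hst w
    rcases (by grind : x ∈ B ∪ K ∨ x ∈ C ∪ K') with hx | hx
    · grind [hnb hx hxy]
    · grind [hnb' hx hxy]
  have hv₁ : v ∉ K' := by grind [hout v']
  have hv₂ : v' ∉ K := by grind [hout v]
  have hvv' : v ≠ v' := by grind [hout v]
  have hinter : (K ∩ K').Nonempty := by
    obtain ⟨x, hx, y, hy, hxy⟩ := hG.touches_compl_insert (A := B ∪ K) (w := v) (s := s)
      (h.connectedSet_left.1.mono (by grind)) (by grind)
    have hyC : y ∈ C := by grind [hnb hx hxy]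
    have hxU := mem_of_not_touches_compl h.not_touches_right hyC hxy.symm
    have hxK' := hnb' (Or.inl hyC) hxy.symm
    exact ⟨x, by grind⟩
  obtain ⟨x, hx, y, hy, hxy⟩ :=
    h.connectedSet_rest.2 (K ∩ K') (by grind) hinter ⟨v, hv, by grind⟩
  grind [hnb (Or.inr hx.1) hxy, hnb' (Or.inr hx.2) hxy]

theorem Fork.hasTouchingPartition [Finite V] (h : Fork G U B C) (hG : NoCutVertex G)
    (hframe : Frame G S T U) :
    HasTouchingPartition G (U \ (B ∪ C)) S T B ∨ HasTouchingPartition G (U \ (B ∪ C)) S T C := by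
  by_cases hcut : ∀ v ∈ U \ (B ∪ C), ∀ K ⊆ U \ (B ∪ C), v ∉ K →
      Touches G (B ∪ K) (((U \ (B ∪ C)) \ K) \ {v} ∪ S ∪ T)
  · exact Or.inl (h.unseparated hframe hcut).hasTouchingPartition
  push Not at hcut
  obtain ⟨v, hv, K, hK, -, hcut⟩ := hcut
  rw [Set.union_comm B C] at hv hK hcut ⊢
  exact Or.inr (h.symm.unseparated hframe fun v' hv' K' hK' _ =>
    (h.symm.touches_or_touches hG hframe hv' hK' hK).resolve_right
      hcut).hasTouchingPartition

end Cuts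

/-! ### Splitting towards the triangle tree -/

section ThreeWaySplits

variable {V : Type*} {G : SimpleGraph V} {n : ℕ} {S T U S' T' W B C b c K X Y : Set V} {v : V}

/-- One step of the construction of a triangle tree: the regions of the split are framed again and
nested trees of depth `n`. -/
def TriangleStep (G : SimpleGraph V) (n : ℕ) (S T U : Set V) : Prop :=
  ∃ S' T' W U₁ U₂, TriangleSplit G S T U S' T' W U₁ U₂ ∧ Frame G S' W U₁ ∧ Frame G W T' U₂ ∧
    NestedTree G n U₁ ∧ NestedTree G n U₂

theorem TriangleStep.symm (h : TriangleStep G n S T U) : TriangleStep G n T S U := by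
  obtain ⟨S', T', W, U₁, U₂, hsplit, h₁, h₂, hU₁, hU₂⟩ := h
  exact ⟨T', S', W, U₂, U₁, hsplit.symm, h₂.symm, h₁.symm, hU₂, hU₁⟩

/-- The rest of a framed fork with regions `B` and `C` is covered by a connected extension `S'` of
`S`, a connected extension `T'` of `T` not touching `C`, and a connected set `W`. -/
structure ThreeWaySplit (G : SimpleGraph V) (S T U S' T' W B C : Set V) : Prop where
  fork : Fork G U B C
  grows_left : Grows G S S' U
  grows_right : Grows G T T' U
  connectedSet : ConnectedSet G W
  subset : W ⊆ U
  disjoint_sides : Disjoint S' T'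
  disjoint_middle : Disjoint W (S' ∪ T')
  disjoint_regions : Disjoint (S' ∪ T' ∪ W) (B ∪ C)
  cover : U ⊆ S' ∪ T' ∪ W ∪ (B ∪ C)
  not_touches : ¬ Touches G C T'
  touches_middle_left : Touches G W S'
  touches_middle_right : Touches G W C
  touches_left_right : Touches G S' C
  touches_right_left : Touches G T' B

theorem ThreeWaySplit.forkCover (h : ThreeWaySplit G S T U S' T' W B C) (hWT : Touches G W T')
    (hSB : Touches G S' B) : ForkCover G S T U S' (T' ∪ W) B C where
  fork := h.fork
  grows_left := h.grows_left
  grows_right := ⟨h.grows_right.subset.trans Set.subset_union_left,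
    by grind [h.grows_right.subset_union, h.subset],
    h.grows_right.connectedSet.union_of_touches h.connectedSet hWT.symm⟩
  disjoint_sides := Set.disjoint_union_right.2
    ⟨h.disjoint_sides, h.disjoint_middle.symm.mono_left Set.subset_union_left⟩
  disjoint_regions := by rw [← Set.union_assoc]; exact h.disjoint_regions
  subset := by rw [← Set.union_assoc S']; exact h.cover
  touches_left_left := hSB
  touches_left_right := h.touches_left_right
  touches_right_left := h.touches_right_left.mono_left Set.subset_union_left
  touches_right_right := h.touches_middle_right.mono_left Set.subset_union_right

theorem ThreeWaySplit.triangleSplit (h : ThreeWaySplit G S T U S' T' W B C)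
    (hWT : Touches G W T') : TriangleSplit G S T U S' T' W C B where
  grows_left := h.grows_left
  grows_right := h.grows_right
  subset := by grind [h.subset, h.fork.subset_left, h.fork.subset_right]
  disjoint_sides := h.disjoint_sides
  disjoint_left := by
    rw [Set.union_assoc, Set.union_comm C]
    exact Set.disjoint_union_right.2 ⟨(h.disjoint_middle.mono_right Set.subset_union_left).symm,
      h.disjoint_regions.mono_left (by grind)⟩
  disjoint_right := by
    rw [Set.union_assoc, Set.union_comm C]
    exact Set.disjoint_union_right.2 ⟨(h.disjoint_middle.mono_right Set.subset_union_right).symm,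
      h.disjoint_regions.mono_left (by grind)⟩
  disjoint_apex := by
    rw [Set.union_comm C]
    exact h.disjoint_regions.mono_left Set.subset_union_right
  disjoint_regions := h.fork.disjoint.symm
  connectedSet := h.connectedSet
  touches_left := h.touches_middle_left
  touches_right := hWT

theorem ThreeWaySplit.triangleStep (h : ThreeWaySplit G S T U S' T' W B C)
    (hWT : Touches G W T') (hSB : ¬ Touches G S' B) (hWB : Touches G W B)
    (hB : NestedTree G n B) (hC : NestedTree G n C) : TriangleStep G n S T U := by
  have hsplit := h.triangleSplit hWT
  refine ⟨S', T', W, C, B, hsplit, hsplit.frame_left ?_ h.touches_left_right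
    h.touches_middle_right, (hsplit.symm.frame_left ?_ h.touches_right_left hWB).symm, hC, hB⟩
  · rintro ⟨x, hx, y, hy, hxy⟩
    obtain ⟨hyU, hyB⟩ := mem_of_not_touches_compl h.fork.not_touches_right hx hxy
    have hyT := not_touches_iff.1 h.not_touches x hx y hxy
    have := h.cover hyU
    grind
  · rintro ⟨x, hx, y, hy, hxy⟩
    obtain ⟨hyU, hyC⟩ := mem_of_not_touches_compl h.fork.not_touches_left hx hxy
    have hyS : y ∉ S' := fun hyS => hSB ⟨y, hyS, x, hx, hxy.symm⟩
    have := h.cover hyU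
    grind

theorem Fork.touches_sdiff_left (h : Fork G B b c) (hX : Touches G X B) (hXB : Disjoint X B) :
    Touches G X (B \ b) := by
  obtain ⟨x, hx, y, hy, hxy⟩ := hX
  exact ⟨x, hx, y, ⟨hy, fun hyb => Set.disjoint_left.1 hXB hx
    (mem_of_not_touches_compl h.not_touches_left hyb hxy.symm).1⟩, hxy⟩

theorem ThreeWaySplit.disjoint_region (h : ThreeWaySplit G S T U S' T' W B C) :
    Disjoint (S' ∪ T' ∪ W) B :=
  h.disjoint_regions.mono_right Set.subset_union_left

theorem ThreeWaySplit.disjoint_union_sdiff (h : ThreeWaySplit G S T U S' T' W B C) (hb : b ⊆ B) :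
    Disjoint (S' ∪ T' ∪ W ∪ B \ b) (b ∪ C) :=
  Set.disjoint_union_left.2 ⟨h.disjoint_regions.mono_right (Set.union_subset_union_left C hb),
    Set.disjoint_union_right.2
      ⟨Set.disjoint_sdiff_left, h.fork.disjoint.mono_left Set.sdiff_subset⟩⟩

theorem ThreeWaySplit.subsplit (h : ThreeWaySplit G S T U S' T' W B C) (hb : Fork G B b c)
    (hR : X ∪ Y = B \ b) (hXY : Disjoint X Y) (hX : ConnectedSet G (W ∪ X))
    (hY : ConnectedSet G (T' ∪ Y)) (hbY : Touches G b (T' ∪ Y)) :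
    ThreeWaySplit G S T U S' (T' ∪ Y) (W ∪ X) b C := by
  have hBU := h.fork.subset_left
  have hXB : X ⊆ B \ b := hR ▸ Set.subset_union_left
  have hYB : Y ⊆ B \ b := hR ▸ Set.subset_union_right
  have hregion := h.disjoint_region
  exact
    { fork := h.fork.subfork hb
      grows_left := h.grows_left
      grows_right := ⟨h.grows_right.subset.trans Set.subset_union_left,
        by grind [h.grows_right.subset_union], hY⟩
      connectedSet := hX
      subset := by grind [h.subset]
      disjoint_sides := Set.disjoint_union_right.2
        ⟨h.disjoint_sides, hregion.mono (by grind) (by grind)⟩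
      disjoint_middle := by
        rw [← Set.union_assoc]
        exact Set.disjoint_union_left.2 ⟨Set.disjoint_union_right.2
          ⟨h.disjoint_middle, hregion.mono (by grind) (by grind)⟩, Set.disjoint_union_right.2
          ⟨(hregion.mono (by grind) (by grind)).symm, hXY⟩⟩
      disjoint_regions := (h.disjoint_union_sdiff hb.subset_left).mono_left (by grind)
      cover := fun x hx => by
        have := h.cover hx
        have := Set.ext_iff.1 hR x
        grind
      not_touches := by
        rintro ⟨x, hx, y, hy | hy, hxy⟩
        · exact h.not_touches ⟨x, hx, y, hy, hxy⟩
        · exact (mem_of_not_touches_compl h.fork.not_touches_right hx hxy).2 (hYB hy).1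
      touches_middle_left := h.touches_middle_left.mono_left Set.subset_union_left
      touches_middle_right := h.touches_middle_right.mono_left Set.subset_union_left
      touches_left_right := h.touches_left_right
      touches_right_left := hbY.symm }

theorem ThreeWaySplit.connectedSet_sdiff_union (h : ThreeWaySplit G S T U S' T' W B C)
    (hb : Fork G B b c) (hWB : Touches G W B) : ConnectedSet G (B \ b ∪ W ∪ T') := by
  have hregion := h.disjoint_region
  have hrestW := hb.touches_sdiff_left hWB (hregion.mono_left (by grind))
  have hrestT := hb.touches_sdiff_left h.touches_right_left (hregion.mono_left (by grind))
  exact (hb.connectedSet_sdiff_right.union_of_touches h.connectedSet hrestW.symm).union_of_touches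
    h.grows_right.connectedSet (hrestT.symm.mono_left Set.subset_union_left)

theorem ThreeWaySplit.exists_split_subfork [Finite V] (h : ThreeWaySplit G S T U S' T' W B C)
    (hb : Fork G B b c) (hWB : Touches G W B)
    (hcut : ∀ v ∈ B \ b, ∀ K ⊆ B \ b, v ∉ K →
      Touches G (b ∪ K) (((B \ b) \ K) \ {v} ∪ W ∪ T')) :
    ∃ T'' W', ThreeWaySplit G S T U S' T'' W' b C ∧ Touches G W' T'' ∧ Touches G W' b := by
  have hunion : b ∪ B \ b = B := Set.union_sdiff_cancel hb.subset_left
  have hrest := h.connectedSet_sdiff_union hb hWB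
  have hBW : ConnectedSet G (b ∪ B \ b ∪ W) := by
    rw [hunion]
    exact hb.connectedSet.union_of_touches h.connectedSet hWB.symm
  have hBT : ConnectedSet G (b ∪ B \ b ∪ T') := by
    rw [hunion]
    exact hb.connectedSet.union_of_touches h.grows_right.connectedSet h.touches_right_left.symm
  have hdisj : Disjoint B (W ∪ T') := (h.disjoint_region.mono_left (by grind)).symm
  obtain ⟨X, Y, hR, hXY, hX, hY, hbX, hbY⟩ := (unseparated_of_connectedSet h.connectedSet
    h.grows_right.connectedSet hb.connectedSet_left.1
    (h.disjoint_middle.mono_right Set.subset_union_right)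
    (by rwa [hunion]) hrest hBW hBT hcut).hasTouchingPartition
  have hsplit := h.subsplit hb hR hXY hX hY hbY
  refine ⟨T' ∪ Y, W ∪ X, hsplit, ?_, hbX.symm⟩
  have hconn : ConnectedSet G ((W ∪ X) ∪ (T' ∪ Y)) := by
    rwa [Set.union_union_union_comm, hR, Set.union_comm, ← Set.union_assoc]
  exact hconn.touches_of_union hX.1 hY.1 (hsplit.disjoint_middle.mono_right Set.subset_union_right)

theorem ConnectedSet.exists_component_not_touches [Finite V] (hb : ConnectedSet G b) (hbB : b ⊆ B)
    (hv : v ∈ B \ b) (hcut : ¬ Touches G (b ∪ K) (((B \ b) \ K) \ {v} ∪ X ∪ Y)) :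
    ∃ L, b ⊆ L ∧ IsComponent G (B \ {v}) L ∧ ¬ Touches G L (X ∪ Y) := by
  obtain ⟨L, hbL, hL⟩ := hb.exists_component_superset (Y := B \ {v}) (by grind)
  have hLB := hL.subset
  have hLK : L ⊆ b ∪ K := by
    by_contra hLK
    obtain ⟨x, hx, y, hy, hxy⟩ := hL.connectedSet.touches_of_inter_of_diff (K := b ∪ K)
      (hb.1.mono (by grind)) (Set.sdiff_nonempty.2 hLK)
    exact hcut ⟨x, hx.2, y, by grind, hxy⟩
  exact ⟨L, hbL, hL, fun hLXY => hcut (hLXY.mono hLK (by grind))⟩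

theorem ThreeWaySplit.component_touches (h : ThreeWaySplit G S T U S' T' W B C)
    (hG : NoCutVertex G) (hS : ConnectedSet G S) (hSU : Disjoint S U)
    (hK : IsComponent G (B \ {v}) K) (hv : v ∈ B) (hnb : ¬ Touches G K (W ∪ T')) :
    Touches G K S' := by
  have hBU := h.fork.subset_left
  have hKB := hK.subset
  obtain ⟨s, hs⟩ := hS.1
  have hsU := Set.disjoint_left.1 hSU hs
  obtain ⟨x, hx, y, hy, hxy⟩ := hG.touches_compl_insert (w := v) (s := s)
    hK.connectedSet.1 (by grind)
  have hyU := mem_of_not_touches_compl h.fork.not_touches_left (hKB hx).1 hxy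
  have hyWT := not_touches_iff.1 hnb x hx y hxy
  have hyB : y ∉ B := fun hyB => hy (Or.inr (hK.mem_of_adj hx hxy ⟨hyB, by grind⟩))
  have := h.cover hyU.1
  exact ⟨x, hx, y, by grind, hxy⟩

theorem ThreeWaySplit.connectedSet_sdiff_component (h : ThreeWaySplit G S T U S' T' W B C)
    (hWB : Touches G W B) (hB : ConnectedSet G B) (hv : v ∈ B)
    (hK : IsComponent G (B \ {v}) K) (hnb : ¬ Touches G K (W ∪ T')) :
    ConnectedSet G (B \ K ∪ W ∪ T') := by
  have touches_sdiff {X : Set V} (hX : Touches G X B) (hXWT : X ⊆ W ∪ T') :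
      Touches G (B \ K) X := by
    obtain ⟨x, hx, y, hy, hxy⟩ := hX
    exact ⟨y, ⟨hy, fun hyK => hnb ⟨y, hyK, x, hXWT hx, hxy.symm⟩⟩, x, hx, hxy.symm⟩
  have hBK : ConnectedSet G (B \ K) := hK.connectedSet_sdiff hB Set.sdiff_subset <| by
    rw [Set.sdiff_sdiff_cancel_left (Set.singleton_subset_iff.2 hv)]
    exact connectedSet_singleton v
  exact (hBK.union_of_touches h.connectedSet
    (touches_sdiff hWB Set.subset_union_left)).union_of_touches h.grows_right.connectedSet
    ((touches_sdiff h.touches_right_left Set.subset_union_right).mono_left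
      Set.subset_union_left)

theorem ThreeWaySplit.hasTouchingPartition_of_component [Finite V]
    (h : ThreeWaySplit G S T U S' T' W B C) (hG : NoCutVertex G) (hS : ConnectedSet G S)
    (hSU : Disjoint S U) (hb : Fork G B b c) (hWB : Touches G W B) (hv : v ∈ B \ b)
    (hK : IsComponent G (B \ {v}) K) (hbK : b ⊆ K) (hnb : ¬ Touches G K (W ∪ T')) :
    HasTouchingPartition G (K \ b) S' (B \ K ∪ W ∪ T') b := by
  have hKB : K ⊆ B := hK.subset.trans Set.sdiff_subset
  have hregion := h.disjoint_region
  have hY := h.connectedSet_sdiff_component hWB hb.connectedSet hv.1 hK hnb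
  have hunion : b ∪ K \ b = K := Set.union_sdiff_cancel hbK
  refine (hG.unseparated h.grows_left.connectedSet hY hb.connectedSet_left.1 ?_ ?_ ?_ ?_ ?_
    ?_).hasTouchingPartition
  · refine Set.disjoint_union_right.2 ⟨Set.disjoint_union_right.2 ⟨?_, ?_⟩, h.disjoint_sides⟩
    · exact hregion.mono (by grind) Set.sdiff_subset
    · exact h.disjoint_middle.symm.mono_left Set.subset_union_left
  · rw [hunion, Set.union_assoc (B \ K), Set.union_left_comm]
    exact Set.disjoint_union_right.2 ⟨Set.disjoint_sdiff_right,
      (hregion.mono (by grind) hKB).symm⟩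
  · have hset : B \ b ∪ W ∪ T' ∪ S' = K \ b ∪ S' ∪ (B \ K ∪ W ∪ T') := by grind
    rw [← hset]
    exact (h.connectedSet_sdiff_union hb hWB).union_of_touches h.grows_left.connectedSet
      (h.touches_middle_left.mono_left (by grind))
  · rw [hunion]
    exact hK.connectedSet.union_of_touches h.grows_left.connectedSet
      (h.component_touches hG hS hSU hK hv.1 hnb)
  · have hset : B ∪ W ∪ T' = b ∪ K \ b ∪ (B \ K ∪ W ∪ T') := by grind
    rw [← hset]
    exact (hb.connectedSet.union_of_touches h.connectedSet hWB.symm).union_of_touches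
      h.grows_right.connectedSet (h.touches_right_left.symm.mono_left Set.subset_union_left)
  · rw [hunion]
    rintro ⟨x, hx, y, hy, hxy⟩
    have hyU := mem_of_not_touches_compl h.fork.not_touches_left (hKB hx) hxy
    have := h.cover hyU.1
    grind

end ThreeWaySplits

section Dichotomy

variable {V : Type*} {G : SimpleGraph V} {n : ℕ} {S T U S' T' W B C b c K RX RY DS DT : Set V}
variable {v : V}

theorem ThreeWaySplit.forkCover_subfork (h : ThreeWaySplit G S T U S' T' W B C)
    (hb : Fork G B b c) (hKB : K ⊆ B) (hbK : b ⊆ K) (hR : RX ∪ RY = K \ b)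
    (hXY : Disjoint RX RY) (hX : ConnectedSet G (S' ∪ RX))
    (hY : ConnectedSet G (B \ K ∪ W ∪ T' ∪ RY)) (hbX : Touches G b (S' ∪ RX))
    (hbY : Touches G b (B \ K ∪ W ∪ T' ∪ RY)) :
    ForkCover G S T U (S' ∪ RX) (B \ K ∪ W ∪ T' ∪ RY) b C := by
  have hRX : RX ⊆ K \ b := hR ▸ Set.subset_union_left
  have hRY : RY ⊆ K \ b := hR ▸ Set.subset_union_right
  have hBU := h.fork.subset_left
  have hBC := Set.disjoint_left.1 h.fork.disjoint
  have hsides := Set.disjoint_left.1 h.disjoint_sides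
  have hmiddle := Set.disjoint_left.1 h.disjoint_middle
  have hregions := Set.disjoint_left.1 h.disjoint_regions
  exact
    { fork := h.fork.subfork hb
      grows_left := ⟨h.grows_left.subset.trans Set.subset_union_left,
        by grind [h.grows_left.subset_union], hX⟩
      grows_right := ⟨h.grows_right.subset.trans (by grind),
        by grind [h.grows_right.subset_union, h.subset], hY⟩
      disjoint_sides := by
        rw [Set.disjoint_left] at hXY ⊢
        intro x hx
        have := @hsides x
        have := @hmiddle x
        have := @hregions x
        have := @hRX x
        grind
      disjoint_regions := by
        rw [Set.disjoint_left]
        intro x hx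
        have := @hregions x
        have := @hRX x
        have := @hRY x
        grind
      subset := fun x hx => by
        have := h.cover hx
        have := Set.ext_iff.1 hR x
        grind
      touches_left_left := hbX.symm
      touches_left_right := h.touches_left_right.mono_left Set.subset_union_left
      touches_right_left := hbY.symm
      touches_right_right := h.touches_middle_right.mono_left (by grind) }

theorem ThreeWaySplit.hasForkCover_of_component [Finite V]
    (h : ThreeWaySplit G S T U S' T' W B C) (hG : NoCutVertex G) (hS : ConnectedSet G S)
    (hSU : Disjoint S U) (hb : Fork G B b c) (hWB : Touches G W B) (hv : v ∈ B \ b)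
    (hK : IsComponent G (B \ {v}) K) (hbK : b ⊆ K) (hnb : ¬ Touches G K (W ∪ T'))
    (hnested : NestedTree G n b) (hC : NestedTree G n C) : HasForkCover G n S T U := by
  obtain ⟨RX, RY, hR, hXY, hX, hY, hbX, hbY⟩ :=
    h.hasTouchingPartition_of_component hG hS hSU hb hWB hv hK hbK hnb
  exact ⟨S' ∪ RX, B \ K ∪ W ∪ T' ∪ RY, b, C, h.forkCover_subfork hb
    (hK.subset.trans Set.sdiff_subset) hbK hR hXY hX hY hbX hbY, hnested, hC⟩

theorem ThreeWaySplit.hasForkCover_or_triangleStep_of_touches [Finite V]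
    (h : ThreeWaySplit G S T U S' T' W B C) (hG : NoCutVertex G) (hS : ConnectedSet G S)
    (hSU : Disjoint S U) (hWB : Touches G W B) (hB : NestedTree G (n + 1) B)
    (hC : NestedTree G n C) : HasForkCover G n S T U ∨ TriangleStep G n S T U := by
  obtain ⟨b, c, hb, hnested, -⟩ := hB
  by_cases hcut : ∀ v ∈ B \ b, ∀ K ⊆ B \ b, v ∉ K →
      Touches G (b ∪ K) (((B \ b) \ K) \ {v} ∪ W ∪ T')
  · obtain ⟨T'', W', hsplit, hWT, hWb⟩ := h.exists_split_subfork hb hWB hcut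
    refine Or.inr (hsplit.triangleStep hWT ?_ hWb hnested hC)
    rintro ⟨x, hx, y, hy, hxy⟩
    exact Set.disjoint_left.1 (h.disjoint_region.mono_left (by grind)) hx
      (mem_of_not_touches_compl hb.not_touches_left hy hxy.symm).1
  · push Not at hcut
    obtain ⟨v, hv, K, -, -, hcut⟩ := hcut
    obtain ⟨L, hbL, hL, hnb⟩ :=
      hb.connectedSet_left.exists_component_not_touches hb.subset_left hv hcut
    exact Or.inl (h.hasForkCover_of_component hG hS hSU hb hWB hv hL hbL hnb hnested hC)

theorem ThreeWaySplit.hasForkCover_or_triangleStep [Finite V]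
    (h : ThreeWaySplit G S T U S' T' W B C) (hG : NoCutVertex G) (hS : ConnectedSet G S)
    (hSU : Disjoint S U) (hW : Touches G W (T' ∪ B)) (hBS : Touches G B (S' ∪ W))
    (hB : NestedTree G (n + 1) B) (hC : NestedTree G n C) :
    HasForkCover G n S T U ∨ TriangleStep G n S T U := by
  rw [touches_union_right] at hW hBS
  by_cases hWB : Touches G W B
  · exact h.hasForkCover_or_triangleStep_of_touches hG hS hSU hWB hB hC
  · exact Or.inl ⟨S', T' ∪ W, B, C, h.forkCover (hW.resolve_right hWB)
      (hBS.resolve_right fun hBW => hWB hBW.symm).symm, hB.of_succ, hC⟩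

theorem Fork.hasTouchingPartition_left [Finite V] (h : Fork G U B C) (hG : NoCutVertex G)
    (hframe : Frame G S T U) (hR : DS ∪ DT = U \ (B ∪ C)) (hST : Disjoint DS DT)
    (hS : ConnectedSet G (S ∪ DS)) (hT : ConnectedSet G (T ∪ DT)) (hBT : Touches G B (T ∪ DT))
    (hCT : ¬ Touches G C (T ∪ DT)) : HasTouchingPartition G DS S (T ∪ DT ∪ B) C := by
  have hBU := h.subset_left
  have hCU := h.subset_right
  have hDS : DS ⊆ U \ (B ∪ C) := hR ▸ Set.subset_union_left
  have hDT : DT ⊆ U \ (B ∪ C) := hR ▸ Set.subset_union_right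
  have hU : DS ∪ DT ∪ (B ∪ C) = U := by
    rw [hR, Set.sdiff_union_of_subset (Set.union_subset hBU hCU)]
  have hdisj := Set.disjoint_left.1 h.disjoint
  have hUC : U \ C = DS ∪ DT ∪ B := by grind
  have hSU := hframe.disjoint_left
  have hTU := hframe.disjoint_right
  have hCDS : Touches G C DS :=
    h.touches_right_of_not_touches hR fun hC => hCT (hC.mono_right Set.subset_union_right)
  have hrestS := h.rest_touches hframe.touches_left hSU
  have hrestT := h.rest_touches hframe.touches_right hTU
  refine (hG.unseparated hframe.connectedSet_left (hT.union_of_touches h.connectedSet_left hBT.symm)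
    h.connectedSet_right.1 ?_ ?_ ?_ ?_ ?_ ?_).hasTouchingPartition
  · exact (Set.disjoint_union_right.2 ⟨hframe.disjoint, hSU⟩).mono_right (by grind)
  · refine Set.disjoint_union_right.2 ⟨hSU.symm.mono_left (by grind), ?_⟩
    rw [Set.union_assoc]
    refine Set.disjoint_union_right.2 ⟨hTU.symm.mono_left (by grind), ?_⟩
    rw [Set.disjoint_left] at hST ⊢
    grind
  · have hset : U \ C ∪ S ∪ T = DS ∪ S ∪ (T ∪ DT ∪ B) := by grind
    rw [← hset]
    exact (h.symm.connectedSet_sdiff_right.union_of_touches hframe.connectedSet_left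
      (hrestS.mono_left (by grind))).union_of_touches hframe.connectedSet_right
      (hrestT.mono_left (by grind))
  · have hset : C ∪ (S ∪ DS) = C ∪ DS ∪ S := by grind
    rw [← hset]
    exact h.connectedSet_right.union_of_touches hS (hCDS.mono_right Set.subset_union_right)
  · have hset : U ∪ T = C ∪ DS ∪ (T ∪ DT ∪ B) := by grind
    rw [← hset]
    exact h.connectedSet.union_of_touches hframe.connectedSet_right hframe.touches_right.symm
  · have hset : S ∪ T ∪ U = C ∪ DS ∪ S ∪ (T ∪ DT ∪ B) := by grind
    rw [← hset]
    exact fun htouch => hframe.not_touches (htouch.mono_left (by grind))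

theorem Fork.threeWaySplit (h : Fork G U B C) (hframe : Frame G S T U)
    (hR : DS ∪ DT = U \ (B ∪ C)) (hST : Disjoint DS DT) (hS : ConnectedSet G (S ∪ DS))
    (hT : ConnectedSet G (T ∪ DT)) (hBT : Touches G B (T ∪ DT))
    (hCT : ¬ Touches G C (T ∪ DT)) (hDS : RX ∪ RY = DS) (hXY : Disjoint RX RY)
    (hX : ConnectedSet G (S ∪ RX)) (hCX : Touches G C (S ∪ RX)) (hW : IsComponent G RY W)
    (hCW : Touches G C W) : ThreeWaySplit G S T U (S ∪ DS \ W) (T ∪ DT) W B C := by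
  have hWRY := hW.subset
  have hRYDS : RY ⊆ DS := hDS ▸ Set.subset_union_right
  have hWDS : W ⊆ DS := hWRY.trans hRYDS
  have hRXW : RX ⊆ DS \ W := Set.subset_sdiff.2
    ⟨hDS ▸ Set.subset_union_left, hXY.mono_right hWRY⟩
  have hDSU : DS ⊆ U \ (B ∪ C) := hR ▸ Set.subset_union_left
  have hDTU : DT ⊆ U \ (B ∪ C) := hR ▸ Set.subset_union_right
  have hBCU : B ∪ C ⊆ U := Set.union_subset h.subset_left h.subset_right
  have hSW : Disjoint S W := hframe.disjoint_left.mono_right (by grind)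
  have hsdiff : (S ∪ DS) \ W = S ∪ DS \ W := by rw [Set.union_sdiff_distrib, hSW.sdiff_eq_left]
  obtain ⟨s, hs⟩ := hframe.connectedSet_left.1
  refine
    { fork := h
      grows_left := ⟨Set.subset_union_left, by grind, ?_⟩
      grows_right := ⟨Set.subset_union_left, by grind, hT⟩
      connectedSet := hW.connectedSet
      subset := by grind
      disjoint_sides := hframe.disjoint_union_union (by grind) (by grind)
        (hST.mono_left Set.sdiff_subset)
      disjoint_middle := Set.disjoint_union_right.2 ⟨Set.disjoint_union_right.2
        ⟨hSW.symm, Set.disjoint_sdiff_right⟩, Set.disjoint_union_right.2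
        ⟨hframe.disjoint_right.symm.mono_left (by grind), hST.mono_left hWDS⟩⟩
      disjoint_regions := (hframe.disjoint_union_sdiff hBCU).mono_left (by grind)
      cover := fun x hx => by
        have := Set.ext_iff.1 hR x
        grind
      not_touches := hCT
      touches_middle_left := (hS.2 W (by grind) hW.connectedSet.1
        ⟨s, Or.inl hs, Set.disjoint_left.1 hSW hs⟩).mono_right hsdiff.subset
      touches_middle_right := hCW.symm
      touches_left_right := hCX.symm.mono_left (by grind)
      touches_right_left := hBT.symm }
  rw [← hsdiff]
  refine hW.connectedSet_sdiff hS (hRYDS.trans Set.subset_union_right) ?_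
  rwa [← hDS, ← Set.union_assoc, Set.union_sdiff_cancel_right]
  exact (Set.disjoint_union_left.2 ⟨hframe.disjoint_left.mono_right (by grind), hXY⟩).le_bot

theorem Fork.hasForkCover_or_triangleStep_of_not_touches [Finite V] (h : Fork G U B C)
    (hG : NoCutVertex G) (hframe : Frame G S T U) (hR : DS ∪ DT = U \ (B ∪ C))
    (hST : Disjoint DS DT) (hS : ConnectedSet G (S ∪ DS)) (hT : ConnectedSet G (T ∪ DT))
    (hBS : Touches G B (S ∪ DS)) (hBT : Touches G B (T ∪ DT)) (hCT : ¬ Touches G C (T ∪ DT))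
    (hB : NestedTree G (n + 1) B) (hC : NestedTree G n C) :
    HasForkCover G n S T U ∨ TriangleStep G n S T U := by
  obtain ⟨RX, RY, hDS, hXY, hX, hY, hCX, hCY⟩ :=
    h.hasTouchingPartition_left hG hframe hR hST hS hT hBT hCT
  have hDSU : DS ⊆ U \ (B ∪ C) := hR ▸ Set.subset_union_left
  have hRYDS : RY ⊆ DS := hDS ▸ Set.subset_union_right
  have hCRY : Touches G C RY := by
    rw [touches_union_right, touches_union_right] at hCY
    refine hCY.resolve_left (not_or.2 ⟨hCT, ?_⟩)
    exact fun hCB => h.not_touches_right (hCB.mono_right (by grind))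
  obtain ⟨c, hc, w, hw, hcw⟩ := hCRY
  obtain ⟨W, hwW, hW⟩ := exists_component_of_mem G hw
  have hsplit := h.threeWaySplit hframe hR hST hS hT hBT hCT hDS hXY hX hCX hW ⟨c, hc, w, hwW, hcw⟩
  have hBRY : Disjoint B RY := by
    have : Disjoint B (U \ (B ∪ C)) := Set.disjoint_sdiff_right.mono_left Set.subset_union_left
    exact this.mono_right (hRYDS.trans hDSU)
  have hWTB : Touches G W (T ∪ DT ∪ B) :=
    (hW.touches_sdiff hY Set.subset_union_right (h.connectedSet_left.1.mono
      (Set.subset_sdiff.2 ⟨by grind, hBRY⟩))).mono_right (by grind)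
  exact hsplit.hasForkCover_or_triangleStep hG hframe.connectedSet_left hframe.disjoint_left hWTB
    (hBS.mono_right (by grind)) hB hC

theorem Fork.forkCover (h : Fork G U B C) (hframe : Frame G S T U)
    (hR : DS ∪ DT = U \ (B ∪ C)) (hST : Disjoint DS DT) (hS : ConnectedSet G (S ∪ DS))
    (hT : ConnectedSet G (T ∪ DT)) (hBS : Touches G B (S ∪ DS)) (hBT : Touches G B (T ∪ DT))
    (hCS : Touches G C (S ∪ DS)) (hCT : Touches G C (T ∪ DT)) :
    ForkCover G S T U (S ∪ DS) (T ∪ DT) B C := by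
  have hDSU : DS ⊆ U \ (B ∪ C) := hR ▸ Set.subset_union_left
  have hDTU : DT ⊆ U \ (B ∪ C) := hR ▸ Set.subset_union_right
  have hBCU : B ∪ C ⊆ U := Set.union_subset h.subset_left h.subset_right
  exact
    { fork := h
      grows_left := ⟨Set.subset_union_left, by grind, hS⟩
      grows_right := ⟨Set.subset_union_left, by grind, hT⟩
      disjoint_sides := hframe.disjoint_union_union (by grind) (by grind) hST
      disjoint_regions := (hframe.disjoint_union_sdiff hBCU).mono_left (by grind)
      subset := fun x hx => by
        have := Set.ext_iff.1 hR x
        grind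
      touches_left_left := hBS.symm
      touches_left_right := hCS.symm
      touches_right_left := hBT.symm
      touches_right_right := hCT.symm }

theorem Fork.hasForkCover_or_triangleStep_of_hasTouchingPartition [Finite V] (h : Fork G U B C)
    (hG : NoCutVertex G) (hframe : Frame G S T U)
    (hpart : HasTouchingPartition G (U \ (B ∪ C)) S T B)
    (hB : NestedTree G (n + 1) B) (hC : NestedTree G n C) :
    HasForkCover G n S T U ∨ TriangleStep G n S T U := by
  obtain ⟨DS, DT, hR, hST, hS, hT, hBS, hBT⟩ := hpart
  by_cases hCT : Touches G C (T ∪ DT)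
  · by_cases hCS : Touches G C (S ∪ DS)
    · exact Or.inl ⟨S ∪ DS, T ∪ DT, B, C,
        h.forkCover hframe hR hST hS hT hBS hBT hCS hCT, hB.of_succ, hC⟩
    · rw [Set.union_comm DS] at hR
      exact (h.hasForkCover_or_triangleStep_of_not_touches hG hframe.symm hR hST.symm hT hS hBT hBS
        hCS hB hC).imp HasForkCover.symm TriangleStep.symm
  · exact h.hasForkCover_or_triangleStep_of_not_touches hG hframe hR hST hS hT hBS hBT hCT hB hC

theorem Frame.apexStep_or_triangleStep [Finite V] (h : Frame G S T U) (hG : NoCutVertex G)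
    (hU : NestedTree G (n + 2) U) : ApexStep G n S T U ∨ TriangleStep G n S T U := by
  obtain ⟨B, C, hfork, hB, hC⟩ := hU
  have hstep : HasForkCover G n S T U ∨ TriangleStep G n S T U := by
    rcases hfork.hasTouchingPartition hG h with hpart | hpart
    · exact hfork.hasForkCover_or_triangleStep_of_hasTouchingPartition hG h hpart hB hC.of_succ
    · rw [Set.union_comm] at hpart
      exact hfork.symm.hasForkCover_or_triangleStep_of_hasTouchingPartition hG h hpart hC hB.of_succ
  exact hstep.imp_left fun hcover => hcover.apexStep h.connectedSet_right h.disjoint_right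

end Dichotomy

section Local

variable {V : Type*} {G : SimpleGraph V} {n i m : ℕ} {S T U : Set V}

theorem ApexStep.apexTree_or_triangleTree (h : ApexStep G n S T U) (hT : ConnectedSet G T)
    (hTU : Disjoint T U)
    (ih : ∀ S T U : Set V, NestedTree G n U → Frame G S T U →
      ApexTree G i S T U ∨ TriangleTree G m S T U) :
    ApexTree G (i + 1) S T U ∨ TriangleTree G m S T U := by
  obtain ⟨S', T₁, T₂, U₁, U₂, hsplit, hframe₁, hframe₂, hU₁, hU₂⟩ := h
  have triangleTree {T₁ U₁ : Set V} (hframe : Frame G S' T₁ U₁) (hTT₁ : Touches G T T₁)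
      (hT₁U : T₁ ⊆ U) (hU₁U : U₁ ⊆ U) (h : TriangleTree G m S' T₁ U₁) : TriangleTree G m S T U :=
    have hunion := hT.union_of_touches hframe.connectedSet_right hTT₁
    (h.enlarge_right hframe.connectedSet_right.1 Set.subset_union_right hunion
      (Set.disjoint_union_right.2 ⟨hsplit.disjoint_sides, hframe.disjoint⟩)
      (Set.disjoint_union_left.2 ⟨hTU.mono_right hU₁U, hframe.disjoint_right⟩)).of_grows
      hsplit.grows_left ⟨Set.subset_union_left, by grind, hunion⟩ hU₁U
  have hsub := hsplit.subset
  rcases ih S' T₁ U₁ hU₁ hframe₁ with hapex₁ | htriangle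
  · rcases ih S' T₂ U₂ hU₂ hframe₂ with hapex₂ | htriangle
    · exact Or.inl ⟨S', T, T₁, T₂, U₁, U₂, hsplit, hapex₁, hapex₂⟩
    · exact Or.inr (triangleTree hframe₂ hsplit.touches₂ (by grind) (by grind) htriangle)
  · exact Or.inr (triangleTree hframe₁ hsplit.touches₁ (by grind) (by grind) htriangle)

theorem TriangleStep.apexTree_or_triangleTree (h : TriangleStep G n S T U)
    (ih : ∀ S T U : Set V, NestedTree G n U → Frame G S T U →
      ApexTree G i S T U ∨ TriangleTree G m S T U) :
    ApexTree G i S T U ∨ TriangleTree G (m + 1) S T U := by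
  obtain ⟨S', T', W, U₁, U₂, hsplit, hframe₁, hframe₂, hU₁, hU₂⟩ := h
  have hsub := hsplit.subset
  have hS' := hsplit.grows_left
  have hT' := hsplit.grows_right
  have hsides := hsplit.disjoint_sides
  rcases ih S' W U₁ hU₁ hframe₁ with hapex | htriangle₁
  · have hunion := hT'.connectedSet.union_of_touches hframe₁.connectedSet_right
      hsplit.touches_right.symm
    refine Or.inl ((hapex.enlarge_right hframe₁.connectedSet_right.1 Set.subset_union_right hunion
      (Set.disjoint_union_right.2 ⟨hsides, hframe₁.disjoint⟩)
      (Set.disjoint_union_left.2 ⟨hsplit.disjoint_right.mono_right (by grind),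
        hframe₁.disjoint_right⟩)).of_grows hS' ⟨?_, ?_, hunion⟩ (by grind))
    · exact hT'.subset.trans Set.subset_union_left
    · grind [hT'.subset_union]
  rcases ih W T' U₂ hU₂ hframe₂ with hapex | htriangle₂
  · have hunion := hS'.connectedSet.union_of_touches hframe₂.connectedSet_left
      hsplit.touches_left.symm
    refine Or.inl ((hapex.enlarge_left hframe₂.connectedSet_left.1 Set.subset_union_right hunion
      (Set.disjoint_union_left.2 ⟨hsides, hframe₂.disjoint⟩)
      (Set.disjoint_union_left.2 ⟨hsplit.disjoint_left.mono_right (by grind),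
        hframe₂.disjoint_left⟩)).of_grows ⟨?_, ?_, hunion⟩ hT' (by grind))
    · exact hS'.subset.trans Set.subset_union_left
    · grind [hS'.subset_union]
  exact Or.inr ⟨S', T', W, U₁, U₂, hsplit, htriangle₁, htriangle₂⟩

theorem Frame.apexTree_zero (h : Frame G S T U) (hU : ConnectedSet G U) : ApexTree G 0 S T U :=
  ⟨S, T ∪ U, h.connectedSet_left.grows, ⟨Set.subset_union_left, subset_rfl,
    h.connectedSet_right.union_of_touches hU h.touches_right⟩,
    Set.disjoint_union_right.2 ⟨h.disjoint, h.disjoint_left⟩,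
    h.touches_left.mono_right Set.subset_union_right⟩

theorem exists_nestedTree_imp_apexTree_or_triangleTree (i m : ℕ) :
    ∃ h, ∀ (V : Type*) [Finite V] (G : SimpleGraph V) (S T U : Set V), NoCutVertex G →
      NestedTree G h U → Frame G S T U → ApexTree G i S T U ∨ TriangleTree G m S T U := by
  induction i generalizing m with
  | zero => exact ⟨0, fun V _ G S T U _ hU hframe => Or.inl (hframe.apexTree_zero hU)⟩
  | succ i ihi =>
    induction m with
    | zero => exact ⟨0, fun V _ G S T U _ _ _ => Or.inr trivial⟩
    | succ m ihm =>
      obtain ⟨a, ha⟩ := ihi (m + 1)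
      obtain ⟨b, hb⟩ := ihm
      refine ⟨max a b + 2, fun V _ G S T U hG hU hframe => ?_⟩
      rcases hframe.apexStep_or_triangleStep hG hU with hstep | hstep
      · exact hstep.apexTree_or_triangleTree hframe.connectedSet_right hframe.disjoint_right
          fun S T U hU => ha V G S T U hG (hU.mono (le_max_left a b))
      · exact hstep.apexTree_or_triangleTree
          fun S T U hU => hb V G S T U hG (hU.mono (le_max_right a b))

end Local

/-! ### Apex trees contain the graphs that become forests after deleting a vertex -/

section Forests

variable {W V : Type*} {P : SimpleGraph W} {G : SimpleGraph V} {s : Set W} {v w p : W} {i j n : ℕ}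
variable {S T U S' T' A A' B C U₁ U₂ : Set V} {f R : W → Set V}

attribute [local grind =] Set.union_subset_iff Set.disjoint_union_left Set.disjoint_union_right

/-- Inside `U`, the sets `S` and `T` grow to `S'` and `T'`, and a connected set `B` touching `T'` is
found, leaving a region `U₁` for `S'` and `B` and a region `U₂` for `S'` and `T'`. This attaches the
new node `B` to the tree node `T'`, to which further nodes can be attached later. -/
structure LeafSplit (G : SimpleGraph V) (S T U S' T' B U₁ U₂ : Set V) : Prop where
  grows_left : Grows G S S' U
  grows_right : Grows G T T' U
  subset : B ∪ U₁ ∪ U₂ ⊆ U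
  disjoint_left : Disjoint S' (T' ∪ B ∪ U₁ ∪ U₂)
  disjoint_right : Disjoint T' (B ∪ U₁ ∪ U₂)
  disjoint_child : Disjoint B (U₁ ∪ U₂)
  disjoint_regions : Disjoint U₁ U₂
  connectedSet : ConnectedSet G B
  touches : Touches G T' B

/-- If the two children are disjoint then the second one is merged into `T'`. -/
theorem ApexSplit.leafSplit {T₁ T₂ : Set V} (h : ApexSplit G S T U S' T' T₁ T₂ U₁ U₂)
    (hdisj : Disjoint T₁ T₂) : LeafSplit G S T U S' (T' ∪ T₂) T₁ U₁ U₂ where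
  grows_left := h.grows_left
  grows_right :=
    { subset := h.grows_right.subset.trans Set.subset_union_left
      subset_union := by grind [h.grows_right.subset_union, h.subset]
      connectedSet := h.grows_right.connectedSet.union_of_touches h.connectedSet₂ h.touches₂ }
  subset := by grind [h.subset]
  disjoint_left := by grind [h.disjoint_sides, h.disjoint_left]
  disjoint_right := by grind [h.disjoint_right, h.disjoint_children]
  disjoint_child := h.disjoint_children.mono_left Set.subset_union_left
  disjoint_regions := h.disjoint_regions
  connectedSet := h.connectedSet₁
  touches := h.touches₁.mono_left Set.subset_union_left

/-- If the two children coincide then they are split once more on the side of `U₁`, and what they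
have grown to is merged into `T'`. -/
theorem ApexSplit.leafSplit_of_eq {T₁ T₁' C₁ C₂ V₁ V₂ S'' : Set V}
    (h : ApexSplit G S T U S' T' T₁ T₁ U₁ U₂)
    (h₁ : ApexSplit G S' T₁ U₁ S'' T₁' C₁ C₂ V₁ V₂) :
    LeafSplit G S T U S'' (T' ∪ T₁') C₁ V₁ U₂ where
  grows_left := h₁.grows_left.of_subset h.grows_left.subset h.grows_left.subset_union
    (by grind [h.subset])
  grows_right :=
    { subset := h.grows_right.subset.trans Set.subset_union_left
      subset_union := by
        grind [h.grows_right.subset_union, h.subset, h₁.grows_right.subset_union]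
      connectedSet := h.grows_right.connectedSet.union_of_touches h₁.grows_right.connectedSet
        (h.touches₁.mono_right h₁.grows_right.subset) }
  subset := by grind [h.subset, h₁.subset]
  disjoint_left := by
    grind [h.disjoint_sides, h.disjoint_left, h.disjoint_right, h.disjoint_regions,
      h₁.grows_left.subset_union, h₁.disjoint_sides, h₁.disjoint_left]
  disjoint_right := by
    grind [h.disjoint_right, h.disjoint_children, h.disjoint_regions, h₁.subset,
      h₁.grows_right.subset_union, h₁.disjoint_right]
  disjoint_child := by grind [h.disjoint_regions, h₁.subset, h₁.disjoint_children]
  disjoint_regions := h.disjoint_regions.mono_left (by grind [h₁.subset])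
  connectedSet := h₁.connectedSet₁
  touches := h₁.touches₁.mono_left Set.subset_union_right

theorem ApexTree.exists_leafSplit (h : ApexTree G (j + 2) S T U) :
    ∃ S' T' B U₁ U₂, LeafSplit G S T U S' T' B U₁ U₂ ∧
      ApexTree G j S' B U₁ ∧ ApexTree G j S' T' U₂ := by
  obtain ⟨S', T', T₁, T₂, U₁, U₂, hsplit, h₁, h₂⟩ := h
  rcases hsplit.eq_or_disjoint with rfl | hdisj
  · obtain ⟨S'', T₁', C₁, C₂, V₁, V₂, hsplit₁, hC₁, -⟩ := h₁
    have hleaf := hsplit.leafSplit_of_eq hsplit₁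
    have hgrow := hsplit₁.grows_right.subset
    refine ⟨S'', T' ∪ T₁', C₁, V₁, U₂, hleaf, hC₁, ApexTree.mono ?_ (Nat.le_succ j)⟩
    exact (h₂.enlarge_left hsplit.grows_left.connectedSet.1 hsplit₁.grows_left.subset
      hsplit₁.grows_left.connectedSet (hleaf.disjoint_left.mono_right (by grind))
      (hleaf.disjoint_left.mono_right (by grind))).enlarge_right hsplit.connectedSet₁.1
      (hgrow.trans Set.subset_union_right) hleaf.grows_right.connectedSet
      (hleaf.disjoint_left.mono_right (by grind)) (hleaf.disjoint_right.mono_right (by grind))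
  · have hleaf := hsplit.leafSplit hdisj
    refine ⟨S', T' ∪ T₂, T₁, U₁, U₂, hleaf, h₁.mono (Nat.le_succ j),
      ApexTree.mono ?_ (Nat.le_succ j)⟩
    exact h₂.enlarge_right hsplit.connectedSet₂.1 Set.subset_union_right
      hleaf.grows_right.connectedSet (hleaf.disjoint_left.mono_right (by grind))
      (hleaf.disjoint_right.mono_right (by grind))

/-- A model in `G` of the subgraph of `P` induced on `s`, with branch sets `f u`, that can be
extended: there is a further connected set `A`, and inside the reserve `R u` of the vertex `u` an
apex tree with apex `A` and root `f u`. -/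
structure ApexModel (P : SimpleGraph W) (G : SimpleGraph V) (s : Set W) (j : ℕ) (A : Set V)
    (f R : W → Set V) : Prop where
  connectedSet_apex : ConnectedSet G A
  connectedSet : ∀ u ∈ s, ConnectedSet G (f u)
  disjoint_apex : ∀ u ∈ s, Disjoint A (f u ∪ R u)
  disjoint_reserve : ∀ u ∈ s, Disjoint (f u) (R u)
  pairwiseDisjoint : s.PairwiseDisjoint fun u => f u ∪ R u
  touches : ∀ u ∈ s, ∀ u' ∈ s, P.Adj u u' → Touches G (f u) (f u')
  apexTree : ∀ u ∈ s, ApexTree G j A (f u) (R u)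

theorem ApexModel.update [DecidableEq W] (h : ApexModel P G s j A f R) (hp : p ∈ s) (hij : i ≤ j)
    (hA : Grows G A A' (R p)) (hB : Grows G (f p) B (R p)) (hC : C ⊆ R p)
    (hA' : Disjoint A' (B ∪ C)) (hBC : Disjoint B C) (htree : ApexTree G i A' B C) :
    ApexModel P G s i A' (Function.update f p B) (Function.update R p C) := by
  have hsub (u : W) : f u ⊆ Function.update f p B u := by
    by_cases hu : u = p
    · subst hu; simpa using hB.subset
    · simp [hu]
  have hsub' (u : W) : Function.update f p B u ∪ Function.update R p C u ⊆ f u ∪ R u := by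
    by_cases hu : u = p
    · subst hu; simpa using Set.union_subset hB.subset_union (hC.trans Set.subset_union_right)
    · simp [hu]
  have hapex : ∀ u ∈ s, u ≠ p → Disjoint A' (f u ∪ R u) := fun u hu hup =>
    (Set.disjoint_union_left.2 ⟨h.disjoint_apex u hu,
      (h.pairwiseDisjoint hp hu (Ne.symm hup)).mono_left Set.subset_union_right⟩).mono_left
      hA.subset_union
  exact {
    connectedSet_apex := hA.connectedSet
    connectedSet := fun u hu => by
      by_cases hup : u = p
      · subst hup; simpa using hB.connectedSet
      · simpa [hup] using h.connectedSet u hu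
    disjoint_apex := fun u hu => by
      by_cases hup : u = p
      · subst hup; simpa using hA'
      · simpa [hup] using hapex u hu hup
    disjoint_reserve := fun u hu => by
      by_cases hup : u = p
      · subst hup; simpa using hBC
      · simpa [hup] using h.disjoint_reserve u hu
    pairwiseDisjoint := h.pairwiseDisjoint.mono hsub'
    touches := fun u hu u' hu' huu' => (h.touches u hu u' hu' huu').mono (hsub u) (hsub u')
    apexTree := fun u hu => by
      by_cases hup : u = p
      · subst hup; simpa using htree
      · have := hapex u hu hup
        simpa [hup] using ((h.apexTree u hu).enlarge_left h.connectedSet_apex.1 hA.subset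
          hA.connectedSet (by grind) (by grind)).mono hij }

theorem ApexModel.insert_of_notMem [DecidableEq W] (h : ApexModel P G s j A f R) (hw : w ∉ s)
    (hB : ConnectedSet G B) (hA : Disjoint A (B ∪ C)) (hBC : Disjoint B C)
    (hdisj : ∀ u ∈ s, Disjoint (f u ∪ R u) (B ∪ C)) (hadj : ∀ u ∈ s, P.Adj u w → Touches G (f u) B)
    (htree : ApexTree G j A B C) :
    ApexModel P G (insert w s) j A (Function.update f w B) (Function.update R w C) := by
  have hf : ∀ u ∈ s, Function.update f w B u = f u := fun u hu =>
    Function.update_of_ne (ne_of_mem_of_not_mem hu hw) ..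
  have hR : ∀ u ∈ s, Function.update R w C u = R u := fun u hu =>
    Function.update_of_ne (ne_of_mem_of_not_mem hu hw) ..
  exact {
    connectedSet_apex := h.connectedSet_apex
    connectedSet := Set.forall_mem_insert.2 ⟨by simpa using hB, fun u hu => by
      simpa [hf u hu] using h.connectedSet u hu⟩
    disjoint_apex := Set.forall_mem_insert.2 ⟨by simpa using hA, fun u hu => by
      simpa only [hf u hu, hR u hu] using h.disjoint_apex u hu⟩
    disjoint_reserve := Set.forall_mem_insert.2 ⟨by simpa using hBC, fun u hu => by
      simpa only [hf u hu, hR u hu] using h.disjoint_reserve u hu⟩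
    pairwiseDisjoint := by
      refine (Set.pairwiseDisjoint_insert_of_notMem hw).2
        ⟨fun u hu u' hu' hne => ?_, fun u hu => ?_⟩
      · simpa only [Function.onFun, hf u hu, hR u hu, hf u' hu', hR u' hu'] using
          h.pairwiseDisjoint hu hu' hne
      · simpa only [Function.update_self, hf u hu, hR u hu] using (hdisj u hu).symm
    touches := Set.forall_mem_insert.2 ⟨Set.forall_mem_insert.2 ⟨fun hww => absurd hww P.irrefl,
        fun u hu huw => by
          simpa only [Function.update_self, hf u hu] using (hadj u hu huw.symm).symm⟩,
      fun u hu => Set.forall_mem_insert.2 ⟨fun huw => by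
          simpa only [Function.update_self, hf u hu] using hadj u hu huw,
        fun u' hu' huu' => by simpa only [hf u hu, hf u' hu'] using h.touches u hu u' hu' huu'⟩⟩
    apexTree := Set.forall_mem_insert.2 ⟨by simpa using htree, fun u hu => by
      simpa only [hf u hu, hR u hu] using h.apexTree u hu⟩ }

theorem ApexModel.exists_insert_leaf (h : ApexModel P G s (j + 2) A f R) (hw : w ∉ s) (hp : p ∈ s)
    (hwp : ∀ u ∈ s, P.Adj w u → u = p) : ∃ A' f' R', ApexModel P G (insert w s) j A' f' R' := by
  classical
  obtain ⟨A', B, D, U₁, U₂, hsplit, hD, hB⟩ := (h.apexTree p hp).exists_leafSplit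
  have hold := h.update hp (Nat.le_add_right j 2) hsplit.grows_left hsplit.grows_right
    (by grind [hsplit.subset]) (hsplit.disjoint_left.mono_right (by grind))
    (hsplit.disjoint_right.mono_right (by grind)) hB
  refine ⟨A', _, _, hold.insert_of_notMem hw hsplit.connectedSet
    (hsplit.disjoint_left.mono_right (by grind))
    (hsplit.disjoint_child.mono_right (by grind)) (fun u hu => ?_) (fun u hu huw => ?_) hD⟩
  · by_cases hup : u = p
    · subst hup
      simp only [Function.update_self]
      grind [hsplit.disjoint_right, hsplit.disjoint_child, hsplit.disjoint_regions]
    · simp only [ne_eq, hup, not_false_eq_true, Function.update_of_ne]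
      exact (h.pairwiseDisjoint hu hp hup).mono_right (by grind [hsplit.subset])
  · obtain rfl := hwp u hu huw.symm
    simpa only [Function.update_self] using hsplit.touches

theorem exists_leaf_of_isAcyclic [Finite W] [Nonempty W] (hP : P.IsAcyclic) :
    ∃ w, ∀ a b, P.Adj w a → P.Adj w b → a = b := by
  obtain ⟨w, x, q, hq, hmax⟩ := Walk.exists_isPath_forall_isPath_length_le_length P
  have eq_snd (a : W) (ha : P.Adj w a) : a = q.snd := by
    by_cases haq : a ∈ q.support
    · exact hP.eq_snd_of_adj_start hq ha haq
    · simpa using hmax _ _ (Walk.cons ha.symm q) (by simp [hq, haq])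
  exact ⟨w, fun a b ha hb => (eq_snd a ha).trans (eq_snd b hb).symm⟩

theorem exists_leaf_of_isAcyclic_induce [Finite W] (hP : (P.induce s).IsAcyclic)
    (hs : s.Nonempty) : ∃ w ∈ s, ∀ a ∈ s, ∀ b ∈ s, P.Adj w a → P.Adj w b → a = b := by
  have := hs.to_subtype
  obtain ⟨w, hw⟩ := exists_leaf_of_isAcyclic hP
  exact ⟨w, w.2, fun a ha b hb hwa hwb => congrArg Subtype.val (hw ⟨a, ha⟩ ⟨b, hb⟩ hwa hwb)⟩

theorem exists_apexModel [Finite W] (hP : (P.induce s).IsAcyclic) (hs : s.ncard = n + 1)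
    (hS : ConnectedSet G S) (hT : ConnectedSet G T) (hSTU : Disjoint S (T ∪ U)) (hTU : Disjoint T U)
    (h : ApexTree G (j + 2 * n) S T U) : ∃ A f R, ApexModel P G s j A f R := by
  induction n generalizing s j with
  | zero =>
    obtain ⟨a, rfl⟩ := Set.ncard_eq_one.1 hs
    exact ⟨S, fun _ => T, fun _ => U, hS, fun _ _ => hT, fun _ _ => hSTU, fun _ _ => hTU,
      Set.pairwiseDisjoint_singleton .., by simp, fun _ _ => h⟩
  | succ n ih =>
    obtain ⟨w, hw, hleaf⟩ := exists_leaf_of_isAcyclic_induce hP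
      (Set.nonempty_of_ncard_ne_zero (by omega))
    have hcard : (s \ {w}).ncard = n + 1 := by rw [Set.ncard_sdiff_singleton_of_mem hw]; omega
    obtain ⟨A, f, R, hmodel⟩ := ih (j := j + 2)
      (hP.embedding (induceHomOfLE P (Set.sdiff_subset (s := s) (t := {w})))) hcard
      (by convert h using 1; ring)
    have hparent : ∃ p ∈ s \ {w}, ∀ u ∈ s \ {w}, P.Adj w u → u = p := by
      by_cases hp : ∃ p ∈ s \ {w}, P.Adj w p
      · obtain ⟨p, hp, hwp⟩ := hp
        exact ⟨p, hp, fun u hu hwu => hleaf u hu.1 p hp.1 hwu hwp⟩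
      · obtain ⟨p, hp'⟩ := Set.nonempty_of_ncard_ne_zero (s := s \ {w}) (by omega)
        exact ⟨p, hp', fun u hu hwu => absurd ⟨u, hu, hwu⟩ hp⟩
    obtain ⟨p, hp, hwp⟩ := hparent
    simpa only [Set.insert_sdiff_singleton, Set.insert_eq_of_mem hw] using
      hmodel.exists_insert_leaf (by simp) hp hwp

/-- The reserves are used up to make every branch set touch the apex. -/
theorem ApexModel.exists_touches (h : ApexModel P G s 0 A f R) (t : Finset W) (hts : ↑t ⊆ s) :
    ∃ A' f' R', ApexModel P G s 0 A' f' R' ∧ ∀ u ∈ t, Touches G A' (f' u) := by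
  classical
  induction t using Finset.induction_on with
  | empty => exact ⟨A, f, R, h, by simp⟩
  | insert p t hpt ih =>
    obtain ⟨A', f', R', h', htouch⟩ := ih (by grind)
    have hp : p ∈ s := hts (by simp)
    obtain ⟨A'', B, hA, hB, hdisj, hAB⟩ := h'.apexTree p hp
    refine ⟨A'', _, _, h'.update hp le_rfl hA hB (Set.empty_subset _) (by simpa using hdisj)
      (Set.disjoint_empty B) ⟨A'', B, hA.connectedSet.grows, hB.connectedSet.grows, hdisj, hAB⟩,
      fun u hu => ?_⟩
    by_cases hup : u = p
    · subst hup; simpa only [Function.update_self] using hAB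
    · simpa only [ne_eq, hup, not_false_eq_true, Function.update_of_ne] using
        (htouch u (by simpa [hup] using hu)).mono_left hA.subset

theorem isMinor_of_connectedSet (f : W → Set V) (hf : ∀ u, ConnectedSet G (f u))
    (hdisj : Pairwise (Function.onFun Disjoint f))
    (hadj : ∀ u u', P.Adj u u' → Touches G (f u) (f u')) : IsMinor P G :=
  ⟨f, fun u => (hf u).1, fun u => (hf u).induce_connected, fun _ _ h => hdisj h, hadj⟩

theorem ApexModel.isMinor [Finite W] (h : ApexModel P G {v}ᶜ 0 A f R) : IsMinor P G := by
  classical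
  obtain ⟨A', f', R', h', htouch⟩ := h.exists_touches (Set.toFinite {v}ᶜ).toFinset (by simp)
  replace htouch : ∀ u ≠ v, Touches G A' (f' u) := by simpa using htouch
  have hA' : ∀ u ≠ v, Disjoint A' (f' u) := fun u hu =>
    (h'.disjoint_apex u hu).mono_right Set.subset_union_left
  refine isMinor_of_connectedSet (Function.update f' v A') (fun u => ?_) (fun u u' hne => ?_)
    (fun u u' huu' => ?_)
  · by_cases hu : u = v
    · subst hu; simpa using h'.connectedSet_apex
    · simpa [hu] using h'.connectedSet u hu
  · by_cases hu : u = v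
    · subst hu; simpa [Function.onFun, hne.symm] using hA' u' hne.symm
    by_cases hu' : u' = v
    · subst hu'; simpa [Function.onFun, hu] using (hA' u hu).symm
    · simpa [Function.onFun, hu, hu'] using
        (h'.pairwiseDisjoint hu hu' hne).mono Set.subset_union_left Set.subset_union_left
  · by_cases hu : u = v
    · subst hu; simpa [huu'.ne'] using htouch u' huu'.ne'
    by_cases hu' : u' = v
    · subst hu'; simpa [hu] using (htouch u hu).symm
    · simpa [hu, hu'] using h'.touches u hu u' hu' huu'

/-- `G` contains a model of an apex tree with `k` stages, on some disjoint connected sets. -/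
def HasApexTree (G : SimpleGraph V) (k : ℕ) : Prop :=
  ∃ S T U, ConnectedSet G S ∧ ConnectedSet G T ∧ Disjoint S (T ∪ U) ∧ Disjoint T U ∧
    ApexTree G k S T U

theorem exists_hasApexTree_imp_isMinor [Finite W] (hP : (P.induce {v}ᶜ).IsAcyclic) :
    ∃ k, ∀ (V : Type*) (G : SimpleGraph V), HasApexTree G k → IsMinor P G := by
  refine ⟨2 * (({v}ᶜ : Set W).ncard - 1), fun V G ⟨S, T, U, hS, hT, hSTU, hTU, h⟩ => ?_⟩
  rcases Nat.eq_zero_or_pos ({v}ᶜ : Set W).ncard with hcard | hcard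
  · have hW : ∀ u, u = v := by
      simpa [Set.eq_empty_iff_forall_notMem] using (Set.ncard_eq_zero (Set.toFinite _)).1 hcard
    have : Subsingleton W := ⟨fun u u' => (hW u).trans (hW u').symm⟩
    exact isMinor_of_connectedSet (fun _ => S) (fun _ => hS)
      (fun u u' hne => absurd (Subsingleton.elim u u') hne)
      (fun u u' huu' => absurd (Subsingleton.elim u u') huu'.ne)
  · obtain ⟨A, f, R, hmodel⟩ := exists_apexModel (j := 0) hP (Nat.sub_add_cancel hcard).symm
      hS hT hSTU hTU (by rwa [Nat.zero_add])
    exact hmodel.isMinor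

end Forests

/-! ### Menger's theorem -/

section Menger

variable {V : Type*} {G H : SimpleGraph V} {A A' B B' I K X : Set V} {k : ℕ} {g p q : V → Set V}
  {x y : V}

/-- The vertices of `K` with a neighbour outside `K`. -/
def boundary (G : SimpleGraph V) (K : Set V) : Set V :=
  {x ∈ K | ∃ y ∉ K, G.Adj x y}

theorem boundary_subset : boundary G K ⊆ K :=
  Set.sep_subset K _

/-- The sets `g i` for `i ∈ I` are pairwise disjoint, connected, and each of them meets both `A` and
`B`. Connected sets take the place of the paths of Menger's theorem. -/
structure IsSetLinkage (G : SimpleGraph V) (A B I : Set V) (g : V → Set V) : Prop where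
  connectedSet : ∀ i ∈ I, ConnectedSet G (g i)
  meets_left : ∀ i ∈ I, (g i ∩ A).Nonempty
  meets_right : ∀ i ∈ I, (g i ∩ B).Nonempty
  pairwiseDisjoint : I.PairwiseDisjoint g

/-- `A` and `B` are joined by a linkage of `k` sets. -/
def Linked (G : SimpleGraph V) (A B : Set V) (k : ℕ) : Prop :=
  ∃ I g, I.ncard = k ∧ IsSetLinkage G A B I g

theorem ConnectedSet.mono_graph (hA : ConnectedSet G A) (hGH : G ≤ H) : ConnectedSet H A := by
  refine ⟨hA.1, fun K hK hne hout => ?_⟩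
  obtain ⟨x, hx, y, hy, hxy⟩ := hA.2 K hK hne hout
  exact ⟨x, hx, y, hy, hGH hxy⟩

theorem ConnectedSet.subset_of_between (hA : ConnectedSet (G.between K K) A)
    (h : (A ∩ K).Nonempty) : A ⊆ K := by
  by_contra hAK
  obtain ⟨x, -, y, ⟨-, hy⟩, hxy⟩ := hA.touches_of_inter_of_diff h (Set.sdiff_nonempty.2 hAK)
  exact hy (hxy.2.elim And.right And.right)

theorem IsSetLinkage.symm (h : IsSetLinkage G A B I g) : IsSetLinkage G B A I g :=
  { h with meets_left := h.meets_right, meets_right := h.meets_left }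

theorem IsSetLinkage.mono (h : IsSetLinkage G A B I g) (hGH : G ≤ H) (hA : A ⊆ A') (hB : B ⊆ B') :
    IsSetLinkage H A' B' I g where
  connectedSet i hi := (h.connectedSet i hi).mono_graph hGH
  meets_left i hi := (h.meets_left i hi).mono (Set.inter_subset_inter_right _ hA)
  meets_right i hi := (h.meets_right i hi).mono (Set.inter_subset_inter_right _ hB)
  pairwiseDisjoint := h.pairwiseDisjoint

theorem Linked.symm (h : Linked G A B k) : Linked G B A k := by
  obtain ⟨I, g, hI, h⟩ := h
  exact ⟨I, g, hI, h.symm⟩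

theorem Linked.mono (h : Linked G A B k) (hGH : G ≤ H) (hA : A ⊆ A') (hB : B ⊆ B') :
    Linked H A' B' k := by
  obtain ⟨I, g, hI, h⟩ := h
  exact ⟨I, g, hI, h.mono hGH hA hB⟩

theorem Linked.exists_indexed_by_right [Finite V] (h : Linked G A B k) (hB : B.ncard ≤ k) :
    B.ncard = k ∧ ∃ g, IsSetLinkage G A B B g ∧ ∀ b ∈ B, b ∈ g b := by
  obtain ⟨I, g, rfl, h⟩ := h
  choose! t ht using h.meets_right
  have hinj : Set.InjOn t I := fun i hi j hj hij => h.pairwiseDisjoint.elim_set hi hj (t i)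
    (ht i hi).1 (hij ▸ (ht j hj).1)
  have himage : t '' I = B := by
    refine Set.eq_of_subset_of_ncard_le ?_ (by rwa [hinj.ncard_image])
    rintro _ ⟨i, hi, rfl⟩
    exact (ht i hi).2
  have hsurj : ∀ b ∈ B, ∃ i ∈ I, t i = b := fun b hb => by rwa [← himage] at hb
  choose! s hsI hts using hsurj
  refine ⟨by rw [← himage, hinj.ncard_image], g ∘ s,
    ⟨fun b hb => h.connectedSet _ (hsI b hb), fun b hb => h.meets_left _ (hsI b hb),
    fun b hb => h.meets_right _ (hsI b hb), fun b hb c hc hbc => ?_⟩, fun b hb => ?_⟩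
  · exact h.pairwiseDisjoint (hsI b hb) (hsI c hc) fun hs => hbc (by rw [← hts b hb, hs, hts c hc])
  · simpa only [Function.comp_apply, hts b hb] using (ht _ (hsI b hb)).1

theorem Linked.exists_indexed_by_left [Finite V] (h : Linked G A B k) (hA : A.ncard ≤ k) :
    A.ncard = k ∧ ∃ g, IsSetLinkage G A B A g ∧ ∀ a ∈ A, a ∈ g a := by
  obtain ⟨hcard, g, hg, hmem⟩ := h.symm.exists_indexed_by_right hA
  exact ⟨hcard, g, hg.symm, hmem⟩

theorem IsSetLinkage.glue (hp : IsSetLinkage G A X X p) (hq : IsSetLinkage G X B X q)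
    (hpmem : ∀ v ∈ X, v ∈ p v) (hqmem : ∀ v ∈ X, v ∈ q v) (hpK : ∀ v ∈ X, p v ⊆ K)
    (hqK : ∀ v ∈ X, q v ∩ K ⊆ {v}) : IsSetLinkage G A B X fun v => p v ∪ q v := by
  have disjoint_of_ne : ∀ u ∈ X, ∀ v ∈ X, u ≠ v → Disjoint (p u) (q v) := by
    refine fun u hu v hv huv => Set.disjoint_left.2 fun z hz hz' => ?_
    obtain rfl : z = v := hqK v hv ⟨hz', hpK u hu hz⟩
    exact huv (hp.pairwiseDisjoint.elim_set hu hv z hz (hpmem z hv))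
  refine ⟨fun v hv => ?_, fun v hv => ?_, fun v hv => ?_, fun u hu v hv huv => ?_⟩
  · exact (hp.connectedSet v hv).union_of_inter (hq.connectedSet v hv)
      ⟨v, hpmem v hv, hqmem v hv⟩
  · exact (hp.meets_left v hv).mono (Set.inter_subset_inter_left _ Set.subset_union_left)
  · exact (hq.meets_right v hv).mono (Set.inter_subset_inter_left _ Set.subset_union_right)
  · exact Set.disjoint_union_left.2
      ⟨Set.disjoint_union_right.2 ⟨hp.pairwiseDisjoint hu hv huv, disjoint_of_ne u hu v hv huv⟩,
        Set.disjoint_union_right.2 ⟨(disjoint_of_ne v hv u hu huv.symm).symm,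
          hq.pairwiseDisjoint hu hv huv⟩⟩

theorem IsSetLinkage.inter_subset_singleton
    (hq : IsSetLinkage (H.between Set.univ Kᶜ) A B I q) (hmem : ∀ v ∈ I, v ∈ q v)
    (hI : boundary H K ⊆ I) {v : V} (hv : v ∈ I) : q v ∩ K ⊆ {v} := by
  rintro z ⟨hz, hzK⟩
  by_contra hzv
  obtain ⟨z', hz', w, -, -, hzw⟩ := (hq.connectedSet v hv).exists_adj_of_subset
    (Set.singleton_subset_iff.2 hz) (Set.singleton_nonempty z) (hmem v hv) (Ne.symm hzv)
  obtain rfl : z = z' := hz'.symm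
  have hzI : z ∈ I := hI ⟨hzK, w, by simpa [between_adj, hzK] using hzw.2, hzw.1⟩
  exact hzv (hq.pairwiseDisjoint.elim_set hzI hv z (hmem z hzI) hz)

theorem IsSetLinkage.extend_left [DecidableEq V] (hq : IsSetLinkage G (insert y X) B (insert y X) q)
    (hymem : y ∈ q y) (hyX : y ∉ X) (hxy : G.Adj x y) (hmem : ∀ v ∈ X, v ∈ q v)
    (hx : ∀ v ∈ insert y X, v ≠ x → x ∉ q v) :
    IsSetLinkage G (insert x X) B (insert x X) (Function.update q x (insert x (q y))) := by
  have hqy := hq.connectedSet y (Set.mem_insert y X)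
  have disjoint_of_ne : ∀ v ∈ X, v ≠ x → Disjoint (insert x (q y)) (q v) := fun v hv hvx =>
    Set.disjoint_insert_left.2 ⟨hx v (Or.inr hv) hvx,
      hq.pairwiseDisjoint (Or.inl rfl) (Or.inr hv) (ne_of_mem_of_not_mem hv hyX).symm⟩
  refine ⟨fun v hv => ?_, fun v hv => ⟨v, ?_, hv⟩, fun v hv => ?_, fun u hu v hv huv => ?_⟩
  · rcases eq_or_ne v x with rfl | hvx
    · simpa only [Function.update_self] using hqy.insert_of_adj hymem hxy.symm
    · simpa only [Function.update_of_ne hvx] using hq.connectedSet v (Or.inr (hv.resolve_left hvx))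
  · rcases eq_or_ne v x with rfl | hvx
    · simp
    · simpa only [Function.update_of_ne hvx] using hmem v (hv.resolve_left hvx)
  · rcases eq_or_ne v x with rfl | hvx
    · simpa only [Function.update_self] using (hq.meets_right y (Set.mem_insert y X)).mono
        (Set.inter_subset_inter_left B (Set.subset_insert v (q y)))
    · simpa only [Function.update_of_ne hvx] using hq.meets_right v (Or.inr (hv.resolve_left hvx))
  · rcases eq_or_ne u x with rfl | hux
    · simpa only [Function.onFun, Function.update_self, Function.update_of_ne huv.symm] using
        disjoint_of_ne v (hv.resolve_left huv.symm) huv.symm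
    rcases eq_or_ne v x with rfl | hvx
    · simpa only [Function.onFun, Function.update_self, Function.update_of_ne huv] using
        (disjoint_of_ne u (hu.resolve_left huv) huv).symm
    · simpa only [Function.onFun, Function.update_of_ne hux, Function.update_of_ne hvx] using
        hq.pairwiseDisjoint (Or.inr (hu.resolve_left hux)) (Or.inr (hv.resolve_left hvx)) huv

/-- Two linkages, to and from a separator of `G - xy` smaller than `k`, glue to a linkage of `G`:
the set that ends in `x` is continued along the edge `xy`. -/
theorem Linked.glue [Finite V] (hHG : H ≤ G) (hxy : G.Adj x y) (hx : x ∈ K)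
    (hy : y ∉ K) (hcard : (K ∩ B ∪ boundary H K).ncard < k)
    (hp : Linked (G.between K K) A (insert x (K ∩ B ∪ boundary H K)) k)
    (hq : Linked (H.between Set.univ Kᶜ) (insert y (K ∩ B ∪ boundary H K)) B k) :
    Linked G A B k := by
  classical
  set Q := K ∩ B ∪ boundary H K
  have hQK : Q ⊆ K := Set.union_subset Set.inter_subset_left boundary_subset
  have hcard_insert (z : V) : (insert z Q).ncard ≤ k := (Set.ncard_insert_le z Q).trans hcard
  obtain ⟨hcardX, p, hp, hpmem⟩ := hp.exists_indexed_by_right (hcard_insert x)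
  obtain ⟨-, q, hq, hqmem⟩ := hq.exists_indexed_by_left (hcard_insert y)
  have hqK : ∀ v ∈ insert y Q, q v ∩ K ⊆ {v} := fun v hv => hq.inter_subset_singleton hqmem
    (Set.subset_union_right.trans (Set.subset_insert y Q)) hv
  have hq' := (hq.mono (between_le.trans hHG) subset_rfl subset_rfl).extend_left
    (hqmem y (Set.mem_insert y Q)) (fun h => hy (hQK h)) hxy (fun v hv => hqmem v (Or.inr hv))
    fun v hv hvx hxv => hvx (hqK v hv ⟨hxv, hx⟩).symm
  have hxQK : insert x Q ⊆ K := Set.insert_subset hx hQK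
  refine ⟨_, _, hcardX, (hp.mono between_le subset_rfl subset_rfl).glue (K := K) hq' hpmem
    (fun v hv => ?_) (fun v hv => (hp.connectedSet v hv).subset_of_between
      ⟨v, hpmem v hv, hxQK hv⟩) (fun v hv => ?_)⟩
  · rcases eq_or_ne v x with rfl | hvx
    · simp
    · simpa only [Function.update_of_ne hvx] using hqmem v (Or.inr (hv.resolve_left hvx))
  · rcases eq_or_ne v x with rfl | hvx
    · rw [Function.update_self]
      rintro z ⟨rfl | hz, hzK⟩
      · rfl
      · exact absurd (hqK y (Set.mem_insert y Q) ⟨hz, hzK⟩ ▸ hzK) hy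
    · simpa only [Function.update_of_ne hvx] using hqK v (Or.inr (hv.resolve_left hvx))

theorem exists_eq_of_ncard_boundary_deleteEdges_lt [Finite V] {e : Sym2 V}
    (h : (K ∩ B ∪ boundary (G.deleteEdges {e}) K).ncard < (K ∩ B ∪ boundary G K).ncard) :
    ∃ x ∈ K, ∃ y ∉ K, G.Adj x y ∧ e = s(x, y) := by
  by_contra! hne
  refine h.not_ge (Set.ncard_le_ncard (Set.union_subset_union_right _ ?_))
  rintro x ⟨hx, y, hy, hxy⟩
  exact ⟨hx, y, hy, deleteEdges_adj.2 ⟨hxy, (hne x hx y hy hxy).symm⟩⟩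

theorem inter_union_boundary_subset_between (J : Set V) :
    J ∩ K ∩ B ∪ boundary G (J ∩ K) ⊆
      J ∩ (K ∩ B ∪ boundary G K) ∪ boundary (G.between K K) J := by
  rintro v (⟨⟨hvJ, hvK⟩, hvB⟩ | ⟨⟨hvJ, hvK⟩, w, hw, hvw⟩)
  · exact Or.inl ⟨hvJ, Or.inl ⟨hvK, hvB⟩⟩
  by_cases hwK : w ∈ K
  · exact Or.inr ⟨hvJ, w, fun hwJ => hw ⟨hwJ, hwK⟩, hvw, Or.inl ⟨hvK, hwK⟩⟩
  · exact Or.inl ⟨hvJ, Or.inr ⟨hvK, w, hwK, hvw⟩⟩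

theorem union_boundary_subset_between {J : Set V} (hJ : K ∩ B ∪ boundary H K ⊆ J)
    (hGH : ∀ u ∈ J ∪ K, ∀ w ∉ J ∪ K, G.Adj u w → H.Adj u w) :
    (J ∪ K) ∩ B ∪ boundary G (J ∪ K) ⊆ J ∩ B ∪ boundary (H.between Set.univ Kᶜ) J := by
  rintro v (⟨hvJK, hvB⟩ | ⟨hvJK, w, hw, hvw⟩)
  · exact Or.inl ⟨hvJK.elim id fun hvK => hJ (Or.inl ⟨hvK, hvB⟩), hvB⟩
  · have hvw' := hGH v hvJK w hw hvw
    have hwK : w ∉ K := fun hwK => hw (Or.inr hwK)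
    exact Or.inr ⟨hvJK.elim id fun hvK => hJ (Or.inr ⟨hvK, w, hwK, hvw'⟩), w,
      fun hwJ => hw (Or.inl hwJ), hvw', Or.inl ⟨trivial, hwK⟩⟩

/-- **Menger's theorem**. The sets `K ∩ B ∪ boundary G K` with `A ⊆ K` are the separators of `A`
from `B`, each given by the side `K` on which `A` lies. -/
theorem linked_of_forall_superset [Finite V] (G : SimpleGraph V) (A B : Set V) (k : ℕ)
    (h : ∀ K, A ⊆ K → k ≤ (K ∩ B ∪ boundary G K).ncard) : Linked G A B k := by
  induction G using WellFoundedLT.induction generalizing A B with | _ G ih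
  rcases eq_or_ne G ⊥ with rfl | hG
  · obtain ⟨I, hI, hcard⟩ := Set.exists_subset_card_eq (h A subset_rfl)
    replace hI : I ⊆ A ∩ B := by simpa [boundary] using hI
    exact ⟨I, fun v => {v}, hcard, fun v _ => connectedSet_singleton v,
      fun v hv => ⟨v, rfl, (hI hv).1⟩, fun v hv => ⟨v, rfl, (hI hv).2⟩,
      fun u _ v _ huv => Set.disjoint_singleton.2 huv⟩
  obtain ⟨x₀, y₀, hxy₀⟩ := ne_bot_iff_exists_adj.1 hG
  have hlt : G.deleteEdges {s(x₀, y₀)} < G := (deleteEdges_le _).lt_of_ne fun hG => by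
    rw [← hG] at hxy₀
    simp at hxy₀
  by_cases hdel : ∀ K, A ⊆ K → k ≤ (K ∩ B ∪ boundary (G.deleteEdges {s(x₀, y₀)}) K).ncard
  · exact (ih _ hlt A B hdel).mono hlt.le subset_rfl subset_rfl
  push Not at hdel
  obtain ⟨K, hAK, hcard⟩ := hdel
  obtain ⟨x, hx, y, hy, hxy, heq⟩ :=
    exists_eq_of_ncard_boundary_deleteEdges_lt (hcard.trans_le (h K hAK))
  rw [heq] at hlt hcard
  have hbetween : G.between K K < G := between_le.lt_of_ne fun hG => by
    rw [← hG] at hxy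
    exact hy (hxy.2.elim And.right And.right)
  refine Linked.glue hlt.le hxy hx hy hcard ((ih _ hbetween A _ fun J hAJ => ?_))
    (ih _ (between_le.trans_lt hlt) _ B fun J hJ => ?_)
  · refine (h (J ∩ K) (Set.subset_inter hAJ hAK)).trans (Set.ncard_le_ncard
      ((inter_union_boundary_subset_between J).trans (Set.union_subset_union_left _
        (Set.inter_subset_inter_right J ?_))))
    rintro v (hv | ⟨hv, w, hw, hvw⟩)
    · exact Or.inr (Or.inl hv)
    by_cases hvx : v = x
    · exact Or.inl hvx
    · exact Or.inr (Or.inr ⟨hv, w, hw, deleteEdges_adj.2 ⟨hvw, by grind⟩⟩)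
  · refine (h (J ∪ K) (hAK.trans Set.subset_union_right)).trans (Set.ncard_le_ncard
      (union_boundary_subset_between ((Set.subset_insert y _).trans hJ)
        fun u _ w hw huw => deleteEdges_adj.2 ⟨huw, ?_⟩))
    grind [hJ (Set.mem_insert y _)]

end Menger

/-! ### Gluing outerplanar pieces along a triangle tree -/

section Pieces

variable {V W : Type*} {G : SimpleGraph V} {Q : SimpleGraph W} {n m : ℕ}
variable {A L R : Set W} {s t w x y : W} {S T U S' T' M U₁ U₂ : Set V} {f g : W → Set V}

/-- The vertices of `A` have all their neighbours in `A ∪ {s, t}`. The case `s = t` is allowed. -/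
structure IsPiece (Q : SimpleGraph W) (A : Set W) (s t : W) : Prop where
  left_notMem : s ∉ A
  right_notMem : t ∉ A
  mem_of_adj {x y : W} : x ∈ A → Q.Adj x y → y ∈ insert s (insert t A)

theorem IsPiece.symm (h : IsPiece Q A s t) : IsPiece Q A t s where
  left_notMem := h.right_notMem
  right_notMem := h.left_notMem
  mem_of_adj hx hxy := by rw [Set.insert_comm]; exact h.mem_of_adj hx hxy

/-- The piece `A` between `s` and `t` decomposes into a piece `L` between `s` and `w` and a piece
`R` between `w` and `t`. The vertex `w` lies in `A`, unless it is `s` or `t`. -/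
structure PieceSplit (Q : SimpleGraph W) (A : Set W) (s t w : W) (L R : Set W) : Prop where
  left : IsPiece Q L s w
  right : IsPiece Q R w t
  notMem_left : t ∉ L
  notMem_right : s ∉ R
  disjoint : Disjoint L R
  mem_iff (u : W) : u ∈ A ↔ u ∈ L ∨ u ∈ R ∨ u = w ∧ u ≠ s ∧ u ≠ t

theorem PieceSplit.symm (h : PieceSplit Q A s t w L R) : PieceSplit Q A t s w R L where
  left := h.right.symm
  right := h.left.symm
  notMem_left := h.notMem_right
  notMem_right := h.notMem_left
  disjoint := h.disjoint.symm
  mem_iff u := by rw [h.mem_iff]; tauto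

/-- `S` and `T` are the two adjacent branch sets on which a triangle tree in `U` is based. -/
structure IsBase (G : SimpleGraph V) (S T U : Set V) : Prop where
  connectedSet_left : ConnectedSet G S
  connectedSet_right : ConnectedSet G T
  disjoint : Disjoint S T
  disjoint_left : Disjoint S U
  disjoint_right : Disjoint T U
  touches : Touches G S T

theorem IsBase.symm (h : IsBase G S T U) : IsBase G T S U :=
  ⟨h.2, h.1, h.3.symm, h.5, h.4, h.6.symm⟩

/-- Branch sets in `S ∪ T ∪ U` for the piece `A` of `Q` and its ends `s` and `t`, those of the ends
extending `S` and `T`. They are empty for all other vertices; the edge `st` need not be modelled. -/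
structure PieceModel (Q : SimpleGraph W) (G : SimpleGraph V) (A : Set W) (s t : W) (S T U : Set V)
    (f : W → Set V) : Prop where
  left_subset : S ⊆ f s
  right_subset : T ⊆ f t
  subset (u : W) : f u ⊆ S ∪ T ∪ U
  connectedSet {u : W} : u ∈ insert s (insert t A) → ConnectedSet G (f u)
  eq_empty {u : W} : u ∉ insert s (insert t A) → f u = ∅
  disjoint : Pairwise (Function.onFun Disjoint f)
  touches {x y : W} : x ∈ A → y ∈ insert s (insert t A) → Q.Adj x y → Touches G (f x) (f y)

theorem PieceModel.symm (h : PieceModel Q G A s t S T U f) : PieceModel Q G A t s T S U f where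
  left_subset := h.right_subset
  right_subset := h.left_subset
  subset u := by rw [Set.union_comm T S]; exact h.subset u
  connectedSet hu := by rw [Set.insert_comm] at hu; exact h.connectedSet hu
  eq_empty hu := by rw [Set.insert_comm] at hu; exact h.eq_empty hu
  disjoint := h.disjoint
  touches hx hy := by rw [Set.insert_comm] at hy; exact h.touches hx hy

/-- Every triangle tree of depth `n` contains a model of the piece `A` on its base. -/
def Embeds (Q : SimpleGraph W) (G : SimpleGraph V) (n : ℕ) (A : Set W) (s t : W) : Prop :=
  ∀ S T U, IsBase G S T U → TriangleTree G n S T U → ∃ f, PieceModel Q G A s t S T U f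

theorem Embeds.mono (h : Embeds Q G m A s t) (hmn : m ≤ n) : Embeds Q G n A s t :=
  fun S T U hbase htree => h S T U hbase (htree.mono hmn)

theorem TriangleTree.symm (h : TriangleTree G n S T U) : TriangleTree G n T S U := by
  induction n generalizing S T U with
  | zero => trivial
  | succ n ih =>
    obtain ⟨S', T', M, U₁, U₂, hsplit, hleft, hright⟩ := h
    exact ⟨T', S', M, U₂, U₁, hsplit.symm, ih hright, ih hleft⟩

theorem Embeds.symm (h : Embeds Q G n A s t) : Embeds Q G n A t s := by
  intro S T U hbase htree
  obtain ⟨f, hf⟩ := h T S U hbase.symm htree.symm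
  exact ⟨f, hf.symm⟩

theorem embeds_empty : Embeds Q G n ∅ s t := by
  classical
  intro S T U hbase _
  refine ⟨fun u => {x | u = s ∧ x ∈ S ∨ u = t ∧ x ∈ T},
    fun x hx => Or.inl ⟨rfl, hx⟩, fun x hx => Or.inr ⟨rfl, hx⟩, fun u x => by grind,
    fun {u} hu => ?_, fun {u} hu => by grind, fun u u' hne => ?_, fun hx => hx.elim⟩
  · by_cases hst : s = t
    · convert hbase.connectedSet_left.union_of_touches hbase.connectedSet_right hbase.touches
      grind
    · obtain rfl | rfl : u = s ∨ u = t := by grind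
      · convert hbase.connectedSet_left
        grind
      · convert hbase.connectedSet_right
        grind
  · have := Set.disjoint_left.1 hbase.disjoint
    exact Set.disjoint_left.2 fun x => by grind

theorem TriangleSplit.isBase_left (h : TriangleSplit G S T U S' T' M U₁ U₂) :
    IsBase G S' M U₁ where
  connectedSet_left := h.grows_left.connectedSet
  connectedSet_right := h.connectedSet
  disjoint := h.disjoint_left.mono_right (by grind)
  disjoint_left := h.disjoint_left.mono_right (by grind)
  disjoint_right := h.disjoint_apex.mono_right (by grind)
  touches := h.touches_left.symm

theorem TriangleSplit.isBase_right (h : TriangleSplit G S T U S' T' M U₁ U₂) :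
    IsBase G M T' U₂ :=
  h.symm.isBase_left.symm

/-- A vertex used by both models lies in the common base `M`, hence in the branch set of `w`. -/
theorem PieceModel.disjoint_glue (hf : PieceModel Q G L s w S' M U₁ f)
    (hg : PieceModel Q G R w t M T' U₂ g) (h : TriangleSplit G S T U S' T' M U₁ U₂) {u u' : W}
    (hne : u ≠ u') : Disjoint (f u) (g u') := by
  have eq_of_mem {v : V} (hfu : v ∈ f u) (hgu : v ∈ g u') : v ∈ M := by
    have hside := Set.disjoint_left.1 h.disjoint_sides
    have hleft := Set.disjoint_left.1 h.disjoint_left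
    have hright := Set.disjoint_left.1 h.disjoint_right
    have hregion := Set.disjoint_left.1 h.disjoint_regions
    have := hf.subset u hfu
    have := hg.subset u' hgu
    grind
  refine Set.disjoint_left.2 fun v hfu hgu => hne ?_
  have hM := eq_of_mem hfu hgu
  have hu : u = w := hf.disjoint.eq (Set.not_disjoint_iff.2 ⟨v, hfu, hf.right_subset hM⟩)
  have hu' : u' = w := hg.disjoint.eq (Set.not_disjoint_iff.2 ⟨v, hgu, hg.left_subset hM⟩)
  rw [hu, hu']

theorem PieceModel.connectedSet_glue (hA : PieceSplit Q A s t w L R)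
    (hf : PieceModel Q G L s w S' M U₁ f) (hg : PieceModel Q G R w t M T' U₂ g)
    (hM : M.Nonempty) (htouch : Touches G S' T') {u : W} (hu : u ∈ insert s (insert t A)) :
    ConnectedSet G (f u ∪ g u) := by
  by_cases hL : u ∈ insert s (insert w L)
  · by_cases hR : u ∈ insert w (insert t R)
    · have hends : u = w ∨ u = s ∧ u = t := by
        have := Set.disjoint_left.1 hA.disjoint
        have := hA.notMem_left
        have := hA.notMem_right
        grind
      obtain rfl | ⟨rfl, rfl⟩ := hends
      · exact (hf.connectedSet hL).union_of_inter (hg.connectedSet hR)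
          (hM.mono (Set.subset_inter hf.right_subset hg.left_subset))
      · exact (hf.connectedSet hL).union_of_touches (hg.connectedSet hR)
          (htouch.mono hf.left_subset hg.right_subset)
    · rw [hg.eq_empty hR, Set.union_empty]
      exact hf.connectedSet hL
  · have hR : u ∈ insert w (insert t R) := by
      have := hA.mem_iff u
      grind
    rw [hf.eq_empty hL, Set.empty_union]
    exact hg.connectedSet hR

theorem PieceModel.touches_glue (hA : PieceSplit Q A s t w L R)
    (hf : PieceModel Q G L s w S' M U₁ f) (hg : PieceModel Q G R w t M T' U₂ g)
    (hS' : Touches G M S') (hT' : Touches G M T') (hx : x ∈ A)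
    (hy : y ∈ insert s (insert t A)) (hxy : Q.Adj x y) : Touches G (f x ∪ g x) (f y ∪ g y) := by
  have of_mem {x y : W} (hxy : Q.Adj x y) (hx : x ∈ L ∪ R) :
      Touches G (f x ∪ g x) (f y ∪ g y) := by
    rcases hx with hx | hx
    · exact (hf.touches hx (hA.left.mem_of_adj hx hxy) hxy).mono Set.subset_union_left
        Set.subset_union_left
    · exact (hg.touches hx (hA.right.mem_of_adj hx hxy) hxy).mono Set.subset_union_right
        Set.subset_union_right
  by_cases hxLR : x ∈ L ∪ R
  · exact of_mem hxy hxLR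
  by_cases hyLR : y ∈ L ∪ R
  · exact (of_mem hxy.symm hyLR).symm
  have := hA.mem_iff x
  have := hA.mem_iff y
  have := hxy.ne
  obtain rfl : x = w := by grind
  obtain rfl | rfl : y = s ∨ y = t := by grind
  · exact hS'.mono (hf.right_subset.trans Set.subset_union_left)
      (hf.left_subset.trans Set.subset_union_left)
  · exact hT'.mono (hf.right_subset.trans Set.subset_union_left)
      (hg.right_subset.trans Set.subset_union_right)

theorem Embeds.glue (hL : Embeds Q G n L s w) (hR : Embeds Q G n R w t)
    (hA : PieceSplit Q A s t w L R) : Embeds Q G (n + 1) A s t := by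
  rintro S T U hbase ⟨S', T', M, U₁, U₂, h, hleft, hright⟩
  obtain ⟨f, hf⟩ := hL S' M U₁ h.isBase_left hleft
  obtain ⟨g, hg⟩ := hR M T' U₂ h.isBase_right hright
  have hS := h.grows_left.subset
  have hT := h.grows_right.subset
  refine ⟨fun u => f u ∪ g u, hS.trans (hf.left_subset.trans Set.subset_union_left),
    hT.trans (hg.right_subset.trans Set.subset_union_right), fun u => ?_,
    fun hu => hf.connectedSet_glue hA hg h.connectedSet.1 (hbase.touches.mono hS hT) hu,
    fun {u} hu => ?_, fun u u' hne => ?_,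
    fun hx hy hxy => hf.touches_glue hA hg h.touches_left h.touches_right hx hy hxy⟩
  · have := h.grows_left.subset_union
    have := h.grows_right.subset_union
    have := h.subset
    have := hf.subset u
    have := hg.subset u
    grind
  · have := hA.mem_iff u
    rw [hf.eq_empty (by grind), hg.eq_empty (by grind), Set.union_empty]
  · exact Set.disjoint_union_left.2
      ⟨Set.disjoint_union_right.2 ⟨hf.disjoint hne, hf.disjoint_glue hg h hne⟩,
        Set.disjoint_union_right.2 ⟨(hf.disjoint_glue hg h hne.symm).symm, hg.disjoint hne⟩⟩

end Pieces

section Outerplanar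

variable {W : Type*} {Q : SimpleGraph W}
variable {A B L R Y Z P P' : Set W} {s t w : W}

theorem isMinor_completeBipartiteGraph {α β : Type*} (a : α → Set W) (b : β → Set W)
    (ha : ∀ i, ConnectedSet Q (a i)) (hb : ∀ j, ConnectedSet Q (b j))
    (haa : Pairwise (Function.onFun Disjoint a)) (hbb : Pairwise (Function.onFun Disjoint b))
    (hab : ∀ i j, Disjoint (a i) (b j)) (h : ∀ i j, Touches Q (a i) (b j)) :
    IsMinor (completeBipartiteGraph α β) Q := by
  refine isMinor_of_connectedSet (Sum.elim a b) (Sum.rec ha hb) ?_ ?_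
  · rintro (i | i) (j | j) hij
    · exact haa (by simpa using hij)
    · exact hab i j
    · exact (hab j i).symm
    · exact hbb (by simpa using hij)
  · rintro (i | i) (j | j) hij
    · simp at hij
    · exact h i j
    · exact (h j i).symm
    · simp at hij

/-- `P` is connected and contains neighbours of `s` and of `t`. -/
structure Joins (Q : SimpleGraph W) (s t : W) (P : Set W) : Prop where
  connectedSet : ConnectedSet Q P
  touches_left : Touches Q {s} P
  touches_right : Touches Q {t} P

theorem Joins.symm (h : Joins Q s t P) : Joins Q t s P :=
  ⟨h.1, h.3, h.2⟩

theorem isMinor_K23 (hst : s ≠ t) (hP : Joins Q s t P) (hP' : Joins Q s t P') (hZ : Joins Q s t Z)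
    (hPP' : Disjoint P P') (hPZ : Disjoint P Z) (hPZ' : Disjoint P' Z)
    (hs : s ∉ P ∪ P' ∪ Z) (ht : t ∉ P ∪ P' ∪ Z) : IsMinor K23 Q := by
  obtain ⟨hP, hsP, htP⟩ := hP
  obtain ⟨hP', hsP', htP'⟩ := hP'
  obtain ⟨hZ, hsZ, htZ⟩ := hZ
  refine isMinor_completeBipartiteGraph ![{s}, {t}] ![P, P', Z] ?_ ?_ ?_ ?_ ?_ ?_
  · simp [Fin.forall_fin_succ, connectedSet_singleton]
  · simp [Fin.forall_fin_succ, *]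
  · simp [Pairwise, Fin.forall_fin_succ, Function.onFun, hst, hst.symm]
  · simp [Pairwise, Fin.forall_fin_succ, Function.onFun, hPP', hPP'.symm, hPZ, hPZ.symm, hPZ',
      hPZ'.symm]
  · simp_all [Fin.forall_fin_succ]
  · simp [Fin.forall_fin_succ, *]

theorem isMinor_K4 (hst : Q.Adj s t) (hP : Joins Q s t P) (hP' : Joins Q s t P')
    (hPP' : Disjoint P P') (hs : s ∉ P ∪ P') (ht : t ∉ P ∪ P') (h : Touches Q P P') :
    IsMinor K4 Q := by
  obtain ⟨hP, hsP, htP⟩ := hP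
  obtain ⟨hP', hsP', htP'⟩ := hP'
  have hst' : Touches Q {s} {t} := ⟨s, rfl, t, rfl, hst⟩
  refine isMinor_of_connectedSet ![{s}, {t}, P, P'] ?_ ?_ ?_
  · simp [Fin.forall_fin_succ, connectedSet_singleton, *]
  · simp_all [Pairwise, Fin.forall_fin_succ, Function.onFun, hst.ne, hst.ne', hPP'.symm]
  · simp [K4, Fin.forall_fin_succ, hst', hst'.symm, h, h.symm, hsP, hsP.symm, hsP', hsP'.symm, htP,
      htP.symm, htP', htP'.symm]

/-- A piece whose ends are distinct and joined outside it, but not joined twice inside it. In an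
outerplanar graph this is the part on one side of a path through the outer cycle. -/
structure ThinPiece (Q : SimpleGraph W) (A : Set W) (s t : W) : Prop extends IsPiece Q A s t where
  ne : s ≠ t
  exists_return : ∃ Z, ConnectedSet Q Z ∧ s ∈ Z ∧ t ∈ Z ∧ Disjoint A Z
  not_disjoint {P P' : Set W} : P ⊆ A → P' ⊆ A → Joins Q s t P → Joins Q s t P' → ¬ Disjoint P P'

theorem ThinPiece.symm (h : ThinPiece Q A s t) : ThinPiece Q A t s where
  toIsPiece := h.toIsPiece.symm
  ne := h.ne.symm
  exists_return := by
    obtain ⟨Z, hZ, hs, ht, hAZ⟩ := h.exists_return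
    exact ⟨Z, hZ, ht, hs, hAZ⟩
  not_disjoint hPA hPA' hP hP' := h.not_disjoint hPA hPA' hP.symm hP'.symm

theorem ThinPiece.of_subset (h : ThinPiece Q A s t) (hB : IsPiece Q B s t) (hBA : B ⊆ A) :
    ThinPiece Q B s t where
  toIsPiece := hB
  ne := h.ne
  exists_return := by
    obtain ⟨Z, hZ, hs, ht, hAZ⟩ := h.exists_return
    exact ⟨Z, hZ, hs, ht, hAZ.mono_left hBA⟩
  not_disjoint hPB hPB' := h.not_disjoint (hPB.trans hBA) (hPB'.trans hBA)

theorem IsPiece.thinPiece_of_joins (h : IsPiece Q A s t) (hQ : ¬ IsMinor K23 Q) (hst : s ≠ t)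
    (hZ : Joins Q s t Z) (hs : s ∉ Z) (ht : t ∉ Z) (hAZ : Disjoint A Z) : ThinPiece Q A s t where
  toIsPiece := h
  ne := hst
  exists_return := by
    have hts : Touches Q {s} ({t} ∪ Z) := hZ.touches_left.mono_right Set.subset_union_right
    refine ⟨{s} ∪ ({t} ∪ Z), (connectedSet_singleton s).union_of_touches
      ((connectedSet_singleton t).union_of_touches hZ.connectedSet hZ.touches_right) hts,
      by simp, by simp, ?_⟩
    simp [h.left_notMem, h.right_notMem, hAZ]
  not_disjoint hPA hPA' hP hP' hPP' := hQ <| isMinor_K23 hst hP hP' hZ hPP'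
    (hAZ.mono_left hPA) (hAZ.mono_left hPA') (by grind [h.left_notMem]) (by grind [h.right_notMem])

theorem IsPiece.thinPiece_of_adj [Finite W] (h : IsPiece Q Y s t) (hQ : ¬ IsMinor K4 Q)
    (hY : ConnectedSet Q Y) (hst : Q.Adj s t) : ThinPiece Q Y s t where
  toIsPiece := h
  ne := hst.ne
  exists_return := ⟨{t, s}, (connectedSet_singleton s).insert_of_adj rfl hst, by simp, by simp,
    by simp [h.left_notMem, h.right_notMem]⟩
  not_disjoint {P P'} hPY hPY' hP hP' hPP' := by
    obtain ⟨K, hPK, hK⟩ := hP.connectedSet.exists_component_superset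
      (Y := Y \ P') (Set.subset_sdiff.2 ⟨hPY, hPP'⟩)
    have hYP : Y \ (Y \ P') = P' := Set.sdiff_sdiff_cancel_left hPY'
    have hKP' : Touches Q K P' := by
      have := hK.touches_sdiff hY Set.sdiff_subset (by rw [hYP]; exact hP'.connectedSet.1)
      rwa [hYP] at this
    have := hK.subset
    exact hQ <| isMinor_K4 hst ⟨hK.connectedSet, hP.touches_left.mono_right hPK,
      hP.touches_right.mono_right hPK⟩ hP' (Set.disjoint_sdiff_left.mono_left hK.subset)
      (by grind [h.left_notMem]) (by grind [h.right_notMem]) hKP'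

theorem PieceSplit.thinPiece_left [Finite W] (hsplit : PieceSplit Q A s t w L R)
    (hQ : ¬ IsMinor K23 Q) (h : ThinPiece Q A s t) (hA : ConnectedSet Q A) (hw : w ∈ A)
    (htA : Touches Q {t} A) : ThinPiece Q L s w := by
  obtain ⟨Z₀, hZ₀, hsZ₀, htZ₀, hAZ₀⟩ := h.exists_return
  obtain ⟨Z, htZ, hZ⟩ := exists_component_of_mem Q (Y := Z₀ \ {s}) ⟨htZ₀, h.ne.symm⟩
  obtain ⟨C, htC, hC⟩ := exists_component_of_mem Q (Y := R ∪ {t}) (Or.inr rfl)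
  have hZZ₀ := hZ.subset
  have hCR := hC.subset
  have hsA := h.left_notMem
  have htA' := h.right_notMem
  have hAZ₀ := Set.disjoint_left.1 hAZ₀
  have hLR := Set.disjoint_left.1 hsplit.disjoint
  have hwR := hsplit.right.left_notMem
  have htL := hsplit.notMem_left
  have hmem := hsplit.mem_iff
  have hsZ : Touches Q {s} Z := (hZ.touches_sdiff hZ₀ Set.sdiff_subset
    ⟨s, hsZ₀, by simp⟩).symm.mono_left (by grind)
  have hwC : Touches Q {w} C := by
    obtain ⟨x, hx, y, hy, hxy⟩ := hC.touches_sdiff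
      ((connectedSet_singleton t).union_of_touches hA htA) (by grind) ⟨w, by grind⟩
    have := hsplit.left.mem_of_adj (x := y) (y := x)
    obtain rfl : w = y := by grind [Q.adj_comm]
    exact ⟨w, rfl, x, hx, hxy.symm⟩
  refine hsplit.left.thinPiece_of_joins hQ (by grind) (Z := C ∪ Z)
    ⟨hC.connectedSet.union_of_inter hZ.connectedSet ⟨t, htC, htZ⟩,
      hsZ.mono_right Set.subset_union_right, hwC.mono_right Set.subset_union_left⟩ ?_ ?_ ?_
  · grind
  · grind
  · exact Set.disjoint_left.2 fun x => by grind

theorem ThinPiece.not_linked (h : ThinPiece Q A s t) :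
    ¬ Linked (Q.between A A) {x ∈ A | Q.Adj s x} {x ∈ A | Q.Adj t x} 2 := by
  rintro ⟨I, g, hI, hg⟩
  obtain ⟨i, j, hij, rfl⟩ := Set.ncard_eq_two.1 hI
  have hsub {i' : W} (hi : i' ∈ ({i, j} : Set W)) : g i' ⊆ A := by
    obtain ⟨x, hx, hxA, -⟩ := hg.meets_left _ hi
    exact (hg.connectedSet _ hi).subset_of_between ⟨x, hx, hxA⟩
  have hjoins {i' : W} (hi : i' ∈ ({i, j} : Set W)) : Joins Q s t (g i') := by
    obtain ⟨x, hx, -, hsx⟩ := hg.meets_left _ hi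
    obtain ⟨y, hy, -, hty⟩ := hg.meets_right _ hi
    exact ⟨(hg.connectedSet _ hi).mono_graph between_le, ⟨s, rfl, x, hx, hsx⟩, ⟨t, rfl, y, hy, hty⟩⟩
  have hi : i ∈ ({i, j} : Set W) := by simp
  have hj : j ∈ ({i, j} : Set W) := by simp
  exact h.not_disjoint (hsub hi) (hsub hj) (hjoins hi) (hjoins hj) (hg.pairwiseDisjoint hi hj hij)

theorem ThinPiece.exists_pieceSplit [Finite W] (h : ThinPiece Q A s t) (hA : Joins Q s t A) :
    ∃ w ∈ A, ∃ L R, PieceSplit Q A s t w L R := by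
  obtain ⟨K, hsK, hK⟩ : ∃ K, {x ∈ A | Q.Adj s x} ⊆ K ∧
      (K ∩ {x ∈ A | Q.Adj t x} ∪ boundary (Q.between A A) K).ncard < 2 := by
    by_contra! hK
    exact h.not_linked (linked_of_forall_superset _ _ _ 2 hK)
  set F := K ∩ {x ∈ A | Q.Adj t x} ∪ boundary (Q.between A A) K
  have mem_of_right {x : W} (hx : x ∈ A ∩ K) (hxt : Q.Adj x t) : x ∈ F :=
    Or.inl ⟨hx.2, hx.1, hxt.symm⟩
  have mem_of_out {x y : W} (hx : x ∈ A ∩ K) (hy : y ∈ A \ K) (hxy : Q.Adj x y) : x ∈ F :=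
    Or.inr ⟨hx.2, y, hy.2, by simp [between_adj, hx.1, hy.1, hxy]⟩
  have mem_of_left {x : W} (hx : x ∈ A) (hxs : Q.Adj x s) : x ∈ K := hsK ⟨hx, hxs.symm⟩
  obtain ⟨w, hwA, hw⟩ : ∃ w ∈ A ∩ K, w ∈ F := by
    by_cases hAK : A ⊆ K
    · obtain ⟨x, hx, htx⟩ := touches_singleton_left.1 hA.touches_right
      exact ⟨x, ⟨hx, hAK hx⟩, mem_of_right ⟨hx, hAK hx⟩ htx.symm⟩
    · obtain ⟨x, hx, hsx⟩ := touches_singleton_left.1 hA.touches_left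
      obtain ⟨a, ha, b, hb, hab⟩ := hA.connectedSet.touches_of_inter_of_diff
        ⟨x, hx, mem_of_left hx hsx.symm⟩ (Set.sdiff_nonempty.2 hAK)
      exact ⟨a, ha, mem_of_out ha hb hab⟩
  have eq_w {x : W} (hx : x ∈ F) : x = w :=
    (Set.ncard_le_one (Set.toFinite _)).1 (by omega) x hx w hw
  have hadj {x y : W} := h.mem_of_adj (x := x) (y := y)
  have := h.left_notMem
  have := h.right_notMem
  refine ⟨w, hwA.1, (A ∩ K) \ {w}, A \ K,
    ⟨by grind, by grind, fun {x y} hx hxy => ?_⟩, ⟨by grind, by grind, fun {x y} hx hxy => ?_⟩,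
    by grind, by grind, Set.disjoint_left.2 fun x hx hx' => hx'.2 hx.1.2, fun u => by grind⟩
  · have := hadj hx.1.1 hxy
    have hxw : x ≠ w := hx.2
    grind
  · have := hadj hx.1 hxy
    grind [Q.adj_comm]

end Outerplanar

section Extraction

variable {V W : Type*} {G : SimpleGraph V} {Q : SimpleGraph W} {n : ℕ}
variable {A L R X : Set W} {s t w : W} {S T U : Set V}

theorem IsPiece.of_isComponent (h : IsPiece Q A s t) (hX : IsComponent Q A X) :
    IsPiece Q X s t where
  left_notMem hs := h.left_notMem (hX.subset hs)
  right_notMem ht := h.right_notMem (hX.subset ht)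
  mem_of_adj {x y} hx hxy := by
    have := h.mem_of_adj (hX.subset hx) hxy
    have := hX.mem_of_adj hx hxy
    grind

theorem IsPiece.loop_of_not_touches (h : IsPiece Q A s t) (ht : ¬ Touches Q {t} A) :
    IsPiece Q A s s where
  left_notMem := h.left_notMem
  right_notMem := h.left_notMem
  mem_of_adj {x y} hx hxy := by
    have hyt : y ≠ t := fun hyt => ht ⟨t, rfl, x, hx, hyt ▸ hxy.symm⟩
    have := h.mem_of_adj hx hxy
    grind

theorem IsPiece.split_of_isComponent (h : IsPiece Q A s t) (hX : IsComponent Q A X)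
    (hXs : IsPiece Q X s s) : PieceSplit Q A s t s X (A \ X) where
  left := hXs
  right :=
    { left_notMem := fun hs => h.left_notMem hs.1
      right_notMem := fun ht => h.right_notMem ht.1
      mem_of_adj := fun {x y} hx hxy => by
        have := h.mem_of_adj hx.1 hxy
        have : y ∉ X := fun hy => hx.2 (hX.mem_of_adj hy hxy.symm hx.1)
        grind }
  notMem_left ht := h.right_notMem (hX.subset ht)
  notMem_right hs := h.left_notMem hs.1
  disjoint := Set.disjoint_sdiff_right
  mem_iff u := by
    have := hX.subset
    grind

theorem PieceSplit.ncard_left_lt [Finite W] (h : PieceSplit Q A s t w L R) (hw : w ∈ A) :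
    L.ncard < A.ncard :=
  Set.ncard_lt_ncard ⟨fun u hu => (h.mem_iff u).2 (Or.inl hu), fun hAL =>
    h.left.right_notMem (hAL hw)⟩

theorem PieceSplit.ncard_right_lt [Finite W] (h : PieceSplit Q A s t w L R) (hw : w ∈ A) :
    R.ncard < A.ncard :=
  h.symm.ncard_left_lt hw

/-- The piece `A` splits at one of its vertices into two thin pieces. -/
def HasThinSplit (Q : SimpleGraph W) (A : Set W) (s t : W) : Prop :=
  ∃ w ∈ A, ∃ L R, PieceSplit Q A s t w L R ∧ ThinPiece Q L s w ∧ ThinPiece Q R w t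

theorem ThinPiece.hasThinSplit [Finite W] (h : ThinPiece Q A s t) (hQ : ¬ IsMinor K23 Q)
    (hA : Joins Q s t A) : HasThinSplit Q A s t := by
  obtain ⟨w, hw, L, R, hsplit⟩ := h.exists_pieceSplit hA
  exact ⟨w, hw, L, R, hsplit, hsplit.thinPiece_left hQ h hA.connectedSet hw hA.touches_right,
    (hsplit.symm.thinPiece_left hQ h.symm hA.connectedSet hw hA.touches_left).symm⟩

theorem IsPiece.hasThinSplit [Finite W] (h : IsPiece Q A s s) (hQ : Outerplanar Q)
    (hA : ConnectedSet Q A) (hs : ∀ w ∈ A, Touches Q {s} (A \ {w})) : HasThinSplit Q A s s := by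
  obtain ⟨a, ha⟩ := hA.1
  obtain ⟨w, hw, hsw⟩ := touches_singleton_left.1 (hs a ha)
  obtain ⟨x, hx, hsx⟩ := touches_singleton_left.1 (hs w hw.1)
  obtain ⟨Y, hxY, hY⟩ := exists_component_of_mem Q hx
  have hYA := hY.subset
  have hsA := h.left_notMem
  have hwY : Touches Q {w} Y := (hY.touches_sdiff hA Set.sdiff_subset
    ⟨w, by grind⟩).symm.mono_left (by grind)
  have hjoins : Joins Q s w Y := ⟨hY.connectedSet, ⟨s, rfl, x, hxY, hsx⟩, hwY⟩
  have hL : IsPiece Q Y s w := ⟨by grind, by grind, fun {x y} hx hxy => by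
    have := h.mem_of_adj (hYA hx).1 hxy
    have := hY.mem_of_adj hx hxy
    grind⟩
  have hR : IsPiece Q ((A \ {w}) \ Y) w s := ⟨by grind, by grind, fun {x y} hx hxy => by
    have := h.mem_of_adj hx.1.1 hxy
    have : y ∉ Y := fun hy => hx.2 (hY.mem_of_adj hy hxy.symm hx.1)
    grind⟩
  exact ⟨w, hw.1, Y, (A \ {w}) \ Y, ⟨hL, hR, by grind, by grind, Set.disjoint_sdiff_right,
    fun u => by grind⟩, hL.thinPiece_of_adj hQ.1 hY.connectedSet hsw,
    hR.thinPiece_of_joins hQ.2 hsw.ne' hjoins.symm (by grind) (by grind) Set.disjoint_sdiff_left⟩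

/-- Pieces with fewer than `n` vertices embed in triangle trees of the depths found by induction. -/
structure EmbedsBelow (Q : SimpleGraph W) (G : SimpleGraph V) (n : ℕ) : Prop where
  loop {A : Set W} {s : W} : A.ncard < n → IsPiece Q A s s → Embeds Q G (2 * A.ncard) A s s
  thin {A : Set W} {s t : W} :
    A.ncard < n → ThinPiece Q A s t → Embeds Q G (2 * A.ncard + 1) A s t

theorem EmbedsBelow.of_hasThinSplit [Finite W] (ih : EmbedsBelow Q G A.ncard)
    (h : HasThinSplit Q A s t) : Embeds Q G (2 * A.ncard) A s t := by
  obtain ⟨w, hw, L, R, hsplit, hL, hR⟩ := h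
  have hLA := hsplit.ncard_left_lt hw
  have hRA := hsplit.ncard_right_lt hw
  exact (((ih.thin hLA hL).mono (n := 2 * A.ncard - 1) (by omega)).glue
    ((ih.thin hRA hR).mono (by omega)) hsplit).mono (by omega)

/-- The part `A` is attached at its cut vertex `w`, first to `w` alone. -/
theorem EmbedsBelow.of_not_touches [Finite W] (ih : EmbedsBelow Q G A.ncard)
    (h : IsPiece Q A s s) (hw : w ∈ A) (hsA : ¬ Touches Q {s} (A \ {w})) :
    Embeds Q G (2 * A.ncard) A s s := by
  have hs := h.left_notMem
  have hR : IsPiece Q (A \ {w}) w s := ⟨by grind, by grind, fun {x y} hx hxy => by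
    have := h.mem_of_adj hx.1 hxy
    grind⟩
  have hcard : (A \ {w}).ncard < A.ncard := Set.ncard_sdiff_singleton_lt_of_mem hw
  have hloop := ih.loop hcard (hR.loop_of_not_touches hsA)
  have hempty (x y : W) : IsPiece Q ∅ x y := ⟨id, id, fun hx => hx.elim⟩
  have hright : Embeds Q G (2 * (A \ {w}).ncard + 1) (A \ {w}) w s :=
    hloop.glue embeds_empty ⟨hR.loop_of_not_touches hsA, hempty w s, by grind, by grind, by simp,
      by grind⟩
  exact (embeds_empty.glue hright ⟨hempty s w, hR, by simp, by grind, by simp, by grind⟩).mono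
    (by omega)

theorem EmbedsBelow.of_isPiece [Finite W] (hQ : Outerplanar Q) (ih : EmbedsBelow Q G A.ncard)
    (h : IsPiece Q A s s) : Embeds Q G (2 * A.ncard) A s s := by
  obtain rfl | ⟨a, ha⟩ := A.eq_empty_or_nonempty
  · exact embeds_empty
  obtain ⟨X, haX, hX⟩ := exists_component_of_mem Q ha
  obtain rfl | hXA := hX.subset.eq_or_ssubset
  · by_cases hs : ∀ w ∈ X, Touches Q {s} (X \ {w})
    · exact ih.of_hasThinSplit (h.hasThinSplit hQ hX.connectedSet hs)
    · push Not at hs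
      obtain ⟨w, hw, hsw⟩ := hs
      exact ih.of_not_touches h hw hsw
  · have hXs := h.of_isComponent hX
    have hsplit := h.split_of_isComponent hX hXs
    have hlt := Set.ncard_lt_ncard hXA
    have hlt' : (A \ X).ncard < A.ncard := Set.ncard_lt_ncard ⟨by grind, by grind⟩
    exact (((ih.loop hlt hXs).mono (n := 2 * A.ncard - 1) (by omega)).glue
      ((ih.loop hlt' hsplit.right).mono (by omega)) hsplit).mono (by omega)


theorem EmbedsBelow.of_isComponent [Finite W] (hQ : Outerplanar Q)
    (ih : EmbedsBelow Q G A.ncard) (h : ThinPiece Q A s t) (hX : IsComponent Q A X)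
    (ht : ¬ Touches Q {t} X) : Embeds Q G (2 * A.ncard + 1) A s t := by
  have hXs := (h.toIsPiece.of_isComponent hX).loop_of_not_touches ht
  have hsplit := h.toIsPiece.split_of_isComponent hX hXs
  have hXA : Embeds Q G (2 * X.ncard) X s s := by
    obtain rfl | hlt := hX.subset.eq_or_ssubset
    · exact ih.of_isPiece hQ hXs
    · exact ih.loop (Set.ncard_lt_ncard hlt) hXs
  have hle : X.ncard ≤ A.ncard := Set.ncard_le_ncard hX.subset
  have hlt : (A \ X).ncard < A.ncard := by
    obtain ⟨x, hx⟩ := hX.connectedSet.1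
    exact Set.ncard_lt_ncard ⟨by grind, fun hAX => (hAX (hX.subset hx)).2 hx⟩
  exact (hXA.mono (n := 2 * A.ncard) (by omega)).glue
    ((ih.thin hlt (h.of_subset hsplit.right Set.sdiff_subset)).mono (by omega)) hsplit

theorem EmbedsBelow.of_thinPiece [Finite W] (hQ : Outerplanar Q) (ih : EmbedsBelow Q G A.ncard)
    (h : ThinPiece Q A s t) : Embeds Q G (2 * A.ncard + 1) A s t := by
  obtain rfl | ⟨a, ha⟩ := A.eq_empty_or_nonempty
  · exact embeds_empty
  by_cases hs : ∃ X, IsComponent Q A X ∧ ¬ Touches Q {s} X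
  · obtain ⟨X, hX, hs⟩ := hs
    exact Embeds.symm (ih.of_isComponent hQ h.symm hX hs)
  by_cases ht : ∃ X, IsComponent Q A X ∧ ¬ Touches Q {t} X
  · obtain ⟨X, hX, ht⟩ := ht
    exact ih.of_isComponent hQ h hX ht
  push Not at hs ht
  have hjoins {X : Set W} (hX : IsComponent Q A X) : Joins Q s t X :=
    ⟨hX.connectedSet, hs X hX, ht X hX⟩
  obtain ⟨X, -, hX⟩ := exists_component_of_mem Q ha
  have hXA : X = A := by
    refine hX.subset.antisymm fun b hb => ?_
    obtain ⟨Y, hbY, hY⟩ := exists_component_of_mem Q hb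
    obtain rfl | hXY := hX.eq_or_disjoint hY
    · exact hbY
    · exact absurd hXY (h.not_disjoint hX.subset hY.subset (hjoins hX) (hjoins hY))
  exact (ih.of_hasThinSplit (h.hasThinSplit hQ.2 (hXA ▸ hjoins hX))).mono (by omega)

theorem embedsBelow [Finite W] (hQ : Outerplanar Q) (n : ℕ) : EmbedsBelow Q G n := by
  induction n with
  | zero => exact ⟨fun h => absurd h (by omega), fun h => absurd h (by omega)⟩
  | succ n ih =>
    have ih' {A : Set W} (hA : A.ncard < n + 1) : EmbedsBelow Q G A.ncard :=
      ⟨fun hB => ih.loop (by omega), fun hB => ih.thin (by omega)⟩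
    exact ⟨fun hA => (ih' hA).of_isPiece hQ, fun hA => (ih' hA).of_thinPiece hQ⟩

theorem isMinor_of_triangleTree [Finite W] (hQ : Outerplanar Q) (hbase : IsBase G S T U)
    (h : TriangleTree G (2 * Nat.card W) S T U) : IsMinor Q G := by
  cases isEmpty_or_nonempty W with
  | inl hW => exact isMinor_of_connectedSet (fun _ => ∅) hW.elim hW.elim hW.elim
  | inr hW =>
    obtain ⟨r⟩ := hW
    have hpiece : IsPiece Q {r}ᶜ r r := ⟨by simp, by simp, fun _ _ => by simp; tauto⟩
    have hcard : 2 * ({r}ᶜ : Set W).ncard ≤ 2 * Nat.card W := by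
      have := Set.ncard_le_card ({r}ᶜ : Set W)
      omega
    obtain ⟨f, hf⟩ := ((embedsBelow hQ _).loop (Nat.lt_succ_self _) hpiece).mono hcard S T U hbase h
    have hall (u : W) : u ∈ insert r (insert r ({r}ᶜ : Set W)) := by simp; tauto
    refine isMinor_of_connectedSet f (fun u => hf.connectedSet (hall u)) hf.disjoint
      fun u u' huu' => ?_
    by_cases hu : u = r
    · exact (hf.touches (hu ▸ huu'.ne') (hall u) huu'.symm).symm
    · exact hf.touches hu (hall u') huu'

end Extraction

/-! ### Trees in graphs of large path-width -/

section Sweeps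

variable {V : Type*} {G : SimpleGraph V} {A K X Y Z : Set V} {k n : ℕ} {y : V}

/-- `A` is obtained from the empty set by adding vertices one at a time, in such a way that no set
on the way has a boundary of more than `k` vertices. -/
inductive Sweepable (G : SimpleGraph V) (k : ℕ) : Set V → Prop
  | empty : Sweepable G k ∅
  | step {X : Set V} {y : V} (hX : Sweepable G k X) (hy : y ∉ X)
      (hcard : (boundary G (insert y X)).ncard ≤ k) : Sweepable G k (insert y X)

theorem boundary_empty : boundary G ∅ = ∅ :=
  Set.subset_empty_iff.1 boundary_subset

theorem boundary_insert_subset : boundary G (insert y X) ⊆ insert y (boundary G X) := by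
  rintro v ⟨rfl | hv, w, hw, hvw⟩
  · exact Or.inl rfl
  · exact Or.inr ⟨hv, w, fun h => hw (Or.inr h), hvw⟩

theorem ncard_boundary_inter_add_ncard_boundary_union_le [Finite V] (A B : Set V) :
    (boundary G (A ∩ B)).ncard + (boundary G (A ∪ B)).ncard ≤
      (boundary G A).ncard + (boundary G B).ncard := by
  rw [← Set.ncard_union_add_ncard_inter, ← Set.ncard_union_add_ncard_inter (boundary G A)]
  refine Nat.add_le_add (Set.ncard_le_ncard ?_) (Set.ncard_le_ncard ?_)
  · rintro x (⟨hx, w, hw, hxw⟩ | ⟨hx, w, hw, hxw⟩)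
    · by_cases hwA : w ∈ A
      · exact Or.inr ⟨hx.2, w, fun hwB => hw ⟨hwA, hwB⟩, hxw⟩
      · exact Or.inl ⟨hx.1, w, hwA, hxw⟩
    · have hwA : w ∉ A := fun h => hw (Or.inl h)
      have hwB : w ∉ B := fun h => hw (Or.inr h)
      exact hx.imp (fun hx => ⟨hx, w, hwA, hxw⟩) fun hx => ⟨hx, w, hwB, hxw⟩
  · rintro x ⟨⟨hx, -⟩, -, w, hw, hxw⟩
    exact ⟨⟨hx.1, w, fun h => hw (Or.inl h), hxw⟩, hx.2, w, fun h => hw (Or.inr h), hxw⟩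

theorem Sweepable.ncard_boundary_le (h : Sweepable G k A) : (boundary G A).ncard ≤ k := by
  cases h with
  | empty => simp [boundary_empty]
  | step hX hy hcard => exact hcard

theorem Sweepable.inter_of_forall_ncard_le [Finite V] (h : Sweepable G k A) (hAY : A ⊆ Y)
    (hmin : ∀ Z', Z ⊆ Z' → Z' ⊆ Y → (boundary G Z).ncard ≤ (boundary G Z').ncard) (hZY : Z ⊆ Y) :
    Sweepable G k (Z ∩ A) := by
  induction h with
  | empty => simpa using Sweepable.empty
  | @step X y _ hy hcard ih =>
    have ih := ih ((Set.subset_insert y X).trans hAY)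
    by_cases hyZ : y ∈ Z
    · have hle := hmin (Z ∪ insert y X) Set.subset_union_left (Set.union_subset hZY hAY)
      have hsub := ncard_boundary_inter_add_ncard_boundary_union_le (G := G) Z (insert y X)
      rw [Set.inter_insert_of_mem hyZ] at hsub ⊢
      exact ih.step (fun h => hy h.2) (by lia)
    · rwa [Set.inter_insert_of_notMem hyZ]

theorem Sweepable.exists_ncard_boundary_le [Finite V] (hY : Sweepable G k Y) (hXZ : X ⊆ Z)
    (hZY : Z ⊆ Y) :
    ∃ Z', X ⊆ Z' ∧ Sweepable G k Z' ∧ (boundary G Z').ncard ≤ (boundary G Z).ncard := by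
  obtain ⟨Z', ⟨hXZ', hZ'Y⟩, hmin⟩ := Set.exists_min_image {W | X ⊆ W ∧ W ⊆ Y}
    (fun W => (boundary G W).ncard) (Set.toFinite _) ⟨Z, hXZ, hZY⟩
  have hZ' := hY.inter_of_forall_ncard_le subset_rfl
    (fun W hW hWY => hmin W ⟨hXZ'.trans hW, hWY⟩) hZ'Y
  exact ⟨Z', hXZ', by rwa [Set.inter_eq_left.2 hZ'Y] at hZ', hmin Z ⟨hXZ, hZY⟩⟩

/-- The successive sets `X 0 = ∅, X 1, …, X n` of a sweep, and the vertices `y i` added. -/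
structure IsSweep (G : SimpleGraph V) (k n : ℕ) (X : ℕ → Set V) (y : Fin n → V) : Prop where
  zero : X 0 = ∅
  succ : ∀ i : Fin n, X (i + 1) = insert (y i) (X i)
  notMem : ∀ i : Fin n, y i ∉ X i
  ncard_boundary_le : ∀ i : Fin n, (boundary G (X i)).ncard ≤ k

theorem Sweepable.exists_isSweep (h : Sweepable G k A) :
    ∃ n X y, IsSweep G k n X y ∧ X n = A := by
  suffices ∃ (n : ℕ) (X : ℕ → Set V), X 0 = ∅ ∧ X n = A ∧
      ∀ i : Fin n, (boundary G (X i)).ncard ≤ k ∧ ∃ y ∉ X i, X (i + 1) = insert y (X i) by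
    obtain ⟨n, X, hzero, hn, hX⟩ := this
    choose hcard y hy hsucc using hX
    exact ⟨n, X, y, ⟨hzero, hsucc, hy, hcard⟩, hn⟩
  induction h with
  | empty => exact ⟨0, fun _ => ∅, rfl, rfl, nofun⟩
  | @step B y hB hy hcard ih =>
    obtain ⟨n, X, hzero, rfl, hX⟩ := ih
    refine ⟨n + 1, Function.update X (n + 1) (insert y (X n)), by simpa using hzero, by simp,
      fun i => ?_⟩
    rw [Function.update_of_ne i.2.ne]
    refine Fin.lastCases ?_ (fun i => ?_) i
    · exact ⟨hB.ncard_boundary_le, y, hy, by simp⟩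
    · rw [Function.update_of_ne (by simpa using i.2.ne)]
      exact hX i

theorem IsSweep.mono {X : ℕ → Set V} {y : Fin n → V} (h : IsSweep G k n X y) {i j : ℕ}
    (hij : i ≤ j) (hj : j ≤ n) : X i ⊆ X j := by
  induction j, hij using Nat.le_induction with
  | base => exact subset_rfl
  | succ j _ ih =>
    rw [h.succ ⟨j, hj⟩]
    exact (ih (by lia)).trans (Set.subset_insert _ _)

theorem IsSweep.exists_eq {X : ℕ → Set V} {y : Fin n → V} (h : IsSweep G k n X y) {v : V}
    (hv : v ∈ X n) : ∃ i, y i = v := by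
  suffices ∀ j ≤ n, v ∈ X j → ∃ i, y i = v from this n le_rfl hv
  intro j
  induction j with
  | zero => simp [h.zero]
  | succ j ih =>
    intro hj hvj
    rw [h.succ ⟨j, hj⟩] at hvj
    exact hvj.elim (fun hv => ⟨_, hv.symm⟩) (ih (by lia))

open Classical in
theorem IsSweep.isPathDecomp [Fintype V] {X : ℕ → Set V} {y : Fin n → V} (h : IsSweep G k n X y)
    (hn : X n = Set.univ) :
    IsPathDecomp G fun i => insert (y i) (boundary G (X i)).toFinset := by
  have mem_succ (i : Fin n) : y i ∈ X (i + 1) := h.succ i ▸ Set.mem_insert _ _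
  refine ⟨fun v => ?_, fun u v huv => ?_, fun i j l hij hjl v hvi hvl => ?_⟩
  · obtain ⟨i, rfl⟩ := h.exists_eq (hn ▸ Set.mem_univ v)
    exact ⟨i, Finset.mem_insert_self _ _⟩
  · obtain ⟨i, rfl⟩ := h.exists_eq (hn ▸ Set.mem_univ u)
    obtain ⟨j, rfl⟩ := h.exists_eq (hn ▸ Set.mem_univ v)
    have mem_boundary {i j : Fin n} (hij : i < j) (hadj : G.Adj (y i) (y j)) :
        y i ∈ boundary G (X j) :=
      ⟨h.mono hij j.2.le (mem_succ i), y j, h.notMem j, hadj⟩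
    rcases lt_trichotomy i j with hij | rfl | hij
    · exact ⟨j, by simp [mem_boundary hij huv], by simp⟩
    · exact absurd rfl huv.ne
    · exact ⟨i, by simp, by simp [mem_boundary hij huv.symm]⟩
  · simp only [Finset.mem_insert, Set.mem_toFinset] at hvi hvl ⊢
    rcases hij.eq_or_lt with rfl | hij
    · exact hvi
    have hvj : v ∈ X j := h.mono hij j.2.le
      (hvi.elim (fun hv => hv ▸ mem_succ i) fun hv => h.succ i ▸ Or.inr hv.1)
    have hXjl : X j ⊆ X l := h.mono hjl l.2.le
    rcases hvl with rfl | ⟨-, w, hw, hvw⟩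
    · exact absurd (hXjl hvj) (h.notMem l)
    · exact Or.inr ⟨hvj, w, fun hwj => hw (hXjl hwj), hvw⟩

theorem Sweepable.pathwidth_le [Fintype V] (h : Sweepable G k Set.univ) : pathwidth G ≤ k := by
  classical
  obtain ⟨n, X, y, hX, hn⟩ := h.exists_isSweep
  refine Nat.sInf_le ⟨n, _, hX.isPathDecomp hn, fun i => (Finset.card_insert_le _ _).trans ?_⟩
  simpa only [← Set.ncard_eq_toFinset_card', add_le_add_iff_right] using hX.ncard_boundary_le i

theorem boundary_union_inter_subset (hXY : X ⊆ Y) (hK : boundary G X ⊆ K) :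
    boundary G (X ∪ K ∩ Y) ⊆ K ∩ boundary G Y ∪
      boundary (G.between (Y \ X ∪ boundary G X) (Y \ X ∪ boundary G X)) K := by
  rintro v ⟨hv, w, hw, hvw⟩
  have hwX : w ∉ X := fun h => hw (Or.inl h)
  have hvKM : v ∈ K ∧ v ∈ Y \ X ∪ boundary G X := by
    by_cases hvX : v ∈ X
    · have hvb : v ∈ boundary G X := ⟨hvX, w, hwX, hvw⟩
      exact ⟨hK hvb, Or.inr hvb⟩
    · exact ⟨(hv.resolve_left hvX).1, Or.inl ⟨(hv.resolve_left hvX).2, hvX⟩⟩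
  have hvY : v ∈ Y := hv.elim (fun h => hXY h) And.right
  by_cases hwY : w ∈ Y
  · exact Or.inr ⟨hvKM.1, w, fun hwK => hw (Or.inr ⟨hwK, hwY⟩),
      between_adj.2 ⟨hvw, Or.inl ⟨hvKM.2, Or.inl ⟨hwY, hwX⟩⟩⟩⟩
  · exact Or.inl ⟨hvKM.1, hvY, w, hwY, hvw⟩

theorem Sweepable.linked_boundary [Finite V] (hY : Sweepable G k Y) (hXY : X ⊆ Y)
    (h : ∀ Z, X ⊆ Z → Sweepable G k Z → n ≤ (boundary G Z).ncard) :
    Linked (G.between (Y \ X ∪ boundary G X) (Y \ X ∪ boundary G X))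
      (boundary G X) (boundary G Y) n := by
  refine linked_of_forall_superset _ _ _ _ fun K hK => ?_
  obtain ⟨Z, hXZ, hZ, hle⟩ := hY.exists_ncard_boundary_le (Set.subset_union_left (t := K ∩ Y))
    (Set.union_subset hXY Set.inter_subset_right)
  exact (h Z hXZ hZ).trans (hle.trans (Set.ncard_le_ncard (boundary_union_inter_subset hXY hK)))

theorem Sweepable.exists_isSetLinkage [Finite V] (hY : Sweepable G k Y) (hXY : X ⊆ Y)
    (h : ∀ Z, X ⊆ Z → Sweepable G k Z → (boundary G X).ncard ≤ (boundary G Z).ncard) :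
    ∃ g, IsSetLinkage G (boundary G X) (boundary G Y) (boundary G X) g ∧
      ∀ a ∈ boundary G X, a ∈ g a ∧ g a ⊆ Y ∧ g a ∩ X ⊆ {a} := by
  obtain ⟨-, g, hg, hmem⟩ := (hY.linked_boundary hXY h).exists_indexed_by_left le_rfl
  refine ⟨g, hg.mono between_le subset_rfl subset_rfl, fun a ha => ?_⟩
  have hsub := (hg.connectedSet a ha).subset_of_between ⟨a, hmem a ha, Or.inr ha⟩
  refine ⟨hmem a ha, hsub.trans (Set.union_subset Set.sdiff_subset (boundary_subset.trans hXY)), ?_⟩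
  rintro z ⟨hz, hzX⟩
  have hzb : z ∈ boundary G X := (hsub hz).resolve_left fun h => h.2 hzX
  exact hg.pairwiseDisjoint.elim_set hzb ha z (hmem z hzb) hz

/-- `X` can be swept, but every larger set that can be swept has a larger boundary. -/
structure IsTight (G : SimpleGraph V) (k : ℕ) (X : Set V) : Prop where
  sweepable : Sweepable G k X
  ncard_lt : ∀ Y, X ⊂ Y → Sweepable G k Y → (boundary G X).ncard < (boundary G Y).ncard

theorem Sweepable.exists_isTight [Finite V] (h : Sweepable G k X) :
    ∃ Y, X ⊆ Y ∧ IsTight G k Y ∧ (boundary G Y).ncard ≤ (boundary G X).ncard := by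
  obtain ⟨Y, hXY, hY⟩ := (Set.toFinite {Z | Sweepable G k Z ∧
    (boundary G Z).ncard ≤ (boundary G X).ncard}).exists_le_maximal ⟨h, le_rfl⟩
  refine ⟨Y, hXY, ⟨hY.prop.1, fun Z hYZ hZ => hY.prop.2.trans_lt ?_⟩, hY.prop.2⟩
  by_contra! hle
  exact hY.not_gt ⟨hZ, hle⟩ hYZ

theorem IsTight.ncard_boundary_insert [Finite V] (h : IsTight G k X) (hy : y ∉ X)
    (hk : (boundary G X).ncard < k) : Sweepable G k (insert y X) ∧
      boundary G (insert y X) = insert y (boundary G X) ∧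
      (boundary G (insert y X)).ncard = (boundary G X).ncard + 1 := by
  have hle := (Set.ncard_le_ncard (boundary_insert_subset (G := G))).trans
    (Set.ncard_insert_le y (boundary G X))
  have hsweep := h.sweepable.step hy (hle.trans hk)
  have hlt := h.ncard_lt _ (Set.ssubset_insert hy) hsweep
  refine ⟨hsweep, Set.eq_of_subset_of_ncard_le boundary_insert_subset ?_, by lia⟩
  exact (Set.ncard_insert_le y _).trans hlt

end Sweeps

section TreeModels

variable {V : Type*} {G : SimpleGraph V} {X Y : Set V} {parent : ℕ → ℕ} {f : ℕ → Set V}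
  {g : V → Set V} {k n : ℕ} {y : V}

/-- `f 0, …, f (n - 1)` are the branch sets of a model of the tree on the vertices `0, …, n - 1`
with root `0` in which `parent j` is the parent of `j`. -/
structure IsTreeModel (G : SimpleGraph V) (parent : ℕ → ℕ) (n : ℕ) (f : ℕ → Set V) : Prop where
  connectedSet : ∀ j < n, ConnectedSet G (f j)
  pairwiseDisjoint : (Set.Iio n).PairwiseDisjoint f
  touches : ∀ j < n, 0 < j → Touches G (f j) (f (parent j))

/-- A tree model inside `X` all of whose branch sets can still be extended outside of `X`. -/
structure IsOpenTreeModel (G : SimpleGraph V) (parent : ℕ → ℕ) (n : ℕ) (X : Set V)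
    (f : ℕ → Set V) : Prop extends IsTreeModel G parent n f where
  subset : ∀ j < n, f j ⊆ X
  meets_boundary : ∀ j < n, (f j ∩ boundary G X).Nonempty

theorem IsOpenTreeModel.add_leaf (h : IsOpenTreeModel G parent n X f)
    (hparent : ∀ j, 0 < j → parent j < j) (hy : y ∉ X)
    (hadj : 0 < n → ∃ x ∈ f (parent n), G.Adj y x)
    (hboundary : boundary G (insert y X) = insert y (boundary G X)) :
    IsOpenTreeModel G parent (n + 1) (insert y X) (Function.update f n {y}) := by
  have update_of_lt {j : ℕ} (hj : j < n) : Function.update f n {y} j = f j :=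
    Function.update_of_ne hj.ne _ _
  refine ⟨⟨fun j hj => ?_, fun i hi j hj hij => ?_, fun j hj hj0 => ?_⟩, fun j hj => ?_,
    fun j hj => ?_⟩
  · rcases Nat.lt_succ_iff_lt_or_eq.1 hj with hj | rfl
    · exact update_of_lt hj ▸ h.connectedSet j hj
    · simpa using connectedSet_singleton y
  · rcases Nat.lt_succ_iff_lt_or_eq.1 hi with hi | rfl <;>
      rcases Nat.lt_succ_iff_lt_or_eq.1 hj with hj | rfl
    · simpa only [Function.onFun, update_of_lt hi, update_of_lt hj] using
        h.pairwiseDisjoint hi hj hij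
    · simpa [Function.onFun, update_of_lt hi] using fun hyi => hy (h.subset i hi hyi)
    · simpa [Function.onFun, update_of_lt hj] using fun hyj => hy (h.subset j hj hyj)
    · exact absurd rfl hij
  · have hp := hparent j hj0
    rcases Nat.lt_succ_iff_lt_or_eq.1 hj with hj | rfl
    · rw [update_of_lt hj, update_of_lt (hp.trans hj)]
      exact h.touches j hj hj0
    · rw [update_of_lt hp, Function.update_self]
      exact touches_singleton_left.2 (hadj hj0)
  · rcases Nat.lt_succ_iff_lt_or_eq.1 hj with hj | rfl
    · exact update_of_lt hj ▸ (h.subset j hj).trans (Set.subset_insert y X)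
    · simp
  · rw [hboundary]
    rcases Nat.lt_succ_iff_lt_or_eq.1 hj with hj | rfl
    · rw [update_of_lt hj]
      exact (h.meets_boundary j hj).mono (Set.inter_subset_inter_right _ (Set.subset_insert _ _))
    · simp

theorem IsOpenTreeModel.extend [Nonempty V] (h : IsOpenTreeModel G parent n X f)
    (hXY : X ⊆ Y) (hg : IsSetLinkage G (boundary G X) (boundary G Y) (boundary G X) g)
    (hmem : ∀ a ∈ boundary G X, a ∈ g a) (hgY : ∀ a ∈ boundary G X, g a ⊆ Y)
    (hgX : ∀ a ∈ boundary G X, g a ∩ X ⊆ {a}) :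
    ∃ f', IsOpenTreeModel G parent n Y f' := by
  choose! c hcf hcb using h.meets_boundary
  have disjoint_of_ne {i j : ℕ} (hi : i < n) (hj : j < n) (hij : i ≠ j) :
      Disjoint (f i) (g (c j)) := by
    refine Set.disjoint_left.2 fun z hzi hzj => ?_
    obtain rfl : z = c j := hgX _ (hcb j hj) ⟨hzj, h.subset i hi hzi⟩
    exact hij (h.pairwiseDisjoint.elim_set hi hj _ hzi (hcf j hj))
  have tip_ne {i j : ℕ} (hi : i < n) (hj : j < n) (hij : i ≠ j) : c i ≠ c j := fun hc =>
    hij (h.pairwiseDisjoint.elim_set hi hj _ (hcf i hi) (hc ▸ hcf j hj))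
  refine ⟨fun j => f j ∪ g (c j), ⟨fun j hj => ?_, fun i hi j hj hij => ?_, fun j hj hj0 => ?_⟩,
    fun j hj => ?_, fun j hj => ?_⟩
  · exact (h.connectedSet j hj).union_of_inter (hg.connectedSet _ (hcb j hj))
      ⟨c j, hcf j hj, hmem _ (hcb j hj)⟩
  · exact Set.disjoint_union_left.2
      ⟨Set.disjoint_union_right.2 ⟨h.pairwiseDisjoint hi hj hij, disjoint_of_ne hi hj hij⟩,
        Set.disjoint_union_right.2 ⟨(disjoint_of_ne hj hi hij.symm).symm,
          hg.pairwiseDisjoint (hcb i hi) (hcb j hj) (tip_ne hi hj hij)⟩⟩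
  · exact (h.touches j hj hj0).mono Set.subset_union_left Set.subset_union_left
  · exact Set.union_subset ((h.subset j hj).trans hXY) (hgY _ (hcb j hj))
  · exact (hg.meets_right _ (hcb j hj)).mono
      (Set.inter_subset_inter_left _ Set.subset_union_right)

/-- The new vertex is chosen next to the branch set of its parent; tightness makes Menger's theorem
continue all branch sets to the boundary of the next tight set. -/
theorem IsTight.exists_succ [Finite V] [Nonempty V] (hX : IsTight G k X)
    (hcard : (boundary G X).ncard = n) (hn : n < k) (huniv : X ≠ Set.univ)
    (hparent : ∀ j, 0 < j → parent j < j) (hf : IsOpenTreeModel G parent n X f) :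
    ∃ Y f', IsTight G k Y ∧ (boundary G Y).ncard = n + 1 ∧
      IsOpenTreeModel G parent (n + 1) Y f' := by
  obtain ⟨y, hyX, hadj⟩ : ∃ y ∉ X, 0 < n → ∃ x ∈ f (parent n), G.Adj y x := by
    rcases Nat.eq_zero_or_pos n with rfl | hn0
    · obtain ⟨y, hy⟩ := (Set.ne_univ_iff_exists_notMem X).1 huniv
      exact ⟨y, hy, fun h => absurd h (lt_irrefl 0)⟩
    · obtain ⟨x, hxf, -, y, hy, hxy⟩ := hf.meets_boundary _ (hparent n hn0)
      exact ⟨y, hy, fun _ => ⟨x, hxf, hxy.symm⟩⟩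
  obtain ⟨hsweep, hboundary, hcard'⟩ := hX.ncard_boundary_insert hyX (hcard.trans_lt hn)
  have le_ncard (Z : Set V) (hZ : insert y X ⊆ Z) (hZs : Sweepable G k Z) :
      (boundary G (insert y X)).ncard ≤ (boundary G Z).ncard :=
    hcard'.trans_le (hX.ncard_lt Z ((Set.ssubset_insert hyX).trans_subset hZ) hZs)
  obtain ⟨Y, hXY, hY, hle⟩ := hsweep.exists_isTight
  obtain ⟨g, hg, hgY⟩ := hY.sweepable.exists_isSetLinkage hXY le_ncard
  obtain ⟨f', hf'⟩ := (hf.add_leaf hparent hyX hadj hboundary).extend hXY hg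
    (fun a ha => (hgY a ha).1) (fun a ha => (hgY a ha).2.1) fun a ha => (hgY a ha).2.2
  have := le_ncard Y hXY hY.sweepable
  exact ⟨Y, f', hY, by lia, hf'⟩

theorem exists_isTreeModel_of_not_sweepable [Finite V] (h : ¬ Sweepable G n Set.univ)
    (hparent : ∀ j, 0 < j → parent j < j) : ∃ f, IsTreeModel G parent n f := by
  have : Nonempty V := by
    by_contra hV
    rw [not_nonempty_iff] at hV
    exact h (Set.univ_eq_empty_iff.2 hV ▸ Sweepable.empty)
  suffices ∀ i ≤ n, ∃ X f, IsTight G n X ∧ (boundary G X).ncard = i ∧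
      IsOpenTreeModel G parent i X f by
    obtain ⟨X, f, -, -, hf⟩ := this n le_rfl
    exact ⟨f, hf.toIsTreeModel⟩
  intro i
  induction i with
  | zero =>
    intro _
    obtain ⟨X, -, hX, hle⟩ := (Sweepable.empty (G := G) (k := n)).exists_isTight
    refine ⟨X, fun _ => ∅, hX, ?_, ⟨nofun, fun i _ j _ _ => disjoint_bot_left, nofun⟩, nofun, nofun⟩
    simpa only [boundary_empty, Set.ncard_empty, Nat.le_zero] using hle
  | succ i ih =>
    intro hi
    obtain ⟨X, f, hX, hcard, hf⟩ := ih (by lia)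
    exact hX.exists_succ hcard hi (fun hXu => h (hXu ▸ hX.sweepable)) hparent hf

theorem exists_isTreeModel_of_lt_pathwidth [Fintype V] (h : n < pathwidth G)
    (hparent : ∀ j, 0 < j → parent j < j) : ∃ f, IsTreeModel G parent n f :=
  exists_isTreeModel_of_not_sweepable (fun hs => h.not_ge hs.pathwidth_le) hparent

end TreeModels

/-! ### Binary trees of connected sets -/

section BinaryTrees

variable {V : Type*} {G : SimpleGraph V} {n k : ℕ} {R U B C RB RC : Set V}

/-- `U` is partitioned into a connected set `R` and two parts `B` and `C`, where `R` touches the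
subsets `RB` and `RC` that are to serve as roots of `B` and `C`. -/
structure BinaryNode (G : SimpleGraph V) (R U B C RB RC : Set V) : Prop where
  connectedSet : ConnectedSet G R
  eq_union : U = R ∪ B ∪ C
  disjoint_left : Disjoint R B
  disjoint_right : Disjoint R C
  disjoint : Disjoint B C
  touches_left : Touches G R RB
  touches_right : Touches G R RC

/-- `U` is partitioned into connected sets that contain a model of the complete binary tree of
height `n`, and `R` is the part that represents its root. -/
def BinaryTree (G : SimpleGraph V) : ℕ → Set V → Set V → Prop
  | 0 => fun R U => ConnectedSet G R ∧ R = U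
  | n + 1 => fun R U => ∃ B C RB RC, BinaryNode G R U B C RB RC ∧
      BinaryTree G n RB B ∧ BinaryTree G n RC C

theorem BinaryNode.symm (h : BinaryNode G R U B C RB RC) : BinaryNode G R U C B RC RB where
  connectedSet := h.connectedSet
  eq_union := h.eq_union.trans (Set.union_right_comm R B C)
  disjoint_left := h.disjoint_right
  disjoint_right := h.disjoint_left
  disjoint := h.disjoint.symm
  touches_left := h.touches_right
  touches_right := h.touches_left

theorem BinaryNode.root_subset (h : BinaryNode G R U B C RB RC) : R ⊆ U := by
  grind [h.eq_union]

theorem BinaryNode.subset_left (h : BinaryNode G R U B C RB RC) : B ⊆ U := by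
  grind [h.eq_union]

theorem BinaryNode.sdiff_left (h : BinaryNode G R U B C RB RC) : U \ B = R ∪ C := by
  have := Set.disjoint_left.1 h.disjoint_left
  have := Set.disjoint_left.1 h.disjoint
  grind [h.eq_union]

theorem BinaryTree.connectedSet_root (h : BinaryTree G n R U) : ConnectedSet G R := by
  cases n with
  | zero => exact h.1
  | succ n =>
    obtain ⟨B, C, RB, RC, hnode, -⟩ := h
    exact hnode.connectedSet

theorem BinaryTree.root_subset (h : BinaryTree G n R U) : R ⊆ U := by
  cases n with
  | zero => exact h.2.subset
  | succ n =>
    obtain ⟨B, C, RB, RC, hnode, -⟩ := h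
    exact hnode.root_subset

theorem BinaryNode.connectedSet_union_left (h : BinaryNode G R U B C RB RC)
    (hB : ConnectedSet G B) (hRB : RB ⊆ B) : ConnectedSet G (R ∪ B) :=
  h.connectedSet.union_of_touches hB (h.touches_left.mono_right hRB)

theorem BinaryTree.connectedSet (h : BinaryTree G n R U) : ConnectedSet G U := by
  induction n generalizing R U with
  | zero => exact h.2 ▸ h.1
  | succ n ih =>
    obtain ⟨B, C, RB, RC, hnode, hB, hC⟩ := h
    rw [hnode.eq_union]
    exact (hnode.connectedSet_union_left (ih hB) hB.root_subset).union_of_touches (ih hC)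
      (hnode.touches_right.mono Set.subset_union_left hC.root_subset)

theorem BinaryNode.connectedSet_sdiff_left (h : BinaryNode G R U B C RB RC)
    (hC : BinaryTree G n RC C) : ConnectedSet G (U \ B) := by
  rw [h.sdiff_left]
  exact h.symm.connectedSet_union_left hC.connectedSet hC.root_subset

theorem BinaryNode.insert_root {v : V} (h : BinaryNode G R U B C RB RC) (hv : v ∉ U)
    (hR : ConnectedSet G (insert v R)) : BinaryNode G (insert v R) (insert v U) B C RB RC where
  connectedSet := hR
  eq_union := by rw [h.eq_union, Set.insert_union, Set.insert_union]
  disjoint_left := Set.disjoint_insert_left.2 ⟨fun hB => hv (h.subset_left hB), h.disjoint_left⟩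
  disjoint_right :=
    Set.disjoint_insert_left.2 ⟨fun hC => hv (h.symm.subset_left hC), h.disjoint_right⟩
  disjoint := h.disjoint
  touches_left := h.touches_left.mono_left (Set.subset_insert v R)
  touches_right := h.touches_right.mono_left (Set.subset_insert v R)

theorem BinaryNode.insert_left {v : V} {RB' : Set V} (h : BinaryNode G R U B C RB RC) (hv : v ∉ U)
    (hRB : RB ⊆ RB') : BinaryNode G R (insert v U) (insert v B) C RB' RC where
  connectedSet := h.connectedSet
  eq_union := by rw [h.eq_union, Set.union_insert, Set.insert_union]
  disjoint_left := Set.disjoint_insert_right.2 ⟨fun hR => hv (h.root_subset hR), h.disjoint_left⟩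
  disjoint_right := h.disjoint_right
  disjoint := Set.disjoint_insert_left.2 ⟨fun hC => hv (h.symm.subset_left hC), h.disjoint⟩
  touches_left := h.touches_left.mono_right hRB
  touches_right := h.touches_right

theorem BinaryTree.exists_insert {u v : V} (h : BinaryTree G n R U) (hv : v ∉ U) (hu : u ∈ U)
    (huv : G.Adj u v) : ∃ R', R ⊆ R' ∧ BinaryTree G n R' (insert v U) := by
  induction n generalizing R U with
  | zero =>
    obtain ⟨hR, rfl⟩ := h
    exact ⟨insert v R, Set.subset_insert v R, hR.insert_of_adj hu huv, rfl⟩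
  | succ n ih =>
    obtain ⟨B, C, RB, RC, hnode, hB, hC⟩ := h
    rcases hnode.eq_union.subset hu with (huR | huB) | huC
    · exact ⟨insert v R, Set.subset_insert v R, B, C, RB, RC,
        hnode.insert_root hv (hnode.connectedSet.insert_of_adj huR huv), hB, hC⟩
    · obtain ⟨RB', hRB, hB'⟩ := ih hB (fun hvB => hv (hnode.subset_left hvB)) huB
      exact ⟨R, subset_rfl, insert v B, C, RB', RC, hnode.insert_left hv hRB, hB', hC⟩
    · obtain ⟨RC', hRC, hC'⟩ := ih hC (fun hvC => hv (hnode.symm.subset_left hvC)) huC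
      exact ⟨R, subset_rfl, B, insert v C, RB, RC', (hnode.symm.insert_left hv hRC).symm, hB, hC'⟩

theorem BinaryTree.exists_univ [Finite V] (hG : ConnectedSet G Set.univ) (h : BinaryTree G n R U) :
    ∃ R', BinaryTree G n R' Set.univ := by
  obtain ⟨Y, ⟨R', hY⟩, hmax⟩ := Set.Finite.exists_maximalFor id {Y | ∃ R', BinaryTree G n R' Y}
    (Set.toFinite _) ⟨U, R, h⟩
  suffices Y = Set.univ from ⟨R', this ▸ hY⟩
  by_contra hne
  obtain ⟨x, hx⟩ := (Set.ne_univ_iff_exists_notMem Y).1 hne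
  obtain ⟨a, ha, b, -, hb, hab⟩ :=
    hG.exists_adj_of_subset (Set.subset_univ Y) hY.connectedSet.1 (Set.mem_univ x) hx
  obtain ⟨R'', -, hR''⟩ := hY.exists_insert hb ha hab
  exact hb (hmax ⟨R'', hR''⟩ (Set.subset_insert b Y) (Set.mem_insert b Y))

/-- The descendants of `j`, to depth `n`, in the binary heap where `i` has parent `i / 2`. -/
def heapSubtree (n j : ℕ) : Set ℕ :=
  {i | ∃ m ≤ n, i / 2 ^ m = j}

theorem heapSubtree_zero (j : ℕ) : heapSubtree 0 j = {j} := by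
  ext i
  simp [heapSubtree]

theorem heapSubtree_succ (n j : ℕ) :
    heapSubtree (n + 1) j = {j} ∪ heapSubtree n (2 * j) ∪ heapSubtree n (2 * j + 1) := by
  have div_pow_succ (i m : ℕ) :
      i / 2 ^ (m + 1) = j ↔ i / 2 ^ m = 2 * j ∨ i / 2 ^ m = 2 * j + 1 := by
    rw [pow_succ, ← Nat.div_div_eq_div_mul]
    lia
  ext i
  simp only [heapSubtree, Set.mem_union, Set.mem_ofPred_eq, Set.mem_singleton_iff]
  constructor
  · rintro ⟨_ | m, hm, hi⟩
    · exact Or.inl (Or.inl (by simpa using hi))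
    · rcases (div_pow_succ i m).1 hi with hi | hi
      · exact Or.inl (Or.inr ⟨m, by lia, hi⟩)
      · exact Or.inr ⟨m, by lia, hi⟩
  · rintro ((rfl | ⟨m, hm, hi⟩) | ⟨m, hm, hi⟩)
    · exact ⟨0, by lia, by simp⟩
    · exact ⟨m + 1, by lia, (div_pow_succ i m).2 (Or.inl hi)⟩
    · exact ⟨m + 1, by lia, (div_pow_succ i m).2 (Or.inr hi)⟩

theorem le_of_mem_heapSubtree {i j : ℕ} (hi : i ∈ heapSubtree n j) : j ≤ i := by
  obtain ⟨m, -, rfl⟩ := hi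
  exact Nat.div_le_self i (2 ^ m)

theorem lt_of_mem_heapSubtree {i j : ℕ} (hi : i ∈ heapSubtree n j) : i < (j + 1) * 2 ^ n := by
  obtain ⟨m, hm, rfl⟩ := hi
  calc i < (i / 2 ^ m + 1) * 2 ^ m := Nat.lt_mul_of_div_lt (Nat.lt_succ_self _) (by positivity)
    _ ≤ (i / 2 ^ m + 1) * 2 ^ n := by gcongr; norm_num

theorem disjoint_heapSubtree {j : ℕ} (hj : 1 ≤ j) :
    Disjoint (heapSubtree n (2 * j)) (heapSubtree n (2 * j + 1)) := by
  have div_pow_le {i m m' a : ℕ} (hm : m < m') (hi : i / 2 ^ m = a) : i / 2 ^ m' ≤ a / 2 := by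
    rw [← hi, Nat.div_div_eq_div_mul, ← pow_succ]
    exact Nat.div_le_div_left (Nat.pow_le_pow_right two_pos hm) (by positivity)
  rw [Set.disjoint_left]
  rintro i ⟨m, -, hi⟩ ⟨m', -, hi'⟩
  rcases lt_trichotomy m m' with hm | rfl | hm
  · have := div_pow_le hm hi
    lia
  · lia
  · have := div_pow_le hm hi'
    lia

theorem IsTreeModel.binaryTree {f : ℕ → Set V} (hf : IsTreeModel G (· / 2) k f) {j : ℕ}
    (hj : 1 ≤ j) (hk : (j + 1) * 2 ^ n ≤ k) :
    BinaryTree G n (f j) (⋃ i ∈ heapSubtree n j, f i) := by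
  induction n generalizing j with
  | zero =>
    rw [heapSubtree_zero, Set.biUnion_singleton]
    exact ⟨hf.connectedSet j (by lia), rfl⟩
  | succ n ih =>
    have hleft : (2 * j + 1) * 2 ^ n ≤ k := by rw [pow_succ] at hk; nlinarith [Nat.two_pow_pos n]
    have hright : (2 * j + 1 + 1) * 2 ^ n ≤ k := by rw [pow_succ] at hk; nlinarith
    have hlt : 2 * j + 1 < k := by nlinarith [Nat.two_pow_pos n]
    have disjoint_biUnion {I J : Set ℕ} (hI : I ⊆ Set.Iio k) (hJ : J ⊆ Set.Iio k)
        (hIJ : Disjoint I J) : Disjoint (⋃ i ∈ I, f i) (⋃ i ∈ J, f i) :=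
      Set.disjoint_iUnion₂_left.2 fun a ha => Set.disjoint_iUnion₂_right.2 fun b hb =>
        hf.pairwiseDisjoint (hI ha) (hJ hb) (hIJ.ne_of_mem ha hb)
    have left_subset : heapSubtree n (2 * j) ⊆ Set.Iio k :=
      fun i hi => (lt_of_mem_heapSubtree hi).trans_le hleft
    have right_subset : heapSubtree n (2 * j + 1) ⊆ Set.Iio k :=
      fun i hi => (lt_of_mem_heapSubtree hi).trans_le hright
    have disjoint_root {l : ℕ} (hl : j < l) (hsub : heapSubtree n l ⊆ Set.Iio k) :
        Disjoint (f j) (⋃ i ∈ heapSubtree n l, f i) := by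
      simpa only [Set.biUnion_singleton] using disjoint_biUnion (I := {j})
        (Set.singleton_subset_iff.2 (by simp; lia)) hsub
        (Set.disjoint_singleton_left.2 fun h => hl.not_ge (le_of_mem_heapSubtree h))
    have touches_child {l : ℕ} (hl : l < k) (hlj : l / 2 = j) : Touches G (f j) (f l) :=
      hlj ▸ (hf.touches l hl (by lia)).symm
    refine ⟨_, _, _, _, ⟨hf.connectedSet j (by lia), ?_, disjoint_root (by lia) left_subset,
      disjoint_root (by lia) right_subset,
      disjoint_biUnion left_subset right_subset (disjoint_heapSubtree hj),
      touches_child (by lia) (by lia), touches_child hlt (by lia)⟩,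
      ih (by lia) hleft, ih (by lia) hright⟩
    rw [heapSubtree_succ, Set.biUnion_union, Set.biUnion_union, Set.biUnion_singleton]

theorem exists_binaryTree_of_lt_pathwidth [Fintype V] (hG : ConnectedSet G Set.univ)
    (h : 2 ^ (n + 1) < pathwidth G) : ∃ R, BinaryTree G n R Set.univ := by
  obtain ⟨f, hf⟩ := exists_isTreeModel_of_lt_pathwidth h fun j hj => Nat.div_lt_self hj one_lt_two
  exact (hf.binaryTree le_rfl (by rw [pow_succ]; lia)).exists_univ hG

end BinaryTrees

/-! ### Apex trees and nested trees in binary trees -/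

section NestedRegions

variable {V : Type*} {G : SimpleGraph V} {n h k : ℕ} {R U B C RB RC A O U' B' C' : Set V}

theorem ConnectedSet.sdiff_of_not_touches (hA : ConnectedSet G A) (hB : B ⊆ A) (hC : C ⊆ B)
    (hAB : ConnectedSet G (A \ B)) (hBC : ConnectedSet G (B \ C)) (h : ¬ Touches G C (A \ B)) :
    ConnectedSet G (A \ C) := by
  obtain ⟨x, hx, y, hy, hxy⟩ := hA.2 B hB (hBC.1.mono Set.sdiff_subset) hAB.1
  have hxC : x ∉ C := fun hxC => h ⟨x, hxC, y, hy, hxy⟩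
  rw [← Set.sdiff_union_sdiff_cancel hB hC]
  exact hAB.union_of_touches hBC ⟨y, hy, x, ⟨hx, hxC⟩, hxy.symm⟩

/-- Inside the region `U` with root `R` there is a binary tree of height `h` on a set `U'` that
does not touch `O` and whose removal leaves the region connected, with its root. -/
structure IsPrivateSubtree (G : SimpleGraph V) (h : ℕ) (O R U U' : Set V) : Prop where
  exists_binaryTree : ∃ R', BinaryTree G h R' U'
  subset : U' ⊆ U
  root_subset : R ⊆ U \ U'
  not_touches : ¬ Touches G U' O
  connectedSet_sdiff : ConnectedSet G (U \ U')

theorem IsPrivateSubtree.of_left (h' : IsPrivateSubtree G h O RB B U')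
    (hnode : BinaryNode G R U B C RB RC) (hC : BinaryTree G n RC C) :
    IsPrivateSubtree G h O R U U' where
  exists_binaryTree := h'.exists_binaryTree
  subset := h'.subset.trans hnode.subset_left
  root_subset := Set.subset_sdiff.2 ⟨hnode.root_subset, hnode.disjoint_left.mono_right h'.subset⟩
  not_touches := h'.not_touches
  connectedSet_sdiff := by
    rw [← Set.sdiff_union_sdiff_cancel hnode.subset_left h'.subset]
    exact (hnode.connectedSet_sdiff_left hC).union_of_touches h'.connectedSet_sdiff
      (hnode.touches_left.mono (by grind [hnode.sdiff_left]) h'.root_subset)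

theorem BinaryNode.apexSplit (h : BinaryNode G R U B C RB RC) (hO : ConnectedSet G O)
    (hOU : Disjoint O U) (hB : BinaryTree G n RB B) (hC : BinaryTree G n RC C) :
    ApexSplit G O R (U \ R) O R RB RC (B \ RB) (C \ RC) := by
  have hRB := hB.root_subset
  have hRC := hC.root_subset
  have := h.eq_union
  have := Set.disjoint_left.1 h.disjoint_left
  have := Set.disjoint_left.1 h.disjoint_right
  have := Set.disjoint_left.1 h.disjoint
  have hsub : RB ∪ RC ∪ (B \ RB) ∪ (C \ RC) ⊆ U \ R := by grind
  exact
    { grows_left := hO.grows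
      grows_right := h.connectedSet.grows
      subset := hsub
      disjoint_sides := hOU.mono_right h.root_subset
      disjoint_left := hOU.mono_right (hsub.trans Set.sdiff_subset)
      disjoint_right := Set.disjoint_sdiff_right.mono_right hsub
      disjoint_children := by rw [Set.disjoint_left]; grind
      disjoint_regions := h.disjoint.mono Set.sdiff_subset Set.sdiff_subset
      eq_or_disjoint := Or.inr (h.disjoint.mono hRB hRC)
      connectedSet₁ := hB.connectedSet_root
      connectedSet₂ := hC.connectedSet_root
      touches₁ := h.touches_left
      touches₂ := h.touches_right }

theorem BinaryTree.apexTree_or_exists_isPrivateSubtree (hU : BinaryTree G (h + k + 1) R U)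
    (hO : ConnectedSet G O) (hOU : Disjoint O U) :
    ApexTree G k O R (U \ R) ∨ ∃ U', IsPrivateSubtree G h O R U U' := by
  induction k generalizing R U with
  | zero =>
    obtain ⟨B, C, RB, RC, hnode, hB, hC⟩ := hU
    by_cases htouch : Touches G B O
    · refine Or.inl ⟨O, R ∪ B, hO.grows, ⟨Set.subset_union_left, ?_,
        hnode.connectedSet_union_left hB.connectedSet hB.root_subset⟩,
        hOU.mono_right (Set.union_subset hnode.root_subset hnode.subset_left),
        htouch.symm.mono_right Set.subset_union_right⟩
      exact Set.union_subset_union_right R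
        (Set.subset_sdiff.2 ⟨hnode.subset_left, hnode.disjoint_left.symm⟩)
    · exact Or.inr ⟨B, ⟨RB, hB⟩, hnode.subset_left,
        Set.subset_sdiff.2 ⟨hnode.root_subset, hnode.disjoint_left⟩, htouch,
        hnode.connectedSet_sdiff_left hC⟩
  | succ k ih =>
    obtain ⟨B, C, RB, RC, hnode, hB, hC⟩ := hU
    rcases ih hB (hOU.mono_right hnode.subset_left) with apexB | ⟨U', hU'⟩
    · rcases ih hC (hOU.mono_right hnode.symm.subset_left) with apexC | ⟨U', hU'⟩
      · exact Or.inl ⟨O, R, RB, RC, B \ RB, C \ RC, hnode.apexSplit hO hOU hB hC, apexB, apexC⟩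
      · exact Or.inr ⟨U', hU'.of_left hnode.symm hB⟩
    · exact Or.inr ⟨U', hU'.of_left hnode hC⟩

theorem BinaryTree.hasApexTree_or_exists_isPrivateSubtree (hU : BinaryTree G (h + k + 1) R U)
    (hO : ConnectedSet G O) (hOU : Disjoint O U) :
    HasApexTree G k ∨ ∃ U', IsPrivateSubtree G h O R U U' := by
  refine (hU.apexTree_or_exists_isPrivateSubtree hO hOU).imp_left fun apex =>
    ⟨O, R, U \ R, hO, hU.connectedSet_root, ?_, Set.disjoint_sdiff_right, apex⟩
  rwa [Set.union_sdiff_cancel hU.root_subset]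

theorem IsPrivateSubtree.connectedSet_compl (h' : IsPrivateSubtree G h Uᶜ R U U')
    (hG : ConnectedSet G Set.univ) (hU : ConnectedSet G Uᶜ) : ConnectedSet G U'ᶜ := by
  rw [Set.compl_eq_univ_sdiff] at hU ⊢
  exact hG.sdiff_of_not_touches (Set.subset_univ U) h'.subset hU h'.connectedSet_sdiff
    (Set.compl_eq_univ_sdiff U ▸ h'.not_touches)

/-- The subtree is found in two rounds: a subtree that does not touch the outside of `U` still has
connected complement, and a subtree of this one can be chosen to avoid everything outside it. -/
theorem BinaryNode.hasApexTree_or_exists_isPrivateSubtree (hnode : BinaryNode G R U B C RB RC)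
    (hG : ConnectedSet G Set.univ) (hU : ConnectedSet G Uᶜ)
    (hB : BinaryTree G (h + k + 1 + k + 1) RB B) (hC : BinaryTree G n RC C) :
    HasApexTree G k ∨ ∃ B', IsPrivateSubtree G h Bᶜ RB B B' ∧ ConnectedSet G B'ᶜ := by
  rcases hB.hasApexTree_or_exists_isPrivateSubtree hU
    (disjoint_compl_left.mono_right hnode.subset_left) with apex | ⟨B₁, hB₁⟩
  · exact Or.inl apex
  have compl_connected : ConnectedSet G B₁ᶜ := (hB₁.of_left hnode hC).connectedSet_compl hG hU
  obtain ⟨R₁, hR₁⟩ := hB₁.exists_binaryTree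
  refine (hR₁.hasApexTree_or_exists_isPrivateSubtree compl_connected disjoint_compl_left).imp_right
    fun ⟨B₂, hB₂⟩ => ⟨B₂, ?_, hB₂.connectedSet_compl hG compl_connected⟩
  exact
    { exists_binaryTree := hB₂.exists_binaryTree
      subset := hB₂.subset.trans hB₁.subset
      root_subset := hB₁.root_subset.trans (Set.sdiff_subset_sdiff_right hB₂.subset)
      not_touches := fun h => hB₂.not_touches (h.mono_right (Set.compl_subset_compl.2 hB₁.subset))
      connectedSet_sdiff := hB.connectedSet.sdiff_of_not_touches hB₁.subset hB₂.subset
        hB₁.connectedSet_sdiff hB₂.connectedSet_sdiff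
        fun h => hB₂.not_touches (h.mono_right fun _ hx => hx.2) }

theorem IsPrivateSubtree.connectedSet (h' : IsPrivateSubtree G h O R U U') : ConnectedSet G U' := by
  obtain ⟨R', hR'⟩ := h'.exists_binaryTree
  exact hR'.connectedSet

theorem BinaryNode.fork (hnode : BinaryNode G R U B C RB RC) (hU : ConnectedSet G U)
    (hB : IsPrivateSubtree G h Bᶜ RB B B') (hC : IsPrivateSubtree G h Cᶜ RC C C') :
    Fork G U B' C' := by
  have hBB' := hB.subset
  have hCC' := hC.subset
  have := hnode.eq_union
  have := Set.disjoint_left.1 hnode.disjoint_left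
  have := Set.disjoint_left.1 hnode.disjoint_right
  have := Set.disjoint_left.1 hnode.disjoint
  have hrest : U \ (B' ∪ C') = R ∪ (B \ B') ∪ (C \ C') := by grind
  exact
    { connectedSet := hU
      connectedSet_left := hB.connectedSet
      connectedSet_right := hC.connectedSet
      connectedSet_rest := by
        rw [hrest]
        exact (hnode.connectedSet.union_of_touches hB.connectedSet_sdiff
            (hnode.touches_left.mono_right hB.root_subset)).union_of_touches hC.connectedSet_sdiff
          (hnode.touches_right.mono Set.subset_union_left hC.root_subset)
      subset_left := hBB'.trans hnode.subset_left
      subset_right := hCC'.trans hnode.symm.subset_left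
      disjoint := hnode.disjoint.mono hBB' hCC'
      not_touches_left := fun h => hB.not_touches (h.mono_right (by grind))
      not_touches_right := fun h => hC.not_touches (h.mono_right (by grind)) }

theorem BinaryTree.hasApexTree_or_nestedTree (hR : BinaryTree G (n * (2 * k + 3)) R U)
    (hG : ConnectedSet G Set.univ) (hU : ConnectedSet G Uᶜ) :
    HasApexTree G k ∨ NestedTree G n U := by
  induction n generalizing R U with
  | zero => exact Or.inr hR.connectedSet
  | succ n ih =>
    have hU' := hR.connectedSet
    rw [show (n + 1) * (2 * k + 3) = n * (2 * k + 3) + k + 1 + k + 1 + 1 by ring] at hR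
    obtain ⟨B, C, RB, RC, hnode, hB, hC⟩ := hR
    rcases hnode.hasApexTree_or_exists_isPrivateSubtree hG hU hB hC with apex | ⟨B', hB', hB'c⟩
    · exact Or.inl apex
    rcases hnode.symm.hasApexTree_or_exists_isPrivateSubtree hG hU hC hB with apex | ⟨C', hC', hC'c⟩
    · exact Or.inl apex
    obtain ⟨RB', hRB'⟩ := hB'.exists_binaryTree
    obtain ⟨RC', hRC'⟩ := hC'.exists_binaryTree
    rcases ih hRB' hB'c with apex | nestedB
    · exact Or.inl apex
    refine (ih hRC' hC'c).imp_right fun nestedC => ?_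
    exact ⟨B', C', hnode.fork hU' hB' hC', nestedB, nestedC⟩

end NestedRegions

/-! ### Unavoidable patterns in graphs of large path-width -/

section Unavoidable

variable {V : Type*} {G : SimpleGraph V} {U : Set V} {x y : V}

theorem NoCutVertex.exists_frame [Finite V] (hG : NoCutVertex G) (hU : U.Nonempty)
    (hUc : ConnectedSet G Uᶜ) (hx : x ∉ U) (hy : y ∉ U) (hxy : x ≠ y) :
    ∃ S T, Frame G S T U ∧ Touches G S T := by
  have hZRX : U ∪ (Uᶜ \ {x, y}) ∪ {x} = {y}ᶜ := by grind
  have hZRY : U ∪ (Uᶜ \ {x, y}) ∪ {y} = {x}ᶜ := by grind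
  have hall : U ∪ (Uᶜ \ {x, y}) ∪ {x} ∪ {y} = Set.univ := by
    rw [hZRX, Set.compl_union_self]
  have hunseparated : Unseparated G (Uᶜ \ {x, y}) {x} {y} U :=
    hG.unseparated (connectedSet_singleton x) (connectedSet_singleton y) hU
      (Set.disjoint_singleton.2 hxy) (by rw [Set.disjoint_left]; grind)
      (by rwa [show Uᶜ \ {x, y} ∪ {x} ∪ {y} = Uᶜ by grind]) (hZRX ▸ hG.2 y) (hZRY ▸ hG.2 x)
      (by rw [hall, Set.compl_univ]; rintro ⟨a, -, b, hb, -⟩; exact hb)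
  obtain ⟨RX, RY, hR, hdisj, hX, hY, hUX, hUY⟩ := hunseparated.hasTouchingPartition
  have hxyR : ∀ z ∈ RX ∪ RY, z ≠ x ∧ z ≠ y := by grind
  have hXY : Disjoint ({x} ∪ RX) ({y} ∪ RY) := by
    have := Set.disjoint_left.1 hdisj
    rw [Set.disjoint_left]
    grind
  have hcover : ({x} ∪ RX) ∪ ({y} ∪ RY) = Uᶜ := by
    rw [Set.union_union_union_comm, hR]
    grind
  refine ⟨{x} ∪ RX, {y} ∪ RY, ⟨hX, hY, hXY, ?_, ?_, ?_, hUX.symm, hUY.symm⟩, ?_⟩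
  · exact Set.subset_compl_iff_disjoint_right.1 (hcover ▸ Set.subset_union_left)
  · exact Set.subset_compl_iff_disjoint_right.1 (hcover ▸ Set.subset_union_right)
  · rw [hcover, Set.compl_union_self, Set.compl_univ]
    rintro ⟨a, -, b, hb, -⟩
    exact hb
  · refine (hUc.2 ({x} ∪ RX) (hcover ▸ Set.subset_union_left) hX.1 ⟨y, hy, ?_⟩).mono_right ?_
    · exact fun hyX => Set.disjoint_left.1 hXY hyX (Or.inl rfl)
    · rw [← hcover, Set.union_sdiff_left]
      exact Set.sdiff_subset

theorem exists_pathwidth_imp_hasApexTree_or_triangleTree (k m : ℕ) :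
    ∃ p, ∀ (V : Type*) [Fintype V] (G : SimpleGraph V), NoCutVertex G → p ≤ pathwidth G →
      HasApexTree G k ∨ ∃ S T U, IsBase G S T U ∧ TriangleTree G m S T U := by
  obtain ⟨h, hlocal⟩ := exists_nestedTree_imp_apexTree_or_triangleTree k m
  refine ⟨2 ^ (h * (2 * k + 3) + 1 + 1) + 1, fun V _ G hG hp => ?_⟩
  obtain ⟨R, B, C, RB, RC, hnode, hB, hC⟩ := exists_binaryTree_of_lt_pathwidth hG.1 hp
  have hBc : ConnectedSet G Bᶜ := by
    rw [Set.compl_eq_univ_sdiff]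
    exact hnode.connectedSet_sdiff_left hC
  rcases hB.hasApexTree_or_nestedTree hG.1 hBc with apex | nested
  · exact Or.inl apex
  obtain ⟨x, hx⟩ := hnode.connectedSet.1
  obtain ⟨y, hy⟩ := hC.connectedSet.1
  obtain ⟨S, T, hframe, htouch⟩ := hG.exists_frame hB.connectedSet.1 hBc
    (hnode.disjoint_left.notMem_of_mem_left hx) (hnode.disjoint.notMem_of_mem_right hy)
    (hnode.disjoint_right.ne_of_mem hx hy)
  exact (hlocal V G S T B hG nested hframe).imp
    (fun apex => ⟨S, T, B, hframe.connectedSet_left, hframe.connectedSet_right,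
      Set.disjoint_union_right.2 ⟨hframe.disjoint, hframe.disjoint_left⟩, hframe.disjoint_right,
      apex⟩)
    (fun triangle => ⟨S, T, B, ⟨hframe.connectedSet_left, hframe.connectedSet_right,
      hframe.disjoint, hframe.disjoint_left, hframe.disjoint_right, htouch⟩, triangle⟩)

end Unavoidable

end TwoConnectedMinor

/-- Theorem 1.3. Let `P` be a graph with a vertex `v` such that `P \ v`
is a forest, and let `Q` be an outerplanar graph. Then there is a number `p` such that
every 2-connected graph of path-width at least `p` has a `P` or `Q` minor. -/
theorem two_connected_large_pathwidth_has_P_or_Q_minor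
    {VP VQ : Type} [Fintype VP] [Fintype VQ]
    (P : SimpleGraph VP) (v : VP) (hP : (P.induce {u | u ≠ v}).IsAcyclic)
    (Q : SimpleGraph VQ) (hQ : Outerplanar Q) :
    ∃ p : ℕ, ∀ (V : Type) [Fintype V] (G : SimpleGraph V),
      IsKConnected 2 G → p ≤ pathwidth G → IsMinor P G ∨ IsMinor Q G := by
  obtain ⟨k, hk⟩ := TwoConnectedMinor.exists_hasApexTree_imp_isMinor (v := v) hP
  obtain ⟨p, hp⟩ :=
    TwoConnectedMinor.exists_pathwidth_imp_hasApexTree_or_triangleTree k (2 * Nat.card VQ)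
  refine ⟨p, fun V _ G hG hpw => ?_⟩
  obtain apex | ⟨S, T, U, hbase, triangle⟩ :=
    hp V G (TwoConnectedMinor.noCutVertex_of_isKConnected_two hG) hpw
  · exact Or.inl (hk V G apex)
  · exact Or.inr (TwoConnectedMinor.isMinor_of_triangleTree hQ hbase triangle)
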